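/- arXiv:2212.01919 — 3 statements merged into one kernel-verified Lean document; each statement's English description precedes it below -/
import Mathlib

section
/- A germ of an analytic variety X ⊆ (ℂ^n,0) is quasihomogeneous in an appropriate coordinate system (i.e. there exist a holomorphic coordinate system and positive rational weights w ∈ ℚ_+^n such that the ideal I_X admits a system of generators each of which is quasihomogeneous with respect to w) if and only if there exists a logarithmic vector field δ ∈ Θ_X with δ(0) = 0 whose eigenvalues sp(δ) are all positive rational numbers. -/
open Filter Topology Polynomial

set_option maxHeartbeats 1000000
set_option synthInstance.maxHeartbeats 1000000

noncomputable section

/-- The algebra structure on germs of complex valued functions. -/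
instance Filter.Germ.instAlgebraComplex {α : Type*} (l : Filter α) :
    Algebra ℂ (Filter.Germ l ℂ) where
  algebraMap := (Filter.Germ.coeRingHom l).comp (algebraMap ℂ (α → ℂ))
  commutes' := fun c g => mul_comm _ _
  smul_def' := fun c g => Filter.Germ.inductionOn g fun f => rfl

/-- The local algebra `𝒪ₙ` of germs at `0 ∈ ℂⁿ` of holomorphic functions,
realized as the subalgebra of germs at `0` admitting an analytic representative. -/
def On (n : ℕ) : Subalgebra ℂ (Filter.Germ (𝓝 (0 : Fin n → ℂ)) ℂ) where
  carrier := {g | ∃ f : (Fin n → ℂ) → ℂ,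
    AnalyticAt ℂ f 0 ∧ (f : Filter.Germ (𝓝 (0 : Fin n → ℂ)) ℂ) = g}
  mul_mem' := by
    rintro a b ⟨f, hf, rfl⟩ ⟨g, hg, rfl⟩
    exact ⟨f * g, hf.mul hg, rfl⟩
  add_mem' := by
    rintro a b ⟨f, hf, rfl⟩ ⟨g, hg, rfl⟩
    exact ⟨f + g, hf.add hg, rfl⟩
  algebraMap_mem' := fun c => ⟨fun _ => c, analyticAt_const, rfl⟩

variable {n : ℕ}

/-- Existence of an analytic representative for an element of `𝒪ₙ`. -/
lemma On.exists_rep (g : On n) : ∃ f : (Fin n → ℂ) → ℂ,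
    AnalyticAt ℂ f 0 ∧ (f : Filter.Germ (𝓝 (0 : Fin n → ℂ)) ℂ) = (g : Filter.Germ _ ℂ) :=
  g.2

/-- A chosen analytic representative of a germ in `𝒪ₙ`. -/
def On.rep (g : On n) : (Fin n → ℂ) → ℂ := (On.exists_rep g).choose

lemma On.rep_analyticAt (g : On n) : AnalyticAt ℂ (On.rep g) 0 :=
  (On.exists_rep g).choose_spec.1

lemma On.rep_spec (g : On n) :
    (On.rep g : Filter.Germ (𝓝 (0 : Fin n → ℂ)) ℂ) = (g : Filter.Germ _ ℂ) :=
  (On.exists_rep g).choose_spec.2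

/-- Build an element of `𝒪ₙ` from an analytic function. -/
def mkOn {n : ℕ} (f : (Fin n → ℂ) → ℂ) (hf : AnalyticAt ℂ f 0) : On n :=
  ⟨(f : Filter.Germ (𝓝 (0 : Fin n → ℂ)) ℂ), ⟨f, hf, rfl⟩⟩

/-- The `i`-th partial derivative, as an operation on `𝒪ₙ`. -/
def pd (i : Fin n) (g : On n) : On n :=
  mkOn (fun x => fderiv ℂ (On.rep g) x (Pi.single i 1)) (by
    have h := ((ContinuousLinearMap.apply ℂ ℂ (Pi.single i 1)).analyticAt
      (fderiv ℂ (On.rep g) 0)).comp (On.rep_analyticAt g).fderiv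
    exact h)

/-- Restriction of germs at `0` to germs along a finer filter. -/
def restrictGerm {l : Filter (Fin n → ℂ)} (hl : l ≤ 𝓝 (0 : Fin n → ℂ)) :
    Filter.Germ (𝓝 (0 : Fin n → ℂ)) ℂ →+* Filter.Germ l ℂ where
  toFun g := g.compTendsto id (Filter.tendsto_id'.2 hl)
  map_one' := rfl
  map_mul' a b := Filter.Germ.inductionOn₂ a b fun f g => rfl
  map_zero' := rfl
  map_add' a b := Filter.Germ.inductionOn₂ a b fun f g => rfl

/-- Evaluation of germs restricted along `l ≤ 𝓝 0`, as a ring homomorphism on `𝒪ₙ`. -/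
def restrictOn (n : ℕ) {l : Filter (Fin n → ℂ)} (hl : l ≤ 𝓝 (0 : Fin n → ℂ)) :
    On n →+* Filter.Germ l ℂ :=
  (restrictGerm hl).comp (On n).val.toRingHom

/-- The ideal `I_X ⊆ 𝒪ₙ` of germs vanishing on a set `X` near `0`. -/
def IX (n : ℕ) (X : Set (Fin n → ℂ)) : Ideal (On n) :=
  RingHom.ker (restrictOn n (nhdsWithin_le_nhds (s := X)))

/-- The maximal ideal `𝔪 ⊂ 𝒪ₙ` of germs vanishing at the origin. -/
def mId (n : ℕ) : Ideal (On n) :=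
  RingHom.ker (restrictOn n (pure_le_nhds (0 : Fin n → ℂ)))

/-- `X` is the germ at `0` of an analytic variety: `0 ∈ X` and, near `0`, `X` coincides
with the common zero locus of finitely many holomorphic functions. -/
def IsAnalyticGermAt0 (n : ℕ) (X : Set (Fin n → ℂ)) : Prop :=
  (0 : Fin n → ℂ) ∈ X ∧
    ∃ (m : ℕ) (g : Fin m → (Fin n → ℂ) → ℂ),
      (∀ j, AnalyticAt ℂ (g j) 0) ∧
      ∀ᶠ x in 𝓝 (0 : Fin n → ℂ), (x ∈ X ↔ ∀ j, g j x = 0)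

/-- The action `δ(g) = Σ δᵢ ∂g/∂xᵢ` of a vector field `δ ∈ Θ ≅ 𝒪ₙⁿ` on `g ∈ 𝒪ₙ`. -/
def applyVF (δ : Fin n → On n) (g : On n) : On n := ∑ i, δ i * pd i g

lemma applyVF_add (a b : Fin n → On n) (g : On n) :
    applyVF (a + b) g = applyVF a g + applyVF b g := by
  simp [applyVF, add_mul, Finset.sum_add_distrib]

lemma applyVF_smul (c : On n) (a : Fin n → On n) (g : On n) :
    applyVF (c • a) g = c * applyVF a g := by
  simp [applyVF, Finset.mul_sum, smul_eq_mul, mul_assoc]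

/-- For fixed `f`, the map `δ ↦ δ(f)` as an `𝒪ₙ`-linear map `Θ → 𝒪ₙ`. -/
def gradMap (n : ℕ) (f : On n) : (Fin n → On n) →ₗ[On n] On n where
  toFun δ := applyVF δ f
  map_add' a b := applyVF_add a b f
  map_smul' c a := applyVF_smul c a f

/-- The module `Θ_X` of logarithmic vector fields of `X`, i.e. vector fields
preserving the ideal `I_X`. -/
def ThetaX (n : ℕ) (X : Set (Fin n → ℂ)) : Submodule (On n) (Fin n → On n) where
  carrier := {δ | ∀ g ∈ IX n X, applyVF δ g ∈ IX n X}
  add_mem' := by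
    intro a b ha hb g hg
    rw [applyVF_add]
    exact Ideal.add_mem _ (ha g hg) (hb g hg)
  zero_mem' := by
    intro g hg
    have h0 : applyVF (0 : Fin n → On n) g = 0 := by simp [applyVF]
    rw [h0]; exact Ideal.zero_mem _
  smul_mem' := by
    intro c a ha g hg
    rw [applyVF_smul]
    exact Ideal.mul_mem_left _ _ (ha g hg)

/-- The module `Θ_Y` of vector fields tangent to the hypersurface `Y = f⁻¹(0)`,
i.e. `δ(f) ∈ ⟨f⟩`. -/
def ThetaF (n : ℕ) (f : On n) : Submodule (On n) (Fin n → On n) :=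
  Submodule.comap (gradMap n f) (Ideal.span {f})

/-- The module `H_Y` of Hamiltonian vector fields of `f`, i.e. `δ(f) = 0`. -/
def HamF (n : ℕ) (f : On n) : Submodule (On n) (Fin n → On n) :=
  LinearMap.ker (gradMap n f)

/-- The Bruce–Roberts ideal `df(Θ_X) ⊆ 𝒪ₙ`. -/
def BRIdeal (n : ℕ) (X : Set (Fin n → ℂ)) (f : On n) : Ideal (On n) :=
  Submodule.map (gradMap n f) (ThetaX n X)

/-- The Jacobian ideal `J(f) = ⟨∂f/∂x₁, …, ∂f/∂xₙ⟩`. -/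
def Jac (n : ℕ) (f : On n) : Ideal (On n) :=
  Ideal.span (Set.range fun i => pd i f)

/-- The ideal `J(f,h)` generated by the `2×2` minors of the Jacobian matrix of `(f,h)`. -/
def Jmin (n : ℕ) (f h : On n) : Ideal (On n) :=
  Ideal.span (Set.range fun p : Fin n × Fin n => pd p.1 f * pd p.2 h - pd p.2 f * pd p.1 h)

/-- The Milnor number `μ(f)`. -/
def mu (n : ℕ) (f : On n) : ℕ := Module.finrank ℂ (On n ⧸ Jac n f)

/-- The Tjurina number `τ(f)`. -/
def tau (n : ℕ) (f : On n) : ℕ :=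
  Module.finrank ℂ (On n ⧸ (Jac n f + Ideal.span {f}))

/-- The Bruce–Roberts Milnor number `μ_X(f)`. -/
def muX (n : ℕ) (X : Set (Fin n → ℂ)) (f : On n) : ℕ :=
  Module.finrank ℂ (On n ⧸ BRIdeal n X f)

/-- The Bruce–Roberts Tjurina number `τ_X(f)`. -/
def tauX (n : ℕ) (X : Set (Fin n → ℂ)) (f : On n) : ℕ :=
  Module.finrank ℂ (On n ⧸ (BRIdeal n X f + Ideal.span {f}))

/-- The value at the origin of a germ in `𝒪ₙ`. -/
def ev0 (g : On n) : ℂ := On.rep g 0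

/-- The linear part `j¹δ` of a vector field `δ`, as the matrix `(∂δⱼ/∂xᵢ)(0)`. -/
def linPart (δ : Fin n → On n) : Matrix (Fin n) (Fin n) ℂ :=
  Matrix.of fun i j => ev0 (pd i (δ j))

/-- The eigenvalues (with multiplicities) of the linear part of `δ` are given by `w`. -/
def EigsEq (δ : Fin n → On n) (w : Fin n → ℚ) : Prop :=
  (linPart δ).charpoly = ∏ i, (Polynomial.X - Polynomial.C ((w i : ℂ)))

/-- The germ at `0` of the coordinate function `xᵢ`. -/
def coordG (i : Fin n) : On n :=
  mkOn (fun x : Fin n → ℂ => x i)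
    ((ContinuousLinearMap.proj (R := ℂ) (φ := fun _ : Fin n => ℂ) i).analyticAt _)

/-- `g` is quasihomogeneous of degree `d` with respect to the weights `w` (in the given
coordinates): the Euler identity `Σ wᵢ xᵢ ∂g/∂xᵢ = d g` holds. -/
def IsQH (n : ℕ) (w : Fin n → ℚ) (d : ℚ) (g : On n) : Prop :=
  ∑ i, (w i : ℂ) • (coordG i * pd i g) = (d : ℂ) • g

/-- A germ of a biholomorphic change of coordinates at `0 ∈ ℂⁿ`. -/
structure CoordChange (n : ℕ) where
  toFun : (Fin n → ℂ) → (Fin n → ℂ)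
  invFun : (Fin n → ℂ) → (Fin n → ℂ)
  analyticAt : AnalyticAt ℂ toFun 0
  inv_analyticAt : AnalyticAt ℂ invFun 0
  map_zero : toFun 0 = 0
  inv_map_zero : invFun 0 = 0
  left_inv : ∀ᶠ x in 𝓝 (0 : Fin n → ℂ), invFun (toFun x) = x
  right_inv : ∀ᶠ x in 𝓝 (0 : Fin n → ℂ), toFun (invFun x) = x

lemma CoordChange.tendsto (φ : CoordChange n) :
    Filter.Tendsto φ.toFun (𝓝 (0 : Fin n → ℂ)) (𝓝 (0 : Fin n → ℂ)) := by
  have h := φ.analyticAt.continuousAt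
  rwa [ContinuousAt, φ.map_zero] at h

/-- The pullback (composition) of a germ `g ∈ 𝒪ₙ` under a change of coordinates. -/
def pullback (φ : CoordChange n) (g : On n) : On n :=
  ⟨(g : Filter.Germ (𝓝 (0 : Fin n → ℂ)) ℂ).compTendsto φ.toFun φ.tendsto, by
    refine ⟨On.rep g ∘ φ.toFun, ?_, ?_⟩
    · have h := On.rep_analyticAt g
      rw [← φ.map_zero] at h
      exact h.comp φ.analyticAt
    · rw [← On.rep_spec g]
      exact (Filter.Germ.coe_compTendsto _ φ.tendsto).symm⟩

/-- Definition 1.1: the pair `(f, X)` is relatively quasihomogeneous with respect to the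
weights `w`: in suitable coordinates, `f` is quasihomogeneous of degree `1` and `I_X` admits
a system of quasihomogeneous generators of positive degrees, all with respect to `w`. -/
def RelQH (n : ℕ) (X : Set (Fin n → ℂ)) (f : On n) (w : Fin n → ℚ) : Prop :=
  ∃ φ : CoordChange n,
    IsQH n w 1 (pullback φ f) ∧
    ∃ (m : ℕ) (h : Fin m → On n) (d : Fin m → ℚ),
      Ideal.span (Set.range h) = IX n X ∧ (∀ j, 0 < d j) ∧
      ∀ j, IsQH n w (d j) (pullback φ (h j))

/-- The variety `X` is quasihomogeneous with respect to the weights `w`: in suitable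
coordinates, `I_X` admits a system of quasihomogeneous generators of positive degrees. -/
def VarQH (n : ℕ) (X : Set (Fin n → ℂ)) (w : Fin n → ℚ) : Prop :=
  ∃ φ : CoordChange n,
    ∃ (m : ℕ) (h : Fin m → On n) (d : Fin m → ℚ),
      Ideal.span (Set.range h) = IX n X ∧ (∀ j, 0 < d j) ∧
      ∀ j, IsQH n w (d j) (pullback φ (h j))

instance (f : On n) : HasQuotient (↥(ThetaF n f)) (Submodule ↥(On n) ↥(ThetaF n f)) :=
  Submodule.hasQuotient (R := ↥(On n)) (M := ↥(ThetaF n f))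


set_option synthInstance.maxHeartbeats 1000000

namespace QH

/-- The weight of an exponent. -/
def wt (u : Fin n → ℝ) (α : Fin n →₀ ℕ) : ℝ := ∑ i, (α i : ℝ) * u i

lemma wt_zero (u : Fin n → ℝ) : wt u 0 = 0 := by simp [wt]

lemma wt_add (u : Fin n → ℝ) (α β : Fin n →₀ ℕ) : wt u (α + β) = wt u α + wt u β := by
  simp [wt, add_mul, Finset.sum_add_distrib]

lemma wt_single (u : Fin n → ℝ) (i : Fin n) (k : ℕ) :
    wt u (Finsupp.single i k) = k * u i := by
  unfold wt
  rw [Finset.sum_eq_single i]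
  · simp
  · intro j _ hj
    simp [Finsupp.single_apply, Ne.symm hj]
  · simp

lemma wt_nonneg {u : Fin n → ℝ} (hu : ∀ i, 0 < u i) (α : Fin n →₀ ℕ) : 0 ≤ wt u α :=
  Finset.sum_nonneg fun i _ => mul_nonneg (Nat.cast_nonneg _) (hu i).le

lemma wt_mono {u : Fin n → ℝ} (hu : ∀ i, 0 < u i) {α β : Fin n →₀ ℕ} (h : α ≤ β) :
    wt u α ≤ wt u β :=
  Finset.sum_le_sum fun i _ => mul_le_mul_of_nonneg_right (by exact_mod_cast h i) (hu i).le

lemma wt_pos {u : Fin n → ℝ} (hu : ∀ i, 0 < u i) {α : Fin n →₀ ℕ} (h : α ≠ 0) :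
    0 < wt u α := by
  obtain ⟨i, hi⟩ := Finsupp.ne_iff.mp h
  have h1 : (0:ℝ) < α i := by
    have : 0 < α i := Nat.pos_of_ne_zero hi
    exact_mod_cast this
  exact Finset.sum_pos' (fun i _ => mul_nonneg (Nat.cast_nonneg _) (hu i).le)
    ⟨i, Finset.mem_univ _, mul_pos h1 (hu i)⟩

lemma finite_wt_le {u : Fin n → ℝ} (hu : ∀ i, 0 < u i) (c : ℝ) :
    {α : Fin n →₀ ℕ | wt u α ≤ c}.Finite := by
  refine (Set.finite_Iic
    (Finsupp.equivFunOnFinite.symm (fun i => ⌈c / u i⌉₊) : Fin n →₀ ℕ)).subset ?_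
  intro α hα i
  have h1 : (α i : ℝ) * u i ≤ wt u α :=
    Finset.single_le_sum (f := fun i => (α i : ℝ) * u i)
      (fun i _ => mul_nonneg (Nat.cast_nonneg _) (hu i).le) (Finset.mem_univ i)
  have h2 : (α i : ℝ) ≤ c / u i := by
    rw [le_div_iff₀ (hu i)]
    exact h1.trans hα
  have h3 : (α i : ℝ) ≤ (⌈c / u i⌉₊ : ℝ) := h2.trans (Nat.le_ceil _)
  simpa using (by exact_mod_cast h3 : α i ≤ ⌈c / u i⌉₊)

/-- The finite set of exponents of weight at most `c`. -/
def low {u : Fin n → ℝ} (hu : ∀ i, 0 < u i) (c : ℝ) : Finset (Fin n →₀ ℕ) :=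
  (finite_wt_le hu c).toFinset

lemma mem_low {u : Fin n → ℝ} (hu : ∀ i, 0 < u i) (c : ℝ) (α : Fin n →₀ ℕ) :
    α ∈ low hu c ↔ wt u α ≤ c := by simp [low]

/-- Weighted `ℓ¹` bound. -/
def NB (u : Fin n → ℝ) (s : ℝ) (F : MvPowerSeries (Fin n) ℂ) (C : ℝ) : Prop :=
  ∀ S : Finset (Fin n →₀ ℕ),
    ∑ α ∈ S, ‖MvPowerSeries.coeff α F‖ * Real.exp (-(s * wt u α)) ≤ C

/-- All monomials have weight at least `c`. -/
def Fil (u : Fin n → ℝ) (c : ℝ) (F : MvPowerSeries (Fin n) ℂ) : Prop :=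
  ∀ α, MvPowerSeries.coeff α F ≠ 0 → c ≤ wt u α

/-- Convergent power series. -/
def IsConv (F : MvPowerSeries (Fin n) ℂ) : Prop := ∃ s C, NB (fun _ => 1) s F C

lemma NB.nonneg {u : Fin n → ℝ} {s : ℝ} {F : MvPowerSeries (Fin n) ℂ} {C : ℝ}
    (h : NB u s F C) : 0 ≤ C := by simpa using h ∅

lemma NB.mono {u : Fin n → ℝ} {s : ℝ} {F : MvPowerSeries (Fin n) ℂ} {C C' : ℝ}
    (h : NB u s F C) (hC : C ≤ C') : NB u s F C' := fun S => (h S).trans hC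

lemma NB_of_le {u₁ u₂ : Fin n → ℝ} {s₁ s₂ : ℝ} {F : MvPowerSeries (Fin n) ℂ} {C : ℝ}
    (h : NB u₁ s₁ F C) (hle : ∀ i, s₁ * u₁ i ≤ s₂ * u₂ i) : NB u₂ s₂ F C := by
  intro S
  refine (Finset.sum_le_sum fun α _ => ?_).trans (h S)
  refine mul_le_mul_of_nonneg_left (Real.exp_le_exp.2 (neg_le_neg ?_)) (norm_nonneg _)
  unfold wt
  rw [Finset.mul_sum, Finset.mul_sum]
  refine Finset.sum_le_sum fun i _ => ?_
  have := mul_le_mul_of_nonneg_left (hle i) (Nat.cast_nonneg (α := ℝ) (α i))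
  linarith

lemma IsConv.exists_NB {F : MvPowerSeries (Fin n) ℂ} (hF : IsConv F) {u : Fin n → ℝ}
    (hu : ∀ i, 0 < u i) : ∃ s₀ C, ∀ s, s₀ ≤ s → NB u s F C := by
  obtain ⟨s₁, C, h⟩ := hF
  refine ⟨∑ i, |s₁| / u i, C, fun s hs => NB_of_le h fun i => ?_⟩
  have h1 : |s₁| / u i ≤ ∑ i, |s₁| / u i :=
    Finset.single_le_sum (f := fun i => |s₁| / u i)
      (fun i _ => div_nonneg (abs_nonneg _) (hu i).le) (Finset.mem_univ i)
  have h2 : |s₁| ≤ s * u i := by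
    rw [← div_le_iff₀ (hu i)]; exact h1.trans hs
  have := le_abs_self s₁
  linarith

lemma NB.isConv {u : Fin n → ℝ} {s : ℝ} {F : MvPowerSeries (Fin n) ℂ} {C : ℝ}
    (h : NB u s F C) : IsConv F := by
  refine ⟨∑ i, |s * u i|, C, NB_of_le h fun i => ?_⟩
  have h1 : |s * u i| ≤ ∑ i, |s * u i| :=
    Finset.single_le_sum (f := fun i => |s * u i|) (fun i _ => abs_nonneg _) (Finset.mem_univ i)
  have := le_abs_self (s * u i)
  linarith

lemma small_tail {F : MvPowerSeries (Fin n) ℂ} (hF : IsConv F) {u : Fin n → ℝ}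
    (hu : ∀ i, 0 < u i) {c c' η : ℝ} (hc : c < c') (hfil : Fil u c' F) (hη : 0 < η) :
    ∃ s₀, ∀ s, s₀ ≤ s → NB u s F (η * Real.exp (-(s * c))) := by
  obtain ⟨s₁, C, h⟩ := hF.exists_NB hu
  have hC : 0 ≤ C := (h s₁ le_rfl).nonneg
  have hlim : Tendsto (fun s : ℝ => C * Real.exp (s₁ * c') * Real.exp (-(s * (c' - c)))) atTop
      (𝓝 (C * Real.exp (s₁ * c') * 0)) := by
    refine Tendsto.const_mul _ (Real.tendsto_exp_neg_atTop_nhds_zero.comp ?_)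
    exact tendsto_id.atTop_mul_const (sub_pos.2 hc)
  rw [mul_zero] at hlim
  obtain ⟨s₂, hs₂⟩ := eventually_atTop.1 (hlim.eventually (gt_mem_nhds hη))
  refine ⟨max s₁ s₂, fun s hs S => ?_⟩
  have hs1 : s₁ ≤ s := (le_max_left _ _).trans hs
  have hs2 := hs₂ s ((le_max_right _ _).trans hs)
  have key : ∑ α ∈ S, ‖MvPowerSeries.coeff α F‖ * Real.exp (-(s * wt u α)) ≤
      Real.exp (-((s - s₁) * c')) * C := by
    refine le_trans ?_ (mul_le_mul_of_nonneg_left (h s₁ le_rfl S) (Real.exp_pos _).le)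
    rw [Finset.mul_sum]
    refine Finset.sum_le_sum fun α _ => ?_
    by_cases h0 : MvPowerSeries.coeff α F = 0
    · simp [h0]
    have hα := hfil α h0
    rw [mul_left_comm]
    refine mul_le_mul_of_nonneg_left ?_ (norm_nonneg _)
    rw [← Real.exp_add, Real.exp_le_exp]
    nlinarith [mul_le_mul_of_nonneg_left hα (sub_nonneg.2 hs1)]
  refine key.trans ?_
  have e : Real.exp (-((s - s₁) * c')) * C =
      C * Real.exp (s₁ * c') * Real.exp (-(s * (c' - c))) * Real.exp (-(s * c)) := by
    rw [mul_assoc, mul_assoc, ← Real.exp_add, ← Real.exp_add, mul_comm]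
    congr 2; ring
  rw [e]
  exact mul_le_mul_of_nonneg_right hs2.le (Real.exp_pos _).le

/-- Solving a triangular perturbation of the identity with `ℓ¹` bounds. -/
lemma perturb {u : Fin n → ℝ} (hu : ∀ i, 0 < u i) {s : ℝ}
    (K : (Fin n →₀ ℕ) → MvPowerSeries (Fin n) ℂ)
    (hK : ∀ α β, MvPowerSeries.coeff β (K α) ≠ 0 → wt u α < wt u β)
    (hKb : ∀ α, NB u s (K α) (1 / 2 * Real.exp (-(s * wt u α))))
    (F : MvPowerSeries (Fin n) ℂ) {C : ℝ} (hF : NB u s F C) :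
    ∃ g : MvPowerSeries (Fin n) ℂ, NB u s g (2 * C) ∧
      ∀ β, MvPowerSeries.coeff β F = MvPowerSeries.coeff β g +
        ∑ α ∈ low hu (wt u β), MvPowerSeries.coeff α g * MvPowerSeries.coeff β (K α) := by
  classical
  have hwf : WellFounded (fun α β : Fin n →₀ ℕ => wt u α < wt u β) := by
    have : ∀ α β : Fin n →₀ ℕ, wt u α < wt u β →
        (low hu (wt u α)).card < (low hu (wt u β)).card := by
      intro α β h
      refine Finset.card_lt_card ⟨fun γ hγ => ?_, fun hsub => ?_⟩
      · rw [mem_low] at *; linarith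
      · have := hsub ((mem_low hu _ β).2 le_rfl)
        rw [mem_low] at this; linarith
    exact Subrelation.wf (fun {a b} h => this a b h) (measure fun α => (low hu (wt u α)).card).wf
  let G : (β : Fin n →₀ ℕ) → ((α : Fin n →₀ ℕ) → wt u α < wt u β → ℂ) → ℂ :=
    fun β ih => MvPowerSeries.coeff β F - ∑ α ∈ low hu (wt u β),
      (if h : wt u α < wt u β then ih α h else 0) * MvPowerSeries.coeff β (K α)
  let g : MvPowerSeries (Fin n) ℂ := fun β => hwf.fix G β
  have hg : ∀ β, MvPowerSeries.coeff β F = MvPowerSeries.coeff β g +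
        ∑ α ∈ low hu (wt u β), MvPowerSeries.coeff α g * MvPowerSeries.coeff β (K α) := by
    intro β
    have h1 : MvPowerSeries.coeff β g = G β (fun α _ => MvPowerSeries.coeff α g) := by
      change hwf.fix G β = _
      rw [WellFounded.fix_eq]
      rfl
    rw [h1]
    simp only [G]
    rw [sub_add, eq_comm, sub_eq_self, sub_eq_zero]
    refine Finset.sum_congr rfl fun α _ => ?_
    by_cases h : MvPowerSeries.coeff β (K α) = 0
    · simp [h]
    · rw [dif_pos (hK _ _ h)]
  refine ⟨g, ?_, hg⟩
  have hlow : ∀ T : ℝ, ∑ β ∈ low hu T, ‖MvPowerSeries.coeff β g‖ * Real.exp (-(s * wt u β)) ≤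
      2 * C := by
    intro T
    have h1 : ∀ β ∈ low hu T, ‖MvPowerSeries.coeff β g‖ * Real.exp (-(s * wt u β)) ≤
        ‖MvPowerSeries.coeff β F‖ * Real.exp (-(s * wt u β)) +
        ∑ α ∈ low hu T, ‖MvPowerSeries.coeff α g‖ *
          (‖MvPowerSeries.coeff β (K α)‖ * Real.exp (-(s * wt u β))) := by
      intro β hβ
      have h2 : MvPowerSeries.coeff β g = MvPowerSeries.coeff β F -
        ∑ α ∈ low hu (wt u β), MvPowerSeries.coeff α g * MvPowerSeries.coeff β (K α) := by
        rw [hg β]; ring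
      have h3 : ‖MvPowerSeries.coeff β g‖ ≤ ‖MvPowerSeries.coeff β F‖ +
          ∑ α ∈ low hu T, ‖MvPowerSeries.coeff α g‖ * ‖MvPowerSeries.coeff β (K α)‖ := by
        rw [h2]
        refine (norm_sub_le _ _).trans (add_le_add le_rfl ?_)
        refine (norm_sum_le _ _).trans ?_
        simp only [norm_mul]
        refine Finset.sum_le_sum_of_subset_of_nonneg (fun α hα => ?_) fun _ _ _ => by positivity
        rw [mem_low] at *; linarith
      calc _ ≤ _ := mul_le_mul_of_nonneg_right h3 (Real.exp_pos _).le
        _ = _ := by rw [add_mul, Finset.sum_mul]; simp only [mul_assoc]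
    have h2 := Finset.sum_le_sum h1
    rw [Finset.sum_add_distrib, Finset.sum_comm] at h2
    have h3 : ∑ α ∈ low hu T, ∑ β ∈ low hu T, ‖MvPowerSeries.coeff α g‖ *
          (‖MvPowerSeries.coeff β (K α)‖ * Real.exp (-(s * wt u β))) ≤
        ∑ α ∈ low hu T, ‖MvPowerSeries.coeff α g‖ * (1 / 2 * Real.exp (-(s * wt u α))) := by
      refine Finset.sum_le_sum fun α _ => ?_
      rw [← Finset.mul_sum]
      exact mul_le_mul_of_nonneg_left (hKb α _) (norm_nonneg _)
    have h4 : ∑ α ∈ low hu T, ‖MvPowerSeries.coeff α g‖ * (1 / 2 * Real.exp (-(s * wt u α))) =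
      1 / 2 * ∑ α ∈ low hu T, ‖MvPowerSeries.coeff α g‖ * Real.exp (-(s * wt u α)) := by
      rw [Finset.mul_sum]; exact Finset.sum_congr rfl fun _ _ => by ring
    have h5 := hF (low hu T)
    linarith
  intro S
  refine le_trans ?_ (hlow (∑ α ∈ S, wt u α))
  refine Finset.sum_le_sum_of_subset_of_nonneg (fun α hα => ?_) fun _ _ _ => by positivity
  rw [mem_low]
  exact Finset.single_le_sum (f := fun α => wt u α) (fun i _ => wt_nonneg hu i) hα

end QH

namespace QH

open MvPowerSeries in
lemma NB.add {u : Fin n → ℝ} {s : ℝ} {F G : MvPowerSeries (Fin n) ℂ} {C C' : ℝ}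
    (hF : NB u s F C) (hG : NB u s G C') : NB u s (F + G) (C + C') := by
  intro S
  refine le_trans ?_ (add_le_add (hF S) (hG S))
  rw [← Finset.sum_add_distrib]
  refine Finset.sum_le_sum fun α _ => ?_
  rw [← add_mul, map_add]
  exact mul_le_mul_of_nonneg_right (norm_add_le _ _) (Real.exp_pos _).le

lemma NB.smul {u : Fin n → ℝ} {s : ℝ} {F : MvPowerSeries (Fin n) ℂ} {C : ℝ}
    (hF : NB u s F C) (c : ℂ) : NB u s (c • F) (‖c‖ * C) := by
  intro S
  refine le_trans (le_of_eq ?_) (mul_le_mul_of_nonneg_left (hF S) (norm_nonneg c))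
  rw [Finset.mul_sum]
  refine Finset.sum_congr rfl fun α _ => ?_
  rw [map_smul, norm_smul, mul_assoc]

lemma NB_zero (u : Fin n → ℝ) (s : ℝ) : NB u s (0 : MvPowerSeries (Fin n) ℂ) 0 := by
  intro S; simp

lemma NB_monomial (u : Fin n → ℝ) (s : ℝ) (γ : Fin n →₀ ℕ) :
    NB u s (MvPowerSeries.monomial γ (1 : ℂ)) (Real.exp (-(s * wt u γ))) := by
  classical
  intro S
  have h1 : ∀ α ∈ S, ‖MvPowerSeries.coeff α (MvPowerSeries.monomial γ (1 : ℂ))‖ *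
      Real.exp (-(s * wt u α)) = if α = γ then Real.exp (-(s * wt u γ)) else 0 := by
    intro α _
    rw [MvPowerSeries.coeff_monomial]
    split_ifs with h
    · simp [h]
    · simp
  rw [Finset.sum_congr rfl h1, Finset.sum_ite_eq']
  split_ifs
  · exact le_rfl
  · positivity

lemma NB.mul {u : Fin n → ℝ} {s : ℝ} {F G : MvPowerSeries (Fin n) ℂ} {C C' : ℝ}
    (hF : NB u s F C) (hG : NB u s G C') : NB u s (F * G) (C * C') := by
  classical
  intro S
  have h1 : ∀ β ∈ S, ‖MvPowerSeries.coeff β (F * G)‖ * Real.exp (-(s * wt u β)) ≤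
      ∑ p ∈ Finset.HasAntidiagonal.antidiagonal β,
        (‖MvPowerSeries.coeff p.1 F‖ * Real.exp (-(s * wt u p.1))) *
        (‖MvPowerSeries.coeff p.2 G‖ * Real.exp (-(s * wt u p.2))) := by
    intro β _
    rw [MvPowerSeries.coeff_mul]
    refine (mul_le_mul_of_nonneg_right (norm_sum_le _ _) (Real.exp_pos _).le).trans ?_
    rw [Finset.sum_mul]
    refine Finset.sum_le_sum fun p hp => le_of_eq ?_
    rw [Finset.HasAntidiagonal.mem_antidiagonal] at hp
    rw [← hp, wt_add, mul_add, neg_add, Real.exp_add, norm_mul]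
    ring
  refine (Finset.sum_le_sum h1).trans ?_
  rw [← Finset.sum_biUnion]
  · refine le_trans ?_ (mul_le_mul (hF ((S.biUnion Finset.HasAntidiagonal.antidiagonal).image Prod.fst))
      (hG ((S.biUnion Finset.HasAntidiagonal.antidiagonal).image Prod.snd))
      (Finset.sum_nonneg fun _ _ => by positivity) hF.nonneg)
    rw [Finset.sum_mul_sum, ← Finset.sum_product']
    refine Finset.sum_le_sum_of_subset_of_nonneg (fun p hp => ?_) fun _ _ _ => by positivity
    exact Finset.mem_product.2 ⟨Finset.mem_image_of_mem _ hp, Finset.mem_image_of_mem _ hp⟩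
  · intro a _ b _ hab
    refine Finset.disjoint_left.2 fun p hp hq => hab ?_
    rw [Finset.HasAntidiagonal.mem_antidiagonal] at hp hq
    rw [← hp, hq]

lemma IsConv.add {F G : MvPowerSeries (Fin n) ℂ} (hF : IsConv F) (hG : IsConv G) :
    IsConv (F + G) := by
  obtain ⟨s, C, h⟩ := hF.exists_NB (u := fun _ => 1) (fun _ => one_pos)
  obtain ⟨s', C', h'⟩ := hG.exists_NB (u := fun _ => 1) (fun _ => one_pos)
  exact ⟨max s s', _, (h _ (le_max_left _ _)).add (h' _ (le_max_right _ _))⟩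

lemma IsConv.mul {F G : MvPowerSeries (Fin n) ℂ} (hF : IsConv F) (hG : IsConv G) :
    IsConv (F * G) := by
  obtain ⟨s, C, h⟩ := hF.exists_NB (u := fun _ => 1) (fun _ => one_pos)
  obtain ⟨s', C', h'⟩ := hG.exists_NB (u := fun _ => 1) (fun _ => one_pos)
  exact ⟨max s s', _, (h _ (le_max_left _ _)).mul (h' _ (le_max_right _ _))⟩

lemma IsConv.smul {F : MvPowerSeries (Fin n) ℂ} (hF : IsConv F) (c : ℂ) :
    IsConv (c • F) := by
  obtain ⟨s, C, h⟩ := hF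
  exact ⟨s, _, h.smul c⟩

lemma isConv_monomial (γ : Fin n →₀ ℕ) : IsConv (MvPowerSeries.monomial γ (1 : ℂ)) :=
  (NB_monomial (fun _ => 1) 0 γ).isConv

lemma Fil.add {u : Fin n → ℝ} {c : ℝ} {F G : MvPowerSeries (Fin n) ℂ}
    (hF : Fil u c F) (hG : Fil u c G) : Fil u c (F + G) := by
  intro α h
  rw [map_add] at h
  by_cases h1 : MvPowerSeries.coeff α F = 0
  · exact hG α fun h2 => h (by rw [h1, h2, add_zero])
  · exact hF α h1

lemma Fil.smul {u : Fin n → ℝ} {c : ℝ} {F : MvPowerSeries (Fin n) ℂ}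
    (hF : Fil u c F) (a : ℂ) : Fil u c (a • F) := by
  intro α h
  rw [map_smul] at h
  exact hF α fun h2 => h (by rw [h2, smul_zero])

lemma Fil.neg {u : Fin n → ℝ} {c : ℝ} {F : MvPowerSeries (Fin n) ℂ}
    (hF : Fil u c F) : Fil u c (-F) := by
  simpa using hF.smul (-1)

lemma Fil.sub {u : Fin n → ℝ} {c : ℝ} {F G : MvPowerSeries (Fin n) ℂ}
    (hF : Fil u c F) (hG : Fil u c G) : Fil u c (F - G) := by
  rw [sub_eq_add_neg]; exact hF.add hG.neg

lemma Fil_zero (u : Fin n → ℝ) (c : ℝ) : Fil u c (0 : MvPowerSeries (Fin n) ℂ) := by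
  intro α h; simp at h

lemma Fil.sum {u : Fin n → ℝ} {c : ℝ} {ι : Type*} (S : Finset ι)
    {F : ι → MvPowerSeries (Fin n) ℂ} (hF : ∀ i ∈ S, Fil u c (F i)) :
    Fil u c (∑ i ∈ S, F i) :=
  Finset.sum_induction _ (Fil u c) (fun _ _ => Fil.add) (Fil_zero u c) hF

lemma Fil.mono {u : Fin n → ℝ} {c c' : ℝ} {F : MvPowerSeries (Fin n) ℂ}
    (hF : Fil u c F) (h : c' ≤ c) : Fil u c' F := fun α hα => h.trans (hF α hα)

lemma Fil.mul {u : Fin n → ℝ} {c c' : ℝ} {F G : MvPowerSeries (Fin n) ℂ}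
    (hF : Fil u c F) (hG : Fil u c' G) : Fil u (c + c') (F * G) := by
  classical
  intro α h
  rw [MvPowerSeries.coeff_mul] at h
  obtain ⟨p, hp, h2⟩ := Finset.exists_ne_zero_of_sum_ne_zero h
  rw [Finset.HasAntidiagonal.mem_antidiagonal] at hp
  rw [← hp, wt_add]
  exact add_le_add (hF _ (left_ne_zero_of_mul h2)) (hG _ (right_ne_zero_of_mul h2))

lemma Fil_monomial (u : Fin n → ℝ) (α : Fin n →₀ ℕ) (a : ℂ) :
    Fil u (wt u α) (MvPowerSeries.monomial α a) := by
  classical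
  intro β h
  rw [MvPowerSeries.coeff_monomial] at h
  split_ifs at h with h1
  · rw [h1]
  · exact absurd rfl h

/-- A ring identified with the ring of convergent power series. -/
structure TR (n : ℕ) (A : Type*) [CommRing A] [Algebra ℂ A] where
  τ : A →ₐ[ℂ] MvPowerSeries (Fin n) ℂ
  inj : Function.Injective τ
  conv : ∀ a, IsConv (τ a)
  surj : ∀ F, IsConv F → ∃ a, τ a = F
  x : Fin n → A
  τ_x : ∀ i, τ (x i) = MvPowerSeries.X i

namespace TR
variable {A : Type*} [CommRing A] [Algebra ℂ A] (T : TR n A)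

/-- Coefficient. -/
def co (α : Fin n →₀ ℕ) (a : A) : ℂ := MvPowerSeries.coeff α (T.τ a)

lemma co_add (α : Fin n →₀ ℕ) (a b : A) : T.co α (a + b) = T.co α a + T.co α b := by
  simp [co]
lemma co_sub (α : Fin n →₀ ℕ) (a b : A) : T.co α (a - b) = T.co α a - T.co α b := by
  simp [co]
lemma co_smul (α : Fin n →₀ ℕ) (c : ℂ) (a : A) : T.co α (c • a) = c * T.co α a := by
  simp [co]
lemma co_zero (α : Fin n →₀ ℕ) : T.co α 0 = 0 := by
  simp [co]
lemma co_sum (α : Fin n →₀ ℕ) {ι : Type*} (S : Finset ι) (f : ι → A) :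
    T.co α (∑ i ∈ S, f i) = ∑ i ∈ S, T.co α (f i) := by
  simp [co]
lemma ext_co {a b : A} (h : ∀ α, T.co α a = T.co α b) : a = b :=
  T.inj (MvPowerSeries.ext h)

/-- Monomials. -/
def mon (α : Fin n →₀ ℕ) : A := ∏ i, T.x i ^ α i

lemma mon_zero : T.mon 0 = 1 := by simp [mon]
lemma mon_add (α β : Fin n →₀ ℕ) : T.mon (α + β) = T.mon α * T.mon β := by
  simp [mon, pow_add, Finset.prod_mul_distrib]
lemma mon_single (i : Fin n) : T.mon (Finsupp.single i 1) = T.x i := by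
  unfold mon
  rw [Finset.prod_eq_single i]
  · simp
  · intro j _ hj
    simp [Ne.symm hj]
  · simp

lemma mon_induct (Q : A → (Fin n →₀ ℕ) → Prop) (h1 : Q 1 0)
    (hmul : ∀ a b α β, Q a α → Q b β → Q (a * b) (α + β))
    (hx : ∀ i, Q (T.x i) (Finsupp.single i 1)) (α : Fin n →₀ ℕ) : Q (T.mon α) α := by
  induction α using Finsupp.induction_linear with
  | zero => rw [mon_zero]; exact h1
  | add f g hf hg => rw [mon_add]; exact hmul _ _ _ _ hf hg
  | single i k =>
    induction k with
    | zero => rw [Finsupp.single_zero, mon_zero]; exact h1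
    | succ k ih =>
      rw [Finsupp.single_add, mon_add, mon_single]
      exact hmul _ _ _ _ ih (hx i)

lemma τ_mon (α : Fin n →₀ ℕ) : T.τ (T.mon α) = MvPowerSeries.monomial α 1 := by
  refine T.mon_induct (fun a α => T.τ a = MvPowerSeries.monomial α 1) ?_ ?_ ?_ α
  · rw [map_one]; exact MvPowerSeries.monomial_zero_one.symm
  · intro a b α β ha hb
    rw [map_mul, ha, hb, MvPowerSeries.monomial_mul_monomial, one_mul]
  · intro i; rw [T.τ_x]; rfl

lemma co_mon (α β : Fin n →₀ ℕ) : T.co β (T.mon α) = if β = α then 1 else 0 := by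
  classical
  rw [co, τ_mon, MvPowerSeries.coeff_monomial]

lemma exists_of_NB {u : Fin n → ℝ} {s : ℝ} {F : MvPowerSeries (Fin n) ℂ} {C : ℝ}
    (h : NB u s F C) : ∃ a, T.τ a = F := T.surj F h.isConv

lemma co_rest (a : A) (S : Finset (Fin n →₀ ℕ)) (β : Fin n →₀ ℕ) :
    T.co β (a - ∑ α ∈ S, T.co α a • T.mon α) = if β ∈ S then 0 else T.co β a := by
  classical
  rw [co_sub, co_sum]
  simp only [co_smul, co_mon, mul_ite, mul_one, mul_zero]
  rw [Finset.sum_ite_eq]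
  split_ifs <;> simp

/-- Hadamard's lemma. -/
lemma hadamard (a : A) (k : ℕ) (h : Fil (fun _ => 1) (k + 1 : ℕ) (T.τ a)) :
    ∃ b : Fin n → A, (∀ i, Fil (fun _ => 1) k (T.τ (b i))) ∧ a = ∑ i, T.x i * b i := by
  classical
  have hex : ∀ i : Fin n, ∃ b : A, ∀ β, T.co β b =
      if (∀ j, j < i → β j = 0) then T.co (β + Finsupp.single i 1) a else 0 := by
    intro i
    obtain ⟨s, C, hC⟩ := T.conv a
    have : NB (fun _ => 1) s ((fun β =>
      if (∀ j, j < i → β j = 0) then T.co (β + Finsupp.single i 1) a else 0 :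
        MvPowerSeries (Fin n) ℂ)) (Real.exp s * C) := by
      intro S
      refine le_trans ?_ (mul_le_mul_of_nonneg_left (hC (S.map
        (addRightEmbedding (Finsupp.single i 1)))) (Real.exp_pos _).le)
      rw [Finset.sum_map, Finset.mul_sum]
      refine Finset.sum_le_sum fun β _ => ?_
      change ‖(if (∀ j, j < i → β j = 0) then T.co (β + Finsupp.single i 1) a else 0)‖ * _ ≤ _
      have e : Real.exp (-(s * wt (fun _ => 1) β)) =
          Real.exp s * Real.exp (-(s * wt (fun _ => 1) (β + Finsupp.single i 1))) := by
        rw [wt_add, wt_single, ← Real.exp_add]; congr 1; push_cast; ring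
      split_ifs
      · rw [e, mul_left_comm]; rfl
      · simp only [norm_zero, zero_mul]; positivity
    obtain ⟨b, hb⟩ := T.exists_of_NB this
    exact ⟨b, fun β => by rw [co, hb]; rfl⟩
  choose b hb using hex
  refine ⟨b, fun i β hβ => ?_, T.ext_co fun β => ?_⟩
  · have h1 : T.co β (b i) ≠ 0 := hβ
    rw [hb] at h1
    split_ifs at h1 with h2
    · have h3 := h _ h1
      rw [wt_add, wt_single] at h3
      push_cast at h3
      linarith
    · exact absurd rfl h1
  · rw [co_sum]
    have h2 : ∀ i, T.co β (T.x i * b i) =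
        if (β i ≠ 0 ∧ ∀ j, j < i → β j = 0) then T.co β a else 0 := by
      intro i
      have : T.co β (T.x i * b i) = if Finsupp.single i 1 ≤ β then
          T.co (β - Finsupp.single i 1) (b i) else 0 := by
        rw [co, map_mul, T.τ_x, MvPowerSeries.X, MvPowerSeries.coeff_monomial_mul]
        simp [co]
      rw [this, hb]
      have e1 : Finsupp.single i 1 ≤ β ↔ β i ≠ 0 := by
        rw [Finsupp.single_le_iff]; omega
      by_cases h0 : β i ≠ 0
      · rw [if_pos (e1.2 h0), tsub_add_cancel_of_le (e1.2 h0)]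
        refine if_congr ?_ rfl rfl
        rw [and_iff_right h0]
        refine forall_congr' fun j => forall_congr' fun hj => ?_
        simp [Finsupp.single_apply, hj.ne']
      · rw [if_neg (fun h => h0 (e1.1 h)), if_neg (fun h => h0 h.1)]
    simp only [h2]
    by_cases hβ : β = 0
    · have : T.co β a = 0 := by
        by_contra h3
        have := h _ h3
        rw [hβ, wt_zero] at this
        push_cast at this
        have : (0:ℝ) ≤ k := Nat.cast_nonneg k
        linarith
      simp [this]
    · obtain ⟨i, hi⟩ := Finsupp.ne_iff.mp hβ
      have hne : (Finset.univ.filter fun i => β i ≠ 0).Nonempty := ⟨i, by simpa using hi⟩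
      set m := (Finset.univ.filter fun i => β i ≠ 0).min' hne with hm
      have hm1 : β m ≠ 0 := by
        have := Finset.min'_mem _ hne
        rw [← hm] at this
        simpa using this
      have hm2 : ∀ j, j < m → β j = 0 := by
        intro j hj
        by_contra h3
        have := Finset.min'_le (Finset.univ.filter fun i => β i ≠ 0) j (by simpa using h3)
        exact absurd hj (not_lt.2 this)
      rw [Finset.sum_eq_single m]
      · rw [if_pos ⟨hm1, hm2⟩]
      · intro j _ hj
        refine if_neg fun h3 => ?_
        rcases lt_or_gt_of_ne hj with h4 | h4
        · exact h3.1 (hm2 j h4)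
        · exact hm1 (h3.2 m h4)
      · simp

lemma fil_D_nat (D : Derivation ℂ A A) (hD : ∀ i, Fil (fun _ => 1) 1 (T.τ (D (T.x i))))
    (k : ℕ) : ∀ a, Fil (fun _ => 1) k (T.τ a) → Fil (fun _ => 1) k (T.τ (D a)) := by
  induction k with
  | zero => intro a _ α _; simpa using wt_nonneg (fun _ => one_pos) α
  | succ k ih =>
    intro a ha
    obtain ⟨b, hb, rfl⟩ := T.hadamard a k ha
    rw [map_sum, map_sum]
    refine Fil.sum _ fun i _ => ?_
    rw [Derivation.leibniz, map_add, smul_eq_mul, smul_eq_mul, map_mul, map_mul]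
    refine Fil.add ?_ ?_
    · have h1 : Fil (fun _ => 1) 1 (T.τ (T.x i)) := by
        rw [T.τ_x]
        have := Fil_monomial (fun _ => 1) (Finsupp.single i 1) 1
        rw [wt_single] at this
        simpa using! this
      refine (h1.mul (ih _ (hb i))).mono ?_
      push_cast; linarith
    · refine ((hb i).mul (hD i)).mono ?_
      push_cast; linarith

lemma one_le_wt_one {α : Fin n →₀ ℕ} (h : α ≠ 0) : 1 ≤ wt (fun _ => 1) α := by
  obtain ⟨i, hi⟩ := Finsupp.ne_iff.mp h
  have h1 : (1:ℝ) ≤ α i := by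
    have : 1 ≤ α i := Nat.one_le_iff_ne_zero.2 hi
    exact_mod_cast this
  have := Finset.single_le_sum (f := fun i => (α i : ℝ) * 1)
      (fun i _ => by positivity) (Finset.mem_univ i)
  unfold wt
  linarith

lemma wt_one_nat (α : Fin n →₀ ℕ) : wt (fun _ => 1) α = ((∑ i, α i : ℕ) : ℝ) := by
  simp [wt]

/-- Continuity formula for derivations. -/
lemma co_D (D : Derivation ℂ A A) (hD : ∀ i, Fil (fun _ => 1) 1 (T.τ (D (T.x i))))
    (a : A) (β : Fin n →₀ ℕ) (S : Finset (Fin n →₀ ℕ))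
    (hS : ∀ α, wt (fun _ => 1) α ≤ wt (fun _ => 1) β → α ∈ S) :
    T.co β (D a) = ∑ α ∈ S, T.co α a * T.co β (D (T.mon α)) := by
  set b := a - ∑ α ∈ S, T.co α a • T.mon α with hb
  have h1 : Fil (fun _ => 1) ((∑ i, β i + 1 : ℕ) : ℝ) (T.τ b) := by
    intro γ hγ
    have h2 : T.co γ b ≠ 0 := hγ
    rw [hb, co_rest] at h2
    have h3 : γ ∉ S := fun h => h2 (if_pos h)
    have h4 : wt (fun _ => 1) β < wt (fun _ => 1) γ := not_le.1 fun h => h3 (hS γ h)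
    rw [wt_one_nat, wt_one_nat] at h4
    rw [wt_one_nat]
    have h5 : ∑ i, β i < ∑ i, γ i := by exact_mod_cast h4
    exact_mod_cast h5
  have h2 := T.fil_D_nat D hD _ b h1
  have h3 : T.co β (D b) = 0 := by
    by_contra h
    have := h2 β h
    rw [wt_one_nat] at this
    push_cast at this
    linarith
  have h4 : a = b + ∑ α ∈ S, T.co α a • T.mon α := by rw [hb]; ring
  conv_lhs => rw [h4]
  rw [map_add, co_add, h3, zero_add, map_sum, co_sum]
  refine Finset.sum_congr rfl fun α _ => ?_
  rw [Derivation.map_smul, co_smul]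

lemma fil_one_of_fil {u : Fin n → ℝ} {c : ℝ} (hc : 0 < c)
    {F : MvPowerSeries (Fin n) ℂ} (h : Fil u c F) : Fil (fun _ => 1) 1 F := by
  intro α hα
  refine one_le_wt_one fun h0 => ?_
  have := h α hα
  rw [h0, wt_zero] at this
  linarith

lemma fil_D {u : Fin n → ℝ} (hu : ∀ i, 0 < u i) (D : Derivation ℂ A A)
    (hD : ∀ i, Fil u (u i) (T.τ (D (T.x i)))) (c : ℝ) (a : A) (ha : Fil u c (T.τ a)) :
    Fil u c (T.τ (D a)) := by
  have hD1 := fun i => fil_one_of_fil (hu i) (hD i)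
  have hm : ∀ α, Fil u (wt u α) (T.τ (D (T.mon α))) := by
    intro α
    refine (T.mon_induct (fun a α => Fil u (wt u α) (T.τ a) ∧ Fil u (wt u α) (T.τ (D a)))
      ?_ ?_ ?_ α).2
    · refine ⟨?_, by simpa using Fil_zero u _⟩
      have := Fil_monomial u (0 : Fin n →₀ ℕ) 1
      rw [map_one]
      exact this
    · rintro a b α β ⟨h1, h2⟩ ⟨h3, h4⟩
      rw [map_mul, Derivation.leibniz, map_add, smul_eq_mul, smul_eq_mul, map_mul, map_mul,
        wt_add]
      exact ⟨h1.mul h3, (h1.mul h4).add ((h3.mul h2).mono (by linarith))⟩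
    · intro i
      have := Fil_monomial u (Finsupp.single i 1) 1
      rw [T.τ_x]
      refine ⟨this, ?_⟩
      rw [wt_single]
      simpa using hD i
  intro β hβ
  have hβ' : T.co β (D a) ≠ 0 := hβ
  rw [T.co_D D hD1 a β (low (u := fun _ => 1) (fun _ => one_pos) (wt (fun _ => 1) β))
    (fun α h => (mem_low _ _ _).2 h)] at hβ'
  obtain ⟨α, _, h2⟩ := Finset.exists_ne_zero_of_sum_ne_zero hβ'
  exact (ha α (left_ne_zero_of_mul h2)).trans (hm α β (right_ne_zero_of_mul h2))

end TR
end QH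

namespace QH
namespace TR
variable {A : Type*} [CommRing A] [Algebra ℂ A] (T : TR n A)

lemma fil_x (u : Fin n → ℝ) (i : Fin n) : Fil u (u i) (T.τ (T.x i)) := by
  have := Fil_monomial u (Finsupp.single i 1) 1
  rw [wt_single] at this
  rw [T.τ_x]
  simpa using! this

lemma fil_mon (u : Fin n → ℝ) (α : Fin n →₀ ℕ) : Fil u (wt u α) (T.τ (T.mon α)) := by
  rw [T.τ_mon]; exact Fil_monomial u α 1

lemma leib (D : Derivation ℂ A A) (a b : A) (μ ν : ℂ) :
    D (a * b) - (μ + ν) • (a * b) = a * (D b - ν • b) + b * (D a - μ • a) := by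
  rw [Derivation.leibniz, smul_eq_mul, smul_eq_mul]
  simp only [Algebra.smul_def, map_add]
  ring

lemma fil_D_mon {u : Fin n → ℝ} (D : Derivation ℂ A A) {w : Fin n → ℝ}
    (hD : ∀ i, Fil u (u i + 1) (T.τ (D (T.x i) - (w i : ℂ) • T.x i))) (α : Fin n →₀ ℕ) :
    Fil u (wt u α + 1) (T.τ (D (T.mon α) - ((wt w α : ℝ) : ℂ) • T.mon α)) := by
  refine (T.mon_induct (fun a α => Fil u (wt u α) (T.τ a) ∧
    Fil u (wt u α + 1) (T.τ (D a - ((wt w α : ℝ) : ℂ) • a))) ?_ ?_ ?_ α).2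
  · refine ⟨?_, ?_⟩
    · have := Fil_monomial u (0 : Fin n →₀ ℕ) 1
      rw [map_one]
      exact this
    · simpa [wt_zero] using Fil_zero u _
  · rintro a b α β ⟨h1, h2⟩ ⟨h3, h4⟩
    rw [wt_add, wt_add, Complex.ofReal_add, leib, map_mul, map_add, map_mul, map_mul]
    exact ⟨h1.mul h3, ((h1.mul h4).mono (by linarith)).add ((h3.mul h2).mono (by linarith))⟩
  · intro i
    rw [wt_single, wt_single]
    simp only [Nat.cast_one, one_mul]
    exact ⟨T.fil_x u i, hD i⟩

lemma NB_D_mon {u : Fin n → ℝ} {s : ℝ} (D : Derivation ℂ A A) {w θ : Fin n → ℝ}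
    (hD : ∀ i, NB u s (T.τ (D (T.x i) - (w i : ℂ) • T.x i)) (θ i * Real.exp (-(s * u i))))
    (α : Fin n →₀ ℕ) :
    NB u s (T.τ (D (T.mon α) - ((wt w α : ℝ) : ℂ) • T.mon α))
      (wt θ α * Real.exp (-(s * wt u α))) := by
  refine (T.mon_induct (fun a α => NB u s (T.τ a) (Real.exp (-(s * wt u α))) ∧
    NB u s (T.τ (D a - ((wt w α : ℝ) : ℂ) • a)) (wt θ α * Real.exp (-(s * wt u α))))
    ?_ ?_ ?_ α).2
  · refine ⟨?_, ?_⟩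
    · have := NB_monomial u s (0 : Fin n →₀ ℕ)
      rw [map_one]
      exact this
    · simpa [wt_zero] using NB_zero u s
  · rintro a b α β ⟨h1, h2⟩ ⟨h3, h4⟩
    have e : Real.exp (-(s * wt u (α + β))) =
        Real.exp (-(s * wt u α)) * Real.exp (-(s * wt u β)) := by
      rw [wt_add, ← Real.exp_add]; congr 1; ring
    rw [e, wt_add, wt_add, Complex.ofReal_add, leib, map_mul, map_add, map_mul, map_mul]
    refine ⟨h1.mul h3, ((h1.mul h4).add (h3.mul h2)).mono (le_of_eq ?_)⟩
    ring
  · intro i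
    have h := NB_monomial u s (Finsupp.single i 1)
    rw [wt_single] at h
    rw [wt_single, wt_single, wt_single, T.τ_x]
    simp only [Nat.cast_one, one_mul] at h ⊢
    exact ⟨h, hD i⟩

lemma surj_D {u : Fin n → ℝ} (hu : ∀ i, 0 < u i) (D : Derivation ℂ A A) {w : Fin n → ℝ}
    (hw : ∀ i, 0 < w i)
    (hD : ∀ i, Fil u (u i + 1) (T.τ (D (T.x i) - (w i : ℂ) • T.x i))) (lam : ℝ) :
    ∃ c₀, ∀ c, c₀ ≤ c → ∀ a, Fil u c (T.τ a) →
      ∃ b, Fil u c (T.τ b) ∧ D b - (lam : ℂ) • b = a := by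
  classical
  have hD1 : ∀ i, Fil (fun _ => 1) 1 (T.τ (D (T.x i))) := by
    intro i
    refine fil_one_of_fil (hu i) (u := u) ?_
    have e : D (T.x i) = (D (T.x i) - (w i : ℂ) • T.x i) + (w i : ℂ) • T.x i := by ring
    rw [e, map_add, map_smul]
    exact ((hD i).mono (by linarith)).add ((T.fil_x u i).smul _)
  obtain ⟨κ, hκ, hκw⟩ : ∃ κ : ℝ, 0 < κ ∧ ∀ i, κ * u i ≤ w i := by
    have hpos : 0 < 1 + ∑ i, u i / w i := by
      have : 0 ≤ ∑ i, u i / w i := Finset.sum_nonneg fun i _ => (div_pos (hu i) (hw i)).le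
      linarith
    refine ⟨(1 + ∑ i, u i / w i)⁻¹, inv_pos.2 hpos, fun i => ?_⟩
    have h1 : u i / w i ≤ ∑ i, u i / w i :=
      Finset.single_le_sum (f := fun i => u i / w i)
        (fun i _ => (div_pos (hu i) (hw i)).le) (Finset.mem_univ i)
    rw [inv_mul_le_iff₀ hpos, ← div_le_iff₀ (hw i)]
    linarith
  have hwu : ∀ α, κ * wt u α ≤ wt w α := by
    intro α
    unfold wt
    rw [Finset.mul_sum]
    refine Finset.sum_le_sum fun i _ => ?_
    have := mul_le_mul_of_nonneg_left (hκw i) (Nat.cast_nonneg (α := ℝ) (α i))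
    linarith
  refine ⟨(2 * |lam| + 1) / κ, fun c hc a ha => ?_⟩
  have hwα : ∀ α, c ≤ wt u α → 2 * |lam| + 1 ≤ wt w α := by
    intro α hα
    refine le_trans ?_ (hwu α)
    rw [div_le_iff₀ hκ] at hc
    nlinarith
  have hμ : ∀ α, c ≤ wt u α → wt w α / 2 ≤ wt w α - lam ∧ 1 / 2 ≤ wt w α - lam := by
    intro α hα
    have h1 := hwα α hα
    have h2 := le_abs_self lam
    have h3 := abs_nonneg lam
    constructor <;> linarith
  obtain ⟨sa, Ca, hsa⟩ := (T.conv a).exists_NB hu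
  have hev : ∀ᶠ s : ℝ in atTop, ∀ i,
      NB u s (T.τ (D (T.x i) - (w i : ℂ) • T.x i)) (w i / 4 * Real.exp (-(s * u i))) := by
    rw [eventually_all]
    intro i
    obtain ⟨s₀, h⟩ := small_tail (T.conv _) hu (lt_add_one (u i)) (hD i)
      (div_pos (hw i) four_pos)
    exact eventually_atTop.2 ⟨s₀, h⟩
  obtain ⟨s, hs, hss⟩ := (hev.and (eventually_ge_atTop sa)).exists
  have hNa := hsa s hss
  have hθ : ∀ α, wt (fun i => w i / 4) α = wt w α / 4 := by
    intro α; unfold wt; rw [Finset.sum_div]; exact Finset.sum_congr rfl fun _ _ => by ring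
  let K : (Fin n →₀ ℕ) → MvPowerSeries (Fin n) ℂ := fun α =>
    if c ≤ wt u α then (((wt w α - lam : ℝ) : ℂ)⁻¹) •
      T.τ (D (T.mon α) - ((wt w α : ℝ) : ℂ) • T.mon α) else 0
  have hK0 : ∀ α, ¬ c ≤ wt u α → K α = 0 := fun α h => if_neg h
  have hK1 : ∀ α, c ≤ wt u α → K α = (((wt w α - lam : ℝ) : ℂ)⁻¹) •
      T.τ (D (T.mon α) - ((wt w α : ℝ) : ℂ) • T.mon α) := fun α h => if_pos h
  have hK : ∀ α β, MvPowerSeries.coeff β (K α) ≠ 0 → wt u α < wt u β := by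
    intro α β h
    by_cases hc : c ≤ wt u α
    · rw [hK1 α hc] at h
      have := ((T.fil_D_mon D hD α).smul _) β h
      linarith
    · rw [hK0 α hc] at h; simp at h
  have hKb : ∀ α, NB u s (K α) (1 / 2 * Real.exp (-(s * wt u α))) := by
    intro α
    by_cases hc : c ≤ wt u α
    · rw [hK1 α hc]
      obtain ⟨h1, h2⟩ := hμ α hc
      refine ((T.NB_D_mon D hs α).smul _).mono ?_
      rw [hθ, norm_inv, Complex.norm_real, Real.norm_eq_abs, abs_of_pos (by linarith),
        ← mul_assoc]
      refine mul_le_mul_of_nonneg_right ?_ (Real.exp_pos _).le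
      rw [inv_mul_le_iff₀ (by linarith)]
      linarith
    · rw [hK0 α hc]
      exact (NB_zero u s).mono (by positivity)
  obtain ⟨g, hg, hgeq⟩ := perturb hu K hK hKb (T.τ a) hNa
  have hg0 : ∀ β, ¬ c ≤ wt u β → MvPowerSeries.coeff β g = 0 := by
    intro β hβ
    have h1 := hgeq β
    have h2 : MvPowerSeries.coeff β (T.τ a) = 0 := by
      by_contra h; exact hβ (ha β h)
    rw [h2, Finset.sum_eq_zero, add_zero] at h1
    · exact h1.symm
    · intro α hα
      rw [mem_low] at hα
      rw [hK0 α (by linarith)]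
      simp
  have hNb : NB u s (fun α => if c ≤ wt u α then
      MvPowerSeries.coeff α g * ((wt w α - lam : ℝ) : ℂ)⁻¹ else 0 :
        MvPowerSeries (Fin n) ℂ) (2 * (2 * Ca)) := by
    intro S
    refine le_trans ?_ (mul_le_mul_of_nonneg_left (hg S) zero_le_two)
    rw [Finset.mul_sum]
    refine Finset.sum_le_sum fun α _ => ?_
    rw [← mul_assoc]
    refine mul_le_mul_of_nonneg_right ?_ (Real.exp_pos _).le
    change ‖(if c ≤ wt u α then
      MvPowerSeries.coeff α g * ((wt w α - lam : ℝ) : ℂ)⁻¹ else 0)‖ ≤ _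
    split_ifs with hc
    · obtain ⟨h1, h2⟩ := hμ α hc
      rw [norm_mul, norm_inv, Complex.norm_real, Real.norm_eq_abs, abs_of_pos (by linarith),
        mul_comm]
      refine mul_le_mul_of_nonneg_right ?_ (norm_nonneg _)
      rw [inv_le_comm₀ (by linarith) two_pos]
      linarith
    · simp
  obtain ⟨b, hb⟩ := T.exists_of_NB hNb
  have hbc : ∀ α, T.co α b = if c ≤ wt u α then
      MvPowerSeries.coeff α g * ((wt w α - lam : ℝ) : ℂ)⁻¹ else 0 := by
    intro α; rw [co, hb]; rfl
  refine ⟨b, fun α hα => ?_, T.ext_co fun β => ?_⟩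
  · have h1 : T.co α b ≠ 0 := hα
    rw [hbc] at h1
    by_contra h2
    exact h1 (if_neg h2)
  set S := low hu (wt u β) ∪ low (u := fun _ => 1) (fun _ => one_pos) (wt (fun _ => 1) β) with hS
  have hβS : β ∈ S := Finset.mem_union_left _ ((mem_low _ _ _).2 le_rfl)
  rw [co_sub, co_smul, T.co_D D hD1 b β S
    (fun α h => Finset.mem_union_right _ ((mem_low _ _ _).2 h))]
  have h1 : T.co β b = ∑ α ∈ S, T.co α b * T.co β (T.mon α) := by
    simp only [co_mon, mul_ite, mul_one, mul_zero]
    rw [Finset.sum_ite_eq, if_pos hβS]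
  rw [h1, Finset.mul_sum, ← Finset.sum_sub_distrib]
  have h2 : ∀ α ∈ S, T.co α b * T.co β (D (T.mon α)) - lam * (T.co α b * T.co β (T.mon α)) =
      MvPowerSeries.coeff α g * MvPowerSeries.coeff β (K α) +
      MvPowerSeries.coeff α g * T.co β (T.mon α) := by
    intro α _
    by_cases hc : c ≤ wt u α
    · obtain ⟨h3, h4⟩ := hμ α hc
      have hne : ((wt w α - lam : ℝ) : ℂ) ≠ 0 := by
        rw [Complex.ofReal_ne_zero]; linarith
      have hk : MvPowerSeries.coeff β (K α) = ((wt w α - lam : ℝ) : ℂ)⁻¹ *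
          (T.co β (D (T.mon α)) - ((wt w α : ℝ) : ℂ) * T.co β (T.mon α)) := by
        rw [hK1 α hc, map_smul, smul_eq_mul]
        congr 1
        rw [← co_smul, ← co_sub]; rfl
      rw [hbc, if_pos hc, hk]
      have e : ((wt w α : ℝ) : ℂ) = ((wt w α - lam : ℝ) : ℂ) + lam := by push_cast; ring
      rw [e]
      field_simp
      ring
    · rw [hbc, if_neg hc, hg0 α hc]; ring
  rw [Finset.sum_congr rfl h2, Finset.sum_add_distrib]
  simp only [co_mon, mul_ite, mul_one, mul_zero]
  rw [Finset.sum_ite_eq, if_pos hβS, add_comm]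
  change _ = MvPowerSeries.coeff β (T.τ a)
  rw [hgeq β]
  congr 1
  symm
  refine Finset.sum_subset Finset.subset_union_left fun α _ hα => ?_
  have : MvPowerSeries.coeff β (K α) = 0 := by
    by_contra h
    exact hα ((mem_low _ _ _).2 (hK α β h).le)
  rw [this, mul_zero]

lemma fil_aeval {u : Fin n → ℝ} (D : Derivation ℂ A A) (c : ℝ)
    (hD : ∀ a, Fil u c (T.τ a) → Fil u c (T.τ (D a))) (P : ℂ[X]) :
    ∀ a, Fil u c (T.τ a) → Fil u c (T.τ (aeval (D : A →ₗ[ℂ] A) P a)) := by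
  induction P using Polynomial.induction_on with
  | C a => intro b hb; simpa [Module.algebraMap_end_apply] using hb.smul a
  | add p q hp hq => intro b hb; simpa using (hp b hb).add (hq b hb)
  | monomial k a ih =>
    intro b hb
    have e : (aeval (D : A →ₗ[ℂ] A)) (C a * X ^ (k + 1)) b =
        (aeval (D : A →ₗ[ℂ] A)) (C a * X ^ k) (D b) := by
      simp [pow_succ]
    rw [e]
    exact ih _ (hD b hb)

lemma pow_surj {u : Fin n → ℝ} (D : Derivation ℂ A A) (c : ℝ) (lam : ℂ)
    (h : ∀ a, Fil u c (T.τ a) → ∃ b, Fil u c (T.τ b) ∧ D b - lam • b = a) (N : ℕ) :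
    ∀ a, Fil u c (T.τ a) →
      ∃ b, Fil u c (T.τ b) ∧ aeval (D : A →ₗ[ℂ] A) ((X - C lam) ^ N) b = a := by
  induction N with
  | zero => intro a ha; exact ⟨a, ha, by simp⟩
  | succ N ih =>
    intro a ha
    obtain ⟨b, hb, rfl⟩ := ih a ha
    obtain ⟨b', hb', rfl⟩ := h b hb
    refine ⟨b', hb', ?_⟩
    rw [pow_succ, map_mul, Module.End.mul_apply]
    simp [Module.algebraMap_end_apply]

lemma wt_nat (u : Fin n → ℕ) (α : Fin n →₀ ℕ) :
    wt (fun i => (u i : ℝ)) α = ((∑ i, α i * u i : ℕ) : ℝ) := by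
  simp [wt]

lemma poly_kill {u : Fin n → ℕ} (hu : ∀ i, 0 < u i) (D : Derivation ℂ A A) {w : Fin n → ℝ}
    (hD : ∀ i, Fil (fun i => (u i : ℝ)) (u i + 1) (T.τ (D (T.x i) - (w i : ℂ) • T.x i)))
    (hpres : ∀ c a, Fil (fun i => (u i : ℝ)) c (T.τ a) → Fil (fun i => (u i : ℝ)) c (T.τ (D a)))
    (k : ℕ) : ∃ P : ℂ[X], P ≠ 0 ∧ ∀ a, Fil (fun i => (u i : ℝ)) k
      (T.τ (aeval (D : A →ₗ[ℂ] A) P a)) := by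
  classical
  have hu' : ∀ i, (0:ℝ) < (fun i => (u i : ℝ)) i := fun i => Nat.cast_pos.2 (hu i)
  induction k with
  | zero => exact ⟨1, one_ne_zero, fun a α _ => by simpa using wt_nonneg hu' α⟩
  | succ k ih =>
    obtain ⟨P, hP, h⟩ := ih
    let Q : ℂ[X] := ∏ α ∈ low hu' (k : ℝ), (X - C ((wt w α : ℝ) : ℂ))
    have hQ : Q ≠ 0 := Finset.prod_ne_zero_iff.2 fun α _ => X_sub_C_ne_zero _
    refine ⟨Q * P, mul_ne_zero hQ hP, fun a => ?_⟩
    rw [map_mul, Module.End.mul_apply]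
    set b := aeval (D : A →ₗ[ℂ] A) P a with hb
    have hbf := h a
    rw [← hb] at hbf
    have e : b = (b - ∑ α ∈ low hu' (k : ℝ), T.co α b • T.mon α) +
      ∑ α ∈ low hu' (k : ℝ), T.co α b • T.mon α := by ring
    rw [e, map_add, map_add]
    refine Fil.add ?_ ?_
    · refine T.fil_aeval D _ (hpres _) _ _ ?_
      intro β hβ
      have h2 : T.co β (b - ∑ α ∈ low hu' (k : ℝ), T.co α b • T.mon α) ≠ 0 := hβ
      rw [co_rest] at h2
      have h3 : β ∉ low hu' (k : ℝ) := fun h => h2 (if_pos h)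
      rw [mem_low, not_le, wt_nat] at h3
      rw [wt_nat]
      exact_mod_cast h3
    · rw [map_sum, map_sum]
      refine Fil.sum _ fun α hα => ?_
      rw [map_smul, map_smul]
      by_cases h0 : T.co α b = 0
      · rw [h0, zero_smul]; exact Fil_zero _ _
      refine Fil.smul ?_ _
      have h4 := hbf α h0
      obtain ⟨Q', hQ'⟩ : (X - C ((wt w α : ℝ) : ℂ)) ∣ Q := Finset.dvd_prod_of_mem _ hα
      rw [hQ', mul_comm, map_mul, Module.End.mul_apply]
      refine T.fil_aeval D _ (hpres _) _ _ ?_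
      have h5 := T.fil_D_mon D hD α
      have : (aeval (D : A →ₗ[ℂ] A)) (X - C ((wt w α : ℝ) : ℂ)) (T.mon α) =
        D (T.mon α) - ((wt w α : ℝ) : ℂ) • T.mon α := by
        simp [Module.algebraMap_end_apply]
      rw [this]
      refine h5.mono ?_
      push_cast
      linarith

/-- Existence of convergent generalized eigenfunctions. -/
lemma exists_eigen {u : Fin n → ℕ} (hu : ∀ i, 0 < u i) (D : Derivation ℂ A A) {w : Fin n → ℝ}
    (hw : ∀ i, 0 < w i)
    (hD : ∀ i, Fil (fun i => (u i : ℝ)) (u i + 1) (T.τ (D (T.x i) - (w i : ℂ) • T.x i)))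
    (i : Fin n) : ∃ (N : ℕ) (y : A), aeval (D : A →ₗ[ℂ] A) ((X - C (w i : ℂ)) ^ N) y = 0 ∧
      Fil (fun i => (u i : ℝ)) (u i + 1) (T.τ (y - T.x i)) := by
  have hu' : ∀ i, (0:ℝ) < (fun i => (u i : ℝ)) i := fun i => Nat.cast_pos.2 (hu i)
  have hpres : ∀ c a, Fil (fun i => (u i : ℝ)) c (T.τ a) →
      Fil (fun i => (u i : ℝ)) c (T.τ (D a)) := by
    intro c a ha
    refine T.fil_D hu' D (fun i => ?_) c a ha
    have e : D (T.x i) = (D (T.x i) - (w i : ℂ) • T.x i) + (w i : ℂ) • T.x i := by ring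
    rw [e, map_add, map_smul]
    exact ((hD i).mono (by simp)).add ((T.fil_x _ i).smul _)
  obtain ⟨c₀, hc₀⟩ := T.surj_D hu' D hw hD (w i)
  obtain ⟨k, hk⟩ := exists_nat_ge (max c₀ (u i + 1))
  obtain ⟨P, hP, hPk⟩ := T.poly_kill hu D hD hpres k
  obtain ⟨q, hq, hq2⟩ := Polynomial.exists_eq_pow_rootMultiplicity_mul_and_not_dvd P hP (w i : ℂ)
  set N := rootMultiplicity (w i : ℂ) P
  have hqr : q.eval (w i : ℂ) ≠ 0 := fun h => hq2 (dvd_iff_isRoot.2 h)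
  set z := (q.eval (w i : ℂ))⁻¹ • aeval (D : A →ₗ[ℂ] A) q (T.x i) with hz
  have hz1 : Fil (fun i => (u i : ℝ)) (u i + 1) (T.τ (z - T.x i)) := by
    obtain ⟨q', hq'⟩ := X_sub_C_dvd_sub_C_eval (a := (w i : ℂ)) (p := q)
    have e : z - T.x i = (q.eval (w i : ℂ))⁻¹ •
        aeval (D : A →ₗ[ℂ] A) q' (D (T.x i) - (w i : ℂ) • T.x i) := by
      have h1 : aeval (D : A →ₗ[ℂ] A) (q - C (q.eval (w i : ℂ))) (T.x i) =
          aeval (D : A →ₗ[ℂ] A) q' (D (T.x i) - (w i : ℂ) • T.x i) := by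
        rw [hq', mul_comm, map_mul, Module.End.mul_apply]
        simp [Module.algebraMap_end_apply]
      rw [← h1, hz, map_sub, LinearMap.sub_apply, smul_sub, aeval_C,
        Module.algebraMap_end_apply, smul_smul, inv_mul_cancel₀ hqr, one_smul]
    rw [e, map_smul]
    exact (T.fil_aeval D _ (hpres _) _ _ (hD i)).smul _
  have hz2 : Fil (fun i => (u i : ℝ)) k (T.τ (aeval (D : A →ₗ[ℂ] A) ((X - C (w i : ℂ)) ^ N) z)) := by
    have := (hPk (T.x i)).smul (q.eval (w i : ℂ))⁻¹
    rw [hq, map_mul, Module.End.mul_apply, ← map_smul, ← map_smul] at this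
    exact this
  obtain ⟨b, hb, hb2⟩ := T.pow_surj D k (w i : ℂ) (hc₀ k ((le_max_left _ _).trans hk)) N _ hz2
  refine ⟨N, z - b, ?_, ?_⟩
  · rw [map_sub, hb2, sub_self]
  · have e : z - b - T.x i = (z - T.x i) - b := by ring
    rw [e, map_sub]
    exact hz1.sub (hb.mono ((le_max_right _ _).trans hk))

end TR
end QH

namespace QH

/-- Weights separating monomials. -/
def lw (i : Fin n) : ℝ := Real.log (Nat.nth Nat.Prime i)

lemma lw_pos (i : Fin n) : 0 < lw i := by
  refine Real.log_pos ?_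
  have := (Nat.prime_nth_prime i).one_lt
  exact_mod_cast this

lemma wt_lw (α : Fin n →₀ ℕ) :
    wt lw α = Real.log ((∏ i : Fin n, (Nat.nth Nat.Prime i) ^ α i : ℕ) : ℝ) := by
  push_cast
  rw [Real.log_prod]
  · unfold wt lw
    refine Finset.sum_congr rfl fun i _ => ?_
    rw [Real.log_pow]
  · intro i _
    have := (Nat.prime_nth_prime i).pos
    positivity

lemma lw_inj : Function.Injective (wt (lw (n := n))) := by
  intro α β h
  rw [wt_lw, wt_lw] at h
  have hp : ∀ γ : Fin n →₀ ℕ, 0 < ∏ i : Fin n, (Nat.nth Nat.Prime i) ^ γ i := fun γ =>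
    Finset.prod_pos fun i _ => pow_pos (Nat.prime_nth_prime i).pos _
  have h2 := Real.log_injOn_pos (Set.mem_Ioi.2 (by exact_mod_cast hp α))
    (Set.mem_Ioi.2 (by exact_mod_cast hp β)) h
  have h3 : ∏ i : Fin n, (Nat.nth Nat.Prime i) ^ α i = ∏ i : Fin n, (Nat.nth Nat.Prime i) ^ β i := by
    exact_mod_cast h2
  have key : ∀ (γ : Fin n →₀ ℕ) (j : Fin n),
      (∏ i : Fin n, (Nat.nth Nat.Prime i) ^ γ i).factorization (Nat.nth Nat.Prime j) = γ j := by
    intro γ j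
    rw [Nat.factorization_prod (S := Finset.univ) (g := fun i : Fin n => Nat.nth Nat.Prime i ^ γ i)
      (fun i _ => (pow_pos (Nat.prime_nth_prime i).pos _).ne')]
    rw [Finsupp.finset_sum_apply, Finset.sum_eq_single j]
    · rw [(Nat.prime_nth_prime j).factorization_pow]; simp
    · intro i _ hij
      rw [(Nat.prime_nth_prime i).factorization_pow, Finsupp.single_apply, if_neg]
      intro h
      have := Nat.nth_injective Nat.infinite_setOf_prime h
      exact hij (Fin.ext this)
    · simp
  ext j
  rw [← key α j, ← key β j, h3]

lemma gap {u : Fin n → ℝ} (hu : ∀ i, 0 < u i) {c : ℝ} {F : MvPowerSeries (Fin n) ℂ}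
    (h : ∀ α, MvPowerSeries.coeff α F ≠ 0 → c < wt u α) : ∃ c', c < c' ∧ Fil u c' F := by
  classical
  set S := (low hu (c + 1)).filter fun α => MvPowerSeries.coeff α F ≠ 0
  by_cases hS : S.Nonempty
  · obtain ⟨α, hα, hmin⟩ := Finset.exists_min_image S (wt u) hS
    have hα' := Finset.mem_filter.1 hα
    refine ⟨wt u α, h α hα'.2, fun β hβ => ?_⟩
    by_cases hb : wt u β ≤ c + 1
    · exact hmin β (Finset.mem_filter.2 ⟨(mem_low _ _ _).2 hb, hβ⟩)
    · exact ((mem_low _ _ _).1 hα'.1).trans (not_le.1 hb).le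
  · refine ⟨c + 1, by linarith, fun β hβ => ?_⟩
    by_contra hb
    exact hS ⟨β, Finset.mem_filter.2 ⟨(mem_low _ _ _).2 (not_le.1 hb).le, hβ⟩⟩

lemma coeff_mul_eq (β : Fin n →₀ ℕ) (Q E : MvPowerSeries (Fin n) ℂ) (S : Finset (Fin n →₀ ℕ))
    (hS : ∀ γ, MvPowerSeries.coeff γ Q ≠ 0 →
      MvPowerSeries.coeff β (MvPowerSeries.monomial γ 1 * E) ≠ 0 → γ ∈ S) :
    MvPowerSeries.coeff β (Q * E) = ∑ γ ∈ S, MvPowerSeries.coeff γ Q *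
      MvPowerSeries.coeff β (MvPowerSeries.monomial γ 1 * E) := by
  classical
  have hc : ∀ p : (Fin n →₀ ℕ) × (Fin n →₀ ℕ), p.1 + p.2 = β →
      MvPowerSeries.coeff β (MvPowerSeries.monomial p.1 1 * E) = MvPowerSeries.coeff p.2 E := by
    rintro p rfl
    rw [MvPowerSeries.coeff_add_monomial_mul, one_mul]
  rw [MvPowerSeries.coeff_mul]
  refine Finset.sum_bij_ne_zero (fun p _ _ => p.1) ?_ ?_ ?_ ?_
  · intro p hp h
    rw [Finset.HasAntidiagonal.mem_antidiagonal] at hp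
    refine hS _ (left_ne_zero_of_mul h) ?_
    rw [hc p hp]; exact right_ne_zero_of_mul h
  · intro p hp _ q hq _ h
    rw [Finset.HasAntidiagonal.mem_antidiagonal] at hp hq
    refine Prod.ext h ?_
    rw [← hq, h] at hp
    exact add_left_cancel hp
  · intro γ _ h
    have h2 := right_ne_zero_of_mul h
    rw [MvPowerSeries.coeff_monomial_mul] at h2
    split_ifs at h2 with h3
    · have e : γ + (β - γ) = β := add_tsub_cancel_of_le h3
      refine ⟨(γ, β - γ), Finset.HasAntidiagonal.mem_antidiagonal.2 e, ?_, rfl⟩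
      have := hc (γ, β - γ) e
      simp only at this ⊢
      rw [← this]; exact h
    · exact absurd rfl h2
  · intro p hp _
    rw [Finset.HasAntidiagonal.mem_antidiagonal] at hp
    rw [hc p hp]

namespace TR
variable {A : Type*} [CommRing A] [Algebra ℂ A] (T : TR n A)

/-- `α` is the initial exponent of `f`. -/
def Init (u : Fin n → ℝ) (f : A) (α : Fin n →₀ ℕ) : Prop :=
  T.co α f ≠ 0 ∧ ∀ β, T.co β f ≠ 0 → β ≠ α → wt u α < wt u β

lemma exists_init {u : Fin n → ℝ} (hu : ∀ i, 0 < u i) (hinj : Function.Injective (wt u))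
    {f : A} (hf : f ≠ 0) : ∃ α, T.Init u f α := by
  classical
  have : ∃ α, T.co α f ≠ 0 := by
    by_contra! h
    exact hf (T.ext_co fun α => by rw [h α, co_zero])
  obtain ⟨α₀, h0⟩ := this
  set S := (low hu (wt u α₀)).filter fun α => T.co α f ≠ 0
  obtain ⟨α, hα, hmin⟩ := Finset.exists_min_image S (wt u)
    ⟨α₀, Finset.mem_filter.2 ⟨(mem_low _ _ _).2 le_rfl, h0⟩⟩
  have hα' := Finset.mem_filter.1 hα
  refine ⟨α, hα'.2, fun β hβ hne => lt_of_le_of_ne ?_ fun h => hne (hinj h).symm⟩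
  by_cases hb : wt u β ≤ wt u α₀
  · exact hmin β (Finset.mem_filter.2 ⟨(mem_low _ _ _).2 hb, hβ⟩)
  · exact ((mem_low _ _ _).1 hα'.1).trans (not_le.1 hb).le

lemma divide {u : Fin n → ℝ} (hu : ∀ i, 0 < u i) {m : ℕ} (f : Fin m → A)
    (al : Fin m → Fin n →₀ ℕ) (hf : ∀ j, T.Init u (f j) (al j)) (a : A) :
    ∃ (q : Fin m → A) (r : A), a = ∑ j, q j * f j + r ∧
      ∀ β, T.co β r ≠ 0 → ∀ j, ¬ al j ≤ β := by
  classical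
  set e : Fin m → A := fun j => (T.co (al j) (f j))⁻¹ • f j - T.mon (al j) with he
  have hco : ∀ j β, T.co β (e j) ≠ 0 → wt u (al j) < wt u β := by
    intro j β h
    rw [he] at h
    simp only [co_sub, co_smul, co_mon] at h
    have hne : β ≠ al j := by
      rintro rfl
      rw [inv_mul_cancel₀ (hf j).1] at h
      simp at h
    rw [if_neg hne, sub_zero] at h
    exact (hf j).2 β (right_ne_zero_of_mul h) hne
  have hs : ∀ j, ∃ s₀, ∀ s, s₀ ≤ s →
      NB u s (T.τ (e j)) (1 / 2 * Real.exp (-(s * wt u (al j)))) := by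
    intro j
    obtain ⟨c', h1, h2⟩ := gap hu (F := T.τ (e j)) (hco j)
    exact small_tail (T.conv _) hu h1 h2 (by norm_num)
  choose s₀ hs₀ using hs
  obtain ⟨s₁, C, hC⟩ := (T.conv a).exists_NB hu
  set s := max s₁ (∑ j, |s₀ j|) with hsdef
  have hse : ∀ j, NB u s (T.τ (e j)) (1 / 2 * Real.exp (-(s * wt u (al j)))) := by
    intro j
    refine hs₀ j s ((le_abs_self _).trans (le_trans ?_ (le_max_right _ _)))
    exact Finset.single_le_sum (f := fun j => |s₀ j|) (fun _ _ => abs_nonneg _) (Finset.mem_univ j)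
  have hsa : NB u s (T.τ a) C := hC s (le_max_left _ _)
  set sel : (Fin n →₀ ℕ) → Option (Fin m) := fun α =>
    if h : ∃ j, al j ≤ α then some h.choose else none with hsel
  have sel_some : ∀ α j, sel α = some j → al j ≤ α := by
    intro α j h
    rw [hsel] at h
    simp only at h
    split_ifs at h with h1
    · have := h1.choose_spec
      rw [Option.some.inj h] at this
      exact this
  have sel_none : ∀ α, sel α = none → ∀ j, ¬ al j ≤ α := by
    intro α h j hj
    rw [hsel] at h
    simp only at h
    split_ifs at h with h1
    exact h1 ⟨j, hj⟩
  set K : (Fin n →₀ ℕ) → MvPowerSeries (Fin n) ℂ := fun α =>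
    match sel α with
    | some j => MvPowerSeries.monomial (α - al j) 1 * T.τ (e j)
    | none => 0 with hKdef
  have K_some : ∀ α j, sel α = some j →
      K α = MvPowerSeries.monomial (α - al j) 1 * T.τ (e j) := by
    intro α j h; simp only [hKdef, h]
  have K_none : ∀ α, sel α = none → K α = 0 := by
    intro α h; simp only [hKdef, h]
  have hmul : ∀ γ j β, MvPowerSeries.coeff β (MvPowerSeries.monomial γ 1 * T.τ (e j)) ≠ 0 →
      wt u (γ + al j) < wt u β := by
    intro γ j β h
    rw [MvPowerSeries.coeff_monomial_mul] at h
    split_ifs at h with h3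
    · rw [one_mul] at h
      have h4 := hco j _ h
      have e : γ + (β - γ) = β := add_tsub_cancel_of_le h3
      rw [← e, wt_add, wt_add]
      linarith
    · exact absurd rfl h
  obtain ⟨g, hg, hgeq⟩ := perturb hu (s := s) K (by
    intro α β h
    cases hsα : sel α with
    | none => rw [K_none α hsα] at h; simp at h
    | some j =>
      rw [K_some α j hsα] at h
      have := hmul _ _ _ h
      rwa [tsub_add_cancel_of_le (sel_some α j hsα)] at this) (by
    intro α
    cases hsα : sel α with
    | none => rw [K_none α hsα]; exact (NB_zero u s).mono (by positivity)
    | some j =>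
      rw [K_some α j hsα]
      refine ((NB_monomial u s _).mul (hse j)).mono (le_of_eq ?_)
      have e : wt u α = wt u (α - al j) + wt u (al j) := by
        rw [← wt_add, tsub_add_cancel_of_le (sel_some α j hsα)]
      rw [e, mul_add, neg_add, Real.exp_add]; ring) (T.τ a) hsa
  have hQ : ∀ j, ∃ q : A, ∀ γ, T.co γ q =
      if sel (γ + al j) = some j then MvPowerSeries.coeff (γ + al j) g else 0 := by
    intro j
    have : NB u s ((fun γ => if sel (γ + al j) = some j then
        MvPowerSeries.coeff (γ + al j) g else 0 : MvPowerSeries (Fin n) ℂ))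
        (Real.exp (s * wt u (al j)) * (2 * C)) := by
      intro S
      refine le_trans ?_ (mul_le_mul_of_nonneg_left (hg (S.map
        (addRightEmbedding (al j)))) (Real.exp_pos _).le)
      rw [Finset.sum_map, Finset.mul_sum]
      refine Finset.sum_le_sum fun β _ => ?_
      change ‖(if sel (β + al j) = some j then MvPowerSeries.coeff (β + al j) g else 0)‖ * _ ≤ _
      have e : Real.exp (-(s * wt u β)) =
          Real.exp (s * wt u (al j)) * Real.exp (-(s * wt u (β + al j))) := by
        rw [wt_add, ← Real.exp_add]; congr 1; ring
      split_ifs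
      · rw [e, mul_left_comm]; rfl
      · simp only [norm_zero, zero_mul]; positivity
    obtain ⟨b, hb⟩ := T.exists_of_NB this
    exact ⟨b, fun β => by rw [co, hb]; rfl⟩
  choose q hq using hQ
  have hR : ∃ r : A, ∀ γ, T.co γ r = if sel γ = none then MvPowerSeries.coeff γ g else 0 := by
    have : NB u s ((fun γ => if sel γ = none then
        MvPowerSeries.coeff γ g else 0 : MvPowerSeries (Fin n) ℂ)) (2 * C) := by
      intro S
      refine le_trans ?_ (hg S)
      refine Finset.sum_le_sum fun β _ => ?_
      change ‖(if sel β = none then MvPowerSeries.coeff β g else 0)‖ * _ ≤ _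
      split_ifs
      · rfl
      · simp only [norm_zero, zero_mul]; positivity
    obtain ⟨b, hb⟩ := T.exists_of_NB this
    exact ⟨b, fun β => by rw [co, hb]; rfl⟩
  obtain ⟨r, hr⟩ := hR
  refine ⟨fun j => (T.co (al j) (f j))⁻¹ • q j, r, ?_, ?_⟩
  · have e1 : ∀ j, (T.co (al j) (f j))⁻¹ • q j * f j = q j * T.mon (al j) + q j * e j := by
      intro j
      simp only [he, Algebra.smul_def]; ring
    simp only [e1]
    refine T.ext_co fun β => ?_
    rw [co_add, co_sum, hr]
    simp only [co_add]
    rw [Finset.sum_add_distrib]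
    have p1 : ∀ j, T.co β (q j * T.mon (al j)) =
        if sel β = some j then MvPowerSeries.coeff β g else 0 := by
      intro j
      rw [mul_comm, co, map_mul, τ_mon, MvPowerSeries.coeff_monomial_mul]
      split_ifs with h1 h2 h2
      · have := hq j (β - al j)
        rw [tsub_add_cancel_of_le h1, if_pos h2] at this
        rw [one_mul]; exact this
      · have := hq j (β - al j)
        rw [tsub_add_cancel_of_le h1, if_neg h2] at this
        rw [one_mul]; exact this
      · exact absurd (sel_some _ _ h2) h1
      · rfl
    have p2 : ∀ j, T.co β (q j * e j) = ∑ α ∈ low hu (wt u β),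
        if sel α = some j then MvPowerSeries.coeff α g * MvPowerSeries.coeff β (K α) else 0 := by
      intro j
      rw [co, map_mul, coeff_mul_eq β _ _
        (((low hu (wt u β)).filter fun α => sel α = some j).image fun α => α - al j)]
      · rw [Finset.sum_image, Finset.sum_filter]
        · refine Finset.sum_congr rfl fun α _ => ?_
          split_ifs with h
          · rw [K_some α j h]
            have := hq j (α - al j)
            rw [tsub_add_cancel_of_le (sel_some α j h), if_pos h] at this
            rw [← this]; rfl
          · rfl
        · intro α hα α' hα' h
          have h1 := sel_some _ _ (Finset.mem_filter.1 hα).2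
          have h2 := sel_some _ _ (Finset.mem_filter.1 hα').2
          rw [← tsub_add_cancel_of_le h1, ← tsub_add_cancel_of_le h2]
          simp only at h
          rw [h]
      · intro γ h1 h2
        have h3 : T.co γ (q j) ≠ 0 := h1
        rw [hq] at h3
        split_ifs at h3 with h4
        · refine Finset.mem_image.2 ⟨γ + al j, Finset.mem_filter.2
            ⟨(mem_low _ _ _).2 (hmul _ _ _ h2).le, h4⟩, ?_⟩
          simp
        · exact absurd rfl h3
    simp only [p1, p2]
    rw [Finset.sum_comm]
    have e3 : T.co β a = _ := hgeq β
    rw [e3]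
    have e4 : ∀ α ∈ low hu (wt u β), MvPowerSeries.coeff α g * MvPowerSeries.coeff β (K α) =
        ∑ j, if sel α = some j then
          MvPowerSeries.coeff α g * MvPowerSeries.coeff β (K α) else 0 := by
      intro α _
      cases hsα : sel α with
      | none => rw [K_none α hsα]; simp
      | some j => simp
    rw [← Finset.sum_congr rfl e4]
    have e5 : MvPowerSeries.coeff β g = (∑ j, if sel β = some j then
        MvPowerSeries.coeff β g else 0) + if sel β = none then MvPowerSeries.coeff β g else 0 := by
      cases hsβ : sel β with
      | none => simp
      | some j => simp
    conv_lhs => rw [e5]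
    ring
  · intro β h
    rw [hr] at h
    split_ifs at h with h1
    · exact sel_none β h1
    · exact absurd rfl h

/-- `(f, al)` is a standard basis of `I`. -/
def IsSB (u : Fin n → ℝ) (I : Ideal A) {m : ℕ} (f : Fin m → A)
    (al : Fin m → Fin n →₀ ℕ) : Prop :=
  (∀ j, f j ∈ I) ∧ (∀ j, T.Init u (f j) (al j)) ∧
    ∀ g ∈ I, ∀ α, T.Init u g α → ∃ j, al j ≤ α

lemma exists_SB (u : Fin n → ℝ) (I : Ideal A) :
    ∃ (m : ℕ) (f : Fin m → A) (al : Fin m → Fin n →₀ ℕ), T.IsSB u I f al := by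
  classical
  set L : Set (Fin n →₀ ℕ) := {α | ∃ f ∈ I, T.Init u f α}
  have hfin : {α | Minimal (· ∈ L) α}.Finite := by
    have h1 : IsAntichain (· ≤ ·) {α | Minimal (· ∈ L) α} := setOfPred_minimal_antichain _
    have h2 : ({α | Minimal (· ∈ L) α} : Set (Fin n →₀ ℕ)).IsPWO := Set.isPWO_of_wellQuasiOrderedLE _
    exact h1.finite_of_partiallyWellOrderedOn h2
  set M := hfin.toFinset
  have hM : ∀ α ∈ M, ∃ f ∈ I, T.Init u f α := fun α h => by
    have : Minimal (· ∈ L) α := hfin.mem_toFinset.1 h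
    exact this.1
  set al : Fin M.card → Fin n →₀ ℕ := fun j => (M.equivFin.symm j : Fin n →₀ ℕ)
  have hal : ∀ j, ∃ f ∈ I, T.Init u f (al j) := fun j => hM _ (M.equivFin.symm j).2
  choose f hfI hf using hal
  refine ⟨M.card, f, al, hfI, hf, fun g hg α hα => ?_⟩
  obtain ⟨β, hle, hmin⟩ := exists_minimal_le_of_wellFoundedLT (· ∈ L) α ⟨g, hg, hα⟩
  refine ⟨M.equivFin ⟨β, hfin.mem_toFinset.2 hmin⟩, ?_⟩
  simpa [al] using hle

lemma mem_span_of_SB {u : Fin n → ℝ} (hu : ∀ i, 0 < u i) (hinj : Function.Injective (wt u))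
    {I : Ideal A} {m : ℕ} {f : Fin m → A} {al : Fin m → Fin n →₀ ℕ} (h : T.IsSB u I f al)
    {a : A} (ha : ∀ K : ℕ, ∃ g ∈ I, Fil (fun _ => 1) K (T.τ (a - g))) :
    a ∈ Ideal.span (Set.range f) := by
  classical
  obtain ⟨q, r, hqr, hr⟩ := T.divide hu f al h.2.1 a
  have hmem : ∑ j, q j * f j ∈ Ideal.span (Set.range f) :=
    Ideal.sum_mem _ fun j _ => Ideal.mul_mem_left _ _ (Ideal.subset_span ⟨j, rfl⟩)
  have hI : Ideal.span (Set.range f) ≤ I := by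
    rw [Ideal.span_le]; rintro _ ⟨j, rfl⟩; exact h.1 j
  by_cases h0 : r = 0
  · rw [hqr, h0, add_zero]; exact hmem
  exfalso
  obtain ⟨α, hα⟩ := T.exists_init hu hinj h0
  obtain ⟨g, hg, hfil⟩ := ha (∑ β ∈ low hu (wt u α), (∑ i, β i) + 1)
  have hco : ∀ β, wt u β ≤ wt u α → T.co β (a - g) = 0 := by
    intro β hβ
    by_contra hne
    have h1 := hfil β hne
    rw [wt_one_nat] at h1
    have h2 : ∑ β ∈ low hu (wt u α), (∑ i, β i) + 1 ≤ ∑ i, β i := by exact_mod_cast h1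
    have h3 := Finset.single_le_sum (f := fun β : Fin n →₀ ℕ => ∑ i, β i) (fun _ _ => Nat.zero_le _)
      ((mem_low hu _ _).2 hβ)
    omega
  have hco' : ∀ β, wt u β ≤ wt u α → T.co β (g - ∑ j, q j * f j) = T.co β r := by
    intro β hβ
    have e : r = (a - g) + (g - ∑ j, q j * f j) := by rw [hqr]; ring
    rw [e, co_add, hco β hβ, zero_add]
  obtain ⟨j, hj⟩ := h.2.2 (g - ∑ j, q j * f j) (I.sub_mem hg (hI hmem)) α ⟨by
      rw [hco' α le_rfl]; exact hα.1, fun β hβ hne => by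
      by_contra hlt
      rw [hco' β (not_lt.1 hlt)] at hβ
      exact hlt (hα.2 β hβ hne)⟩
  exact hr α hα.1 j hj

lemma span_of_SB {u : Fin n → ℝ} (hu : ∀ i, 0 < u i) (hinj : Function.Injective (wt u))
    {I : Ideal A} {m : ℕ} {f : Fin m → A} {al : Fin m → Fin n →₀ ℕ} (h : T.IsSB u I f al) :
    Ideal.span (Set.range f) = I := by
  refine le_antisymm ?_ fun a ha => T.mem_span_of_SB hu hinj h fun K =>
    ⟨a, ha, by rw [sub_self, map_zero]; exact Fil_zero _ _⟩
  rw [Ideal.span_le]; rintro _ ⟨j, rfl⟩; exact h.1 j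

/-- Ideals are closed. -/
lemma mem_of_approx (I : Ideal A) {a : A}
    (ha : ∀ K : ℕ, ∃ g ∈ I, Fil (fun _ => 1) K (T.τ (a - g))) : a ∈ I := by
  obtain ⟨m, f, al, h⟩ := T.exists_SB lw I
  have := T.mem_span_of_SB lw_pos lw_inj h ha
  rwa [T.span_of_SB lw_pos lw_inj h] at this

end TR
end QH

namespace QH
namespace TR
variable {A : Type*} [CommRing A] [Algebra ℂ A] (T : TR n A)

lemma aeval_XC (D : Derivation ℂ A A) (c : ℂ) (f : A) :
    aeval (D : A →ₗ[ℂ] A) (X - C c) f = D f - c • f := by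
  simp [Module.algebraMap_end_apply]

lemma aeval_XC_succ (D : Derivation ℂ A A) (c : ℂ) (N : ℕ) (f : A) :
    aeval (D : A →ₗ[ℂ] A) ((X - C c) ^ (N + 1)) f =
      aeval (D : A →ₗ[ℂ] A) ((X - C c) ^ N) (D f - c • f) := by
  rw [pow_succ, map_mul, Module.End.mul_apply, aeval_XC]

lemma gen_mul (D : Derivation ℂ A A) (a b : ℂ) (k : ℕ) : ∀ (i j : ℕ) (f g : A), i + j ≤ k →
    aeval (D : A →ₗ[ℂ] A) ((X - C a) ^ i) f = 0 →
    aeval (D : A →ₗ[ℂ] A) ((X - C b) ^ j) g = 0 →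
    aeval (D : A →ₗ[ℂ] A) ((X - C (a + b)) ^ k) (f * g) = 0 := by
  induction k with
  | zero =>
    intro i j f g h hf _
    obtain rfl : i = 0 := by omega
    have : f = 0 := by simpa using hf
    simp [this]
  | succ k ih =>
    intro i j f g h hf hg
    rcases i with _ | i
    · have : f = 0 := by simpa using hf
      simp [this]
    rcases j with _ | j
    · have : g = 0 := by simpa using hg
      simp [this]
    rw [aeval_XC_succ, leib, map_add]
    have h1 := ih (i + 1) j f (D g - b • g) (by omega) hf (by rw [← aeval_XC_succ]; exact hg)
    have h2 := ih i (j + 1) (D f - a • f) g (by omega) (by rw [← aeval_XC_succ]; exact hf) hg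
    rw [mul_comm g, h1, h2, add_zero]

lemma gen_mon (D : Derivation ℂ A A) {w : Fin n → ℝ}
    (hN : ∀ i, ∃ N, aeval (D : A →ₗ[ℂ] A) ((X - C (w i : ℂ)) ^ N) (T.x i) = 0)
    (α : Fin n →₀ ℕ) :
    ∃ N, aeval (D : A →ₗ[ℂ] A) ((X - C ((wt w α : ℝ) : ℂ)) ^ N) (T.mon α) = 0 := by
  refine T.mon_induct (fun a α => ∃ N,
    aeval (D : A →ₗ[ℂ] A) ((X - C ((wt w α : ℝ) : ℂ)) ^ N) a = 0) ?_ ?_ ?_ α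
  · exact ⟨1, by rw [pow_one, aeval_XC, wt_zero]; simp⟩
  · rintro a b α β ⟨i, hi⟩ ⟨j, hj⟩
    refine ⟨i + j, ?_⟩
    rw [wt_add, Complex.ofReal_add]
    exact gen_mul D _ _ _ i j a b le_rfl hi hj
  · intro i
    rw [wt_single]
    simpa only [Nat.cast_one, one_mul] using hN i

lemma aeval_mem (D : Derivation ℂ A A) (I : Ideal A) (hI : ∀ f ∈ I, D f ∈ I) (P : ℂ[X]) :
    ∀ f ∈ I, aeval (D : A →ₗ[ℂ] A) P f ∈ I := by
  have hs : ∀ (c : ℂ), ∀ f ∈ I, c • f ∈ I := fun c f hf => by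
    rw [Algebra.smul_def]; exact I.mul_mem_left _ hf
  induction P using Polynomial.induction_on with
  | C a => intro b hb; simpa [Module.algebraMap_end_apply] using hs a b hb
  | add p q hp hq => intro b hb; simpa using I.add_mem (hp b hb) (hq b hb)
  | monomial k a ih =>
    intro b hb
    have e : (aeval (D : A →ₗ[ℂ] A)) (C a * X ^ (k + 1)) b =
        (aeval (D : A →ₗ[ℂ] A)) (C a * X ^ k) (D b) := by
      rw [pow_succ, ← mul_assoc, map_mul, Module.End.mul_apply, aeval_X]
      rfl
    rw [e]
    exact ih _ (hI b hb)

/-- Weighted homogeneous component. -/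
def comp {w : Fin n → ℝ} (hw : ∀ i, 0 < w i) (lam : ℝ) (f : A) : A :=
  ∑ α ∈ (low hw lam).filter (fun α => wt w α = lam), T.co α f • T.mon α

lemma co_comp {w : Fin n → ℝ} (hw : ∀ i, 0 < w i) (lam : ℝ) (f : A) (β : Fin n →₀ ℕ) :
    T.co β (T.comp hw lam f) = if wt w β = lam then T.co β f else 0 := by
  classical
  unfold comp
  rw [co_sum]
  simp only [co_smul, co_mon, mul_ite, mul_one, mul_zero]
  rw [Finset.sum_ite_eq]
  refine if_congr ?_ rfl rfl
  rw [Finset.mem_filter, mem_low]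
  exact ⟨fun h => h.2, fun h => ⟨h.le, h⟩⟩

lemma comp_mem (D : Derivation ℂ A A) {w : Fin n → ℝ} (hw : ∀ i, 0 < w i)
    (hD : ∀ i, Fil (fun _ => 1) 1 (T.τ (D (T.x i))))
    (hN : ∀ i, ∃ N, aeval (D : A →ₗ[ℂ] A) ((X - C (w i : ℂ)) ^ N) (T.x i) = 0)
    (I : Ideal A) (hI : ∀ f ∈ I, D f ∈ I) (lam : ℝ) (f : A) (hf : f ∈ I) :
    T.comp hw lam f ∈ I := by
  classical
  refine T.mem_of_approx I fun K => ?_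
  choose N hN' using T.gen_mon D hN
  set S₁ := (low hw lam).filter (fun α => wt w α = lam) with hS₁
  set S₂ := (low (u := fun _ : Fin n => 1) (fun _ => one_pos) (K : ℝ)).filter
    (fun α => wt w α ≠ lam) with hS₂
  set A0 : ℂ[X] := (X - C (lam : ℂ)) ^ (∑ α ∈ S₁, N α) with hA0
  set B : ℂ[X] := ∏ α ∈ S₂, (X - C ((wt w α : ℝ) : ℂ)) ^ N α with hB
  have hcop : IsCoprime A0 B := by
    refine IsCoprime.prod_right fun α hα => ?_
    refine IsCoprime.pow ?_
    refine isCoprime_X_sub_C_of_isUnit_sub ?_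
    rw [isUnit_iff_ne_zero, sub_ne_zero]
    intro h
    exact (Finset.mem_filter.1 hα).2 (Complex.ofReal_injective h.symm)
  obtain ⟨p, q, hpq⟩ := hcop
  set L := (D : A →ₗ[ℂ] A) with hL
  have hdvd : ∀ (P Q : ℂ[X]) (g : A), P ∣ Q → aeval L P g = 0 → aeval L Q g = 0 := by
    rintro P _ g ⟨R, rfl⟩ h
    rw [mul_comm, map_mul, Module.End.mul_apply, h, map_zero]
  have h1 : ∀ α ∈ S₁, aeval L (q * B) (T.mon α) = T.mon α := by
    intro α hα
    have e : q * B = 1 - p * A0 := by rw [← hpq]; ring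
    have hl : wt w α = lam := (Finset.mem_filter.1 hα).2
    have h2 : aeval L (p * A0) (T.mon α) = 0 := by
      refine hdvd _ _ _ ?_ (hN' α)
      rw [hl]
      exact Dvd.dvd.mul_left (pow_dvd_pow _ (Finset.single_le_sum (f := N)
        (fun _ _ => Nat.zero_le _) hα)) _
    rw [e, map_sub, LinearMap.sub_apply, h2, sub_zero, map_one, Module.End.one_apply]
  have h2 : ∀ α ∈ S₂, aeval L (q * B) (T.mon α) = 0 := fun α hα =>
    hdvd _ _ _ (Dvd.dvd.mul_left (Finset.dvd_prod_of_mem _ hα) _) (hN' α)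
  have hdis : Disjoint S₁ S₂ := Finset.disjoint_left.2 fun α h h' =>
    (Finset.mem_filter.1 h').2 (Finset.mem_filter.1 h).2
  set r := f - ∑ α ∈ S₁ ∪ S₂, T.co α f • T.mon α with hr
  have hrf : Fil (fun _ => 1) K (T.τ r) := by
    intro β hβ
    have hβ' : T.co β r ≠ 0 := hβ
    rw [hr, co_rest] at hβ'
    by_contra hlt
    refine hβ' (if_pos ?_)
    by_cases hl : wt w β = lam
    · exact Finset.mem_union_left _ (Finset.mem_filter.2 ⟨(mem_low _ _ _).2 hl.le, hl⟩)
    · exact Finset.mem_union_right _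
        (Finset.mem_filter.2 ⟨(mem_low _ _ _).2 (not_le.1 hlt).le, hl⟩)
  refine ⟨aeval L (q * B) f, aeval_mem D I hI _ f hf, ?_⟩
  have e : T.comp hw lam f - aeval L (q * B) f = - aeval L (q * B) r := by
    have e1 : f = (∑ α ∈ S₁ ∪ S₂, T.co α f • T.mon α) + r := by rw [hr]; ring
    have e2 : aeval L (q * B) f = T.comp hw lam f + aeval L (q * B) r := by
      conv_lhs => rw [e1]
      rw [map_add, map_sum, Finset.sum_union hdis]
      congr 1
      have : ∑ α ∈ S₂, aeval L (q * B) (T.co α f • T.mon α) = 0 :=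
        Finset.sum_eq_zero fun α hα => by rw [map_smul, h2 α hα, smul_zero]
      rw [this, add_zero]
      unfold comp
      exact Finset.sum_congr rfl fun α hα => by rw [map_smul, h1 α hα]
    rw [e2]; ring
  rw [e, map_neg]
  exact (T.fil_aeval D K (T.fil_D_nat D hD K) _ _ hrf).neg

lemma hom_gens (D : Derivation ℂ A A) {w : Fin n → ℝ} (hw : ∀ i, 0 < w i)
    (hD : ∀ i, Fil (fun _ => 1) 1 (T.τ (D (T.x i))))
    (hN : ∀ i, ∃ N, aeval (D : A →ₗ[ℂ] A) ((X - C (w i : ℂ)) ^ N) (T.x i) = 0)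
    (I : Ideal A) (hI : ∀ f ∈ I, D f ∈ I) (h1 : (1 : A) ∉ I) :
    ∃ (m : ℕ) (h : Fin m → A) (al : Fin m → Fin n →₀ ℕ), Ideal.span (Set.range h) = I ∧
      ∀ j, al j ≠ 0 ∧ ∀ β, T.co β (h j) ≠ 0 → wt w β = wt w (al j) := by
  obtain ⟨m, f, al, hf⟩ := T.exists_SB lw I
  set h : Fin m → A := fun j => T.comp hw (wt w (al j)) (f j) with hh
  have hhI : ∀ j, h j ∈ I := fun j => T.comp_mem D hw hD hN I hI _ _ (hf.1 j)
  have hco : ∀ j β, T.co β (h j) = if wt w β = wt w (al j) then T.co β (f j) else 0 :=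
    fun j β => T.co_comp hw _ _ β
  have hwt : ∀ j β, T.co β (h j) ≠ 0 → wt w β = wt w (al j) := by
    intro j β hne
    rw [hco] at hne
    by_contra hc
    exact hne (if_neg hc)
  have hinit : ∀ j, T.Init lw (h j) (al j) := by
    intro j
    refine ⟨?_, fun β hβ hne => ?_⟩
    · rw [hco, if_pos rfl]; exact (hf.2.1 j).1
    · have := hwt j β hβ
      rw [hco, if_pos this] at hβ
      exact (hf.2.1 j).2 β hβ hne
  have hSB : T.IsSB lw I h al := ⟨hhI, hinit, hf.2.2⟩
  refine ⟨m, h, al, T.span_of_SB lw_pos lw_inj hSB, fun j => ⟨fun h0 => ?_, hwt j⟩⟩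
  have hne : T.co 0 (h j) ≠ 0 := by
    have := (hinit j).1
    rwa [h0] at this
  have e : h j = T.co 0 (h j) • (1 : A) := by
    refine T.ext_co fun β => ?_
    rw [← T.mon_zero, co_smul, co_mon]
    by_cases hβ : β = 0
    · rw [if_pos hβ, mul_one, hβ]
    · rw [if_neg hβ, mul_zero]
      by_contra hc
      have h3 := hwt j β hc
      rw [h0, wt_zero] at h3
      exact (wt_pos hw hβ).ne' h3
  refine h1 ?_
  have e2 : (1 : A) = algebraMap ℂ A (T.co 0 (h j))⁻¹ * h j := by
    rw [e, ← Algebra.smul_def, co_smul, ← T.mon_zero, co_mon, if_pos rfl, mul_one, smul_smul,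
      inv_mul_cancel₀ hne, one_smul]
  rw [e2]
  exact I.mul_mem_left _ (hhI j)

end TR
end QH

namespace QH

/-- Evaluation of a monomial. -/
def mev (α : Fin n →₀ ℕ) (x : Fin n → ℂ) : ℂ := ∏ i, x i ^ α i

lemma mev_add (α β : Fin n →₀ ℕ) (x : Fin n → ℂ) : mev (α + β) x = mev α x * mev β x := by
  simp [mev, pow_add, Finset.prod_mul_distrib]

lemma mev_zero (x : Fin n → ℂ) : mev 0 x = 1 := by simp [mev]

lemma mev_single (i : Fin n) (x : Fin n → ℂ) : mev (Finsupp.single i 1) x = x i := by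
  unfold mev
  rw [Finset.prod_eq_single i]
  · simp
  · intro j _ hj
    simp [Ne.symm hj]
  · simp

/-- Total degree. -/
def deg (α : Fin n →₀ ℕ) : ℕ := ∑ i, α i

lemma deg_add (α β : Fin n →₀ ℕ) : deg (α + β) = deg α + deg β := by
  simp [deg, Finset.sum_add_distrib]

lemma deg_single (i : Fin n) : deg (Finsupp.single i 1) = 1 := by
  unfold deg
  rw [Finset.sum_eq_single i]
  · simp
  · intro j _ hj
    simp [Ne.symm hj]
  · simp

lemma wt_deg (α : Fin n →₀ ℕ) : wt (fun _ => 1) α = (deg α : ℝ) := TR.wt_one_nat α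

/-- Exponents of degree `k`. -/
def fib (n k : ℕ) : Finset (Fin n →₀ ℕ) := Finset.univ.finsuppAntidiag k

lemma mem_fib {k : ℕ} {α : Fin n →₀ ℕ} : α ∈ fib n k ↔ deg α = k := by
  simp [fib, Finset.mem_finsuppAntidiag, deg]

/-- Evaluation of a power series. -/
def evf (F : MvPowerSeries (Fin n) ℂ) (x : Fin n → ℂ) : ℂ :=
  ∑' α, MvPowerSeries.coeff α F * mev α x

lemma norm_mev_le {s : ℝ} {x : Fin n → ℂ} (hx : ‖x‖ ≤ Real.exp (-s)) (α : Fin n →₀ ℕ) :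
    ‖mev α x‖ ≤ Real.exp (-(s * wt (fun _ => 1) α)) := by
  unfold mev
  rw [norm_prod]
  have : Real.exp (-(s * wt (fun _ => 1) α)) = ∏ i, (Real.exp (-s)) ^ α i := by
    rw [wt_deg, deg, Finset.prod_pow_eq_pow_sum, ← Real.exp_nat_mul]
    congr 1; ring
  rw [this]
  refine Finset.prod_le_prod (fun _ _ => norm_nonneg _) fun i _ => ?_
  rw [norm_pow]
  exact pow_le_pow_left₀ (norm_nonneg _) ((norm_le_pi_norm x i).trans hx) _

lemma summable_of_NB {s : ℝ} {F : MvPowerSeries (Fin n) ℂ} {C : ℝ} (h : NB (fun _ => 1) s F C)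
    {x : Fin n → ℂ} (hx : ‖x‖ ≤ Real.exp (-s)) :
    Summable fun α => ‖MvPowerSeries.coeff α F * mev α x‖ := by
  refine summable_of_sum_le (c := C) (fun _ => norm_nonneg _) fun S => ?_
  refine (Finset.sum_le_sum fun α _ => ?_).trans (h S)
  rw [norm_mul]
  exact mul_le_mul_of_nonneg_left (norm_mev_le hx α) (norm_nonneg _)

lemma summable_ev {F : MvPowerSeries (Fin n) ℂ} (h : IsConv F) :
    ∀ᶠ x in 𝓝 (0 : Fin n → ℂ), Summable fun α => ‖MvPowerSeries.coeff α F * mev α x‖ := by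
  obtain ⟨s, C, h⟩ := h
  have : Metric.ball (0 : Fin n → ℂ) (Real.exp (-s)) ∈ 𝓝 (0 : Fin n → ℂ) :=
    Metric.ball_mem_nhds _ (Real.exp_pos _)
  filter_upwards [this] with x hx
  exact summable_of_NB h (by simpa using (Metric.mem_ball.1 hx).le)

lemma evf_add {F G : MvPowerSeries (Fin n) ℂ} (hF : IsConv F) (hG : IsConv G) :
    ∀ᶠ x in 𝓝 (0 : Fin n → ℂ), evf (F + G) x = evf F x + evf G x := by
  filter_upwards [summable_ev hF, summable_ev hG] with x h1 h2
  unfold evf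
  rw [← h1.of_norm.tsum_add h2.of_norm]
  simp [add_mul]

lemma evf_mul_aux (F G : MvPowerSeries (Fin n) ℂ) (x : Fin n → ℂ) (β : Fin n →₀ ℕ) :
    MvPowerSeries.coeff β (F * G) * mev β x = ∑ p ∈ Finset.HasAntidiagonal.antidiagonal β,
      (MvPowerSeries.coeff p.1 F * mev p.1 x) * (MvPowerSeries.coeff p.2 G * mev p.2 x) := by
  rw [MvPowerSeries.coeff_mul, Finset.sum_mul]
  refine Finset.sum_congr rfl fun p hp => ?_
  have hp' : p.1 + p.2 = β := Finset.HasAntidiagonal.mem_antidiagonal.1 hp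
  rw [← hp', mev_add]
  ring

lemma tsum_aux (f g : (Fin n →₀ ℕ) → ℂ) (h1 : Summable fun a => ‖f a‖)
    (h2 : Summable fun a => ‖g a‖) :
    (∑' a, f a) * (∑' a, g a) =
      ∑' β, ∑ p ∈ Finset.HasAntidiagonal.antidiagonal β, f p.1 * g p.2 :=
  Summable.tsum_mul_tsum_eq_tsum_sum_antidiagonal h1.of_norm h2.of_norm
    (summable_mul_of_summable_norm h1 h2)

lemma evf_mul {F G : MvPowerSeries (Fin n) ℂ} (hF : IsConv F) (hG : IsConv G) :
    ∀ᶠ x in 𝓝 (0 : Fin n → ℂ), evf (F * G) x = evf F x * evf G x := by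
  refine ((summable_ev hF).and (summable_ev hG)).mono fun x h => ?_
  refine Eq.trans ?_ (tsum_aux _ _ h.1 h.2).symm
  exact tsum_congr fun β => evf_mul_aux F G x β

lemma evf_monomial (α : Fin n →₀ ℕ) (c : ℂ) (x : Fin n → ℂ) :
    evf (MvPowerSeries.monomial α c) x = c * mev α x := by
  classical
  unfold evf
  rw [tsum_eq_single α]
  · rw [MvPowerSeries.coeff_monomial_same]
  · intro β hβ
    rw [MvPowerSeries.coeff_monomial_ne hβ, zero_mul]

/-- content of a tuple -/
def cont {k : ℕ} (v : Fin k → Fin n) : Fin n →₀ ℕ := ∑ j, Finsupp.single (v j) 1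

lemma deg_cont {k : ℕ} (v : Fin k → Fin n) : deg (cont v) = k := by
  unfold cont
  induction k with
  | zero => simp [deg]
  | succ k ih => rw [Fin.sum_univ_succ, deg_add, deg_single, ih (fun j => v j.succ)]; ring

lemma mev_cont {k : ℕ} (v : Fin k → Fin n) (x : Fin n → ℂ) :
    mev (cont v) x = ∏ j, x (v j) := by
  unfold cont
  induction k with
  | zero => simp [mev]
  | succ k ih =>
    rw [Fin.sum_univ_succ, mev_add, mev_single, ih (fun j => v j.succ), Fin.prod_univ_succ]

lemma exists_cont (k : ℕ) : ∀ α : Fin n →₀ ℕ, deg α = k → ∃ v : Fin k → Fin n, cont v = α := by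
  induction k with
  | zero =>
    intro α h
    refine ⟨Fin.elim0, ?_⟩
    unfold deg at h
    ext i
    have := (Finset.sum_eq_zero_iff.1 h) i (Finset.mem_univ i)
    simp [cont, this]
  | succ k ih =>
    intro α h
    have : ∃ i, α i ≠ 0 := by
      by_contra! h0
      simp [deg, h0] at h
    obtain ⟨i, hi⟩ := this
    have hle : Finsupp.single i 1 ≤ α := by rw [Finsupp.single_le_iff]; omega
    have e := add_tsub_cancel_of_le hle
    obtain ⟨v, hv⟩ := ih (α - Finsupp.single i 1) (by
      have := congrArg deg e
      rw [deg_add, deg_single] at this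
      omega)
    refine ⟨Fin.cons i v, ?_⟩
    unfold cont at hv ⊢
    rw [Fin.sum_univ_succ]
    simp only [Fin.cons_zero, Fin.cons_succ]
    rw [hv, e]

lemma exists_mlm (k : ℕ) (α : Fin n →₀ ℕ) (h : deg α = k) :
    ∃ M : ContinuousMultilinearMap ℂ (fun _ : Fin k => Fin n → ℂ) ℂ,
      ‖M‖ ≤ 1 ∧ ∀ x, (M fun _ => x) = mev α x := by
  obtain ⟨v, rfl⟩ := exists_cont k α h
  refine ⟨(ContinuousMultilinearMap.mkPiAlgebra ℂ (Fin k) ℂ).compContinuousLinearMap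
    (fun j => ContinuousLinearMap.proj (v j)), ?_, fun x => ?_⟩
  · refine ContinuousMultilinearMap.opNorm_le_bound zero_le_one fun m => ?_
    simp only [ContinuousMultilinearMap.compContinuousLinearMap_apply,
      ContinuousMultilinearMap.mkPiAlgebra_apply, ContinuousLinearMap.proj_apply, norm_prod, one_mul]
    exact Finset.prod_le_prod (fun _ _ => norm_nonneg _) fun j _ => norm_le_pi_norm (m j) (v j)
  · simp [mev_cont]

lemma hasSum_fib {f : (Fin n →₀ ℕ) → ℂ} {a : ℂ} (h : HasSum f a) :
    HasSum (fun k => ∑ α ∈ fib n k, f α) a := by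
  have := h.tsum_fiberwise (deg (n := n))
  have e : (fun k => ∑ α ∈ fib n k, f α) = fun k => ∑' (b : ↑(deg (n := n) ⁻¹' {k})), f ↑b := by
    funext k
    have e1 := Finset.tsum_subtype' (fib n k) f
    have e : (↑(fib n k) : Set (Fin n →₀ ℕ)) = deg ⁻¹' {k} := by
      ext α; simp [mem_fib]
    rw [e] at e1
    exact e1.symm
  rw [e]
  exact this

lemma hasFPS {F : MvPowerSeries (Fin n) ℂ} (h : IsConv F) :
    ∃ p : FormalMultilinearSeries ℂ (Fin n → ℂ) ℂ, HasFPowerSeriesAt (evf F) p 0 ∧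
      ∀ k x, (p k fun _ => x) = ∑ α ∈ fib n k, MvPowerSeries.coeff α F * mev α x := by
  classical
  obtain ⟨s, C, h⟩ := h
  have hM : ∀ (k : ℕ) (α : Fin n →₀ ℕ),
      ∃ M : ContinuousMultilinearMap ℂ (fun _ : Fin k => Fin n → ℂ) ℂ,
      ‖M‖ ≤ 1 ∧ (deg α = k → ∀ x, (M fun _ => x) = mev α x) := by
    intro k α
    by_cases hk : deg α = k
    · obtain ⟨M, h1, h2⟩ := exists_mlm k α hk
      exact ⟨M, h1, fun _ => h2⟩
    · exact ⟨0, by simp, fun h => absurd h hk⟩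
  choose M hM1 hM2 using hM
  set p : FormalMultilinearSeries ℂ (Fin n → ℂ) ℂ := fun k =>
    ∑ α ∈ fib n k, MvPowerSeries.coeff α F • M k α with hp
  have hpx : ∀ k x, (p k fun _ => x) = ∑ α ∈ fib n k, MvPowerSeries.coeff α F * mev α x := by
    intro k x
    rw [hp]
    simp only [sum_apply, smul_apply, smul_eq_mul]
    refine Finset.sum_congr rfl fun α hα => ?_
    rw [hM2 k α (mem_fib.1 hα)]
  refine ⟨p, ⟨((Real.exp (-s)).toNNReal : ENNReal), ?_, ?_, ?_⟩, hpx⟩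
  · refine p.le_radius_of_bound C fun k => ?_
    have h1 : ‖p k‖ ≤ ∑ α ∈ fib n k, ‖MvPowerSeries.coeff α F‖ := by
      refine (norm_sum_le _ _).trans (Finset.sum_le_sum fun α _ => ?_)
      rw [norm_smul]
      exact mul_le_of_le_one_right (norm_nonneg _) (hM1 k α)
    refine (mul_le_mul_of_nonneg_right h1 (by positivity)).trans (le_trans (le_of_eq ?_) (h (fib n k)))
    rw [Finset.sum_mul]
    refine Finset.sum_congr rfl fun α hα => ?_
    rw [wt_deg, mem_fib.1 hα]
    congr 1
    rw [Real.coe_toNNReal _ (Real.exp_pos _).le, ← Real.exp_nat_mul]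
    congr 1; ring
  · exact ENNReal.ofReal_pos.2 (Real.exp_pos _)
  · intro y hy
    rw [zero_add]
    simp only [hpx]
    refine hasSum_fib ?_
    have hy' : ‖y‖ ≤ Real.exp (-s) := by
      rw [Metric.mem_eball, edist_zero_right, ← ofReal_norm] at hy
      have : ‖y‖ < Real.exp (-s) := by
        rw [← ENNReal.ofReal_lt_ofReal_iff (Real.exp_pos _)]
        exact hy
      exact this.le
    exact (summable_of_NB h hy').of_norm.hasSum

lemma evf_inj {F : MvPowerSeries (Fin n) ℂ} (h : IsConv F)
    (h0 : ∀ᶠ x in 𝓝 (0 : Fin n → ℂ), evf F x = 0) : F = 0 := by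
  classical
  obtain ⟨p, hp, hpx⟩ := hasFPS h
  have hp0 : HasFPowerSeriesAt 0 p (0 : Fin n → ℂ) := hp.congr h0
  ext α
  set P : MvPolynomial (Fin n) ℂ :=
    ∑ β ∈ fib n (deg α), MvPolynomial.monomial β (MvPowerSeries.coeff β F) with hP
  have hP0 : P = 0 := by
    refine MvPolynomial.funext fun x => ?_
    rw [map_zero, hP, map_sum]
    have := hp0.apply_eq_zero (deg α) x
    rw [hpx] at this
    rw [← this]
    refine Finset.sum_congr rfl fun β _ => ?_
    rw [MvPolynomial.eval_monomial, mev, Finsupp.prod_fintype _ _ (by simp)]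
  have h1 : MvPolynomial.coeff α P = MvPowerSeries.coeff α F := by
    rw [hP, MvPolynomial.coeff_sum]
    simp only [MvPolynomial.coeff_monomial]
    rw [Finset.sum_ite_eq', if_pos (mem_fib.2 rfl)]
  rw [← h1, hP0]; simp

lemma evf_surj {f : (Fin n → ℂ) → ℂ} (hf : AnalyticAt ℂ f 0) :
    ∃ F : MvPowerSeries (Fin n) ℂ, IsConv F ∧ ∀ᶠ x in 𝓝 (0 : Fin n → ℂ), evf F x = f x := by
  classical
  obtain ⟨p, r, hp⟩ := hf
  set G : ℕ → (Fin n →₀ ℕ) → ℂ := fun k α =>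
    ∑ v ∈ (Finset.univ : Finset (Fin k → Fin n)).filter (fun v => cont v = α),
      p k (fun j => Pi.single (v j) 1) with hG
  set F : MvPowerSeries (Fin n) ℂ := fun α => G (deg α) α with hF
  have hFc : ∀ α, MvPowerSeries.coeff α F = G (deg α) α := fun α => rfl
  have hpx : ∀ k x, (p k fun _ => x) = ∑ α ∈ fib n k, MvPowerSeries.coeff α F * mev α x := by
    intro k x
    have e : x = ∑ i, x i • (Pi.single i 1 : Fin n → ℂ) := by
      ext j; simp [Finset.sum_apply, Pi.single_apply]
    conv_lhs => rw [e]
    rw [(p k).map_sum (fun _ i => x i • (Pi.single i 1 : Fin n → ℂ))]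
    have e2 : ∀ α ∈ fib n k, MvPowerSeries.coeff α F * mev α x =
        ∑ v ∈ (Finset.univ : Finset (Fin k → Fin n)).filter (fun v => cont v = α),
          p k (fun j => x (v j) • (Pi.single (v j) 1 : Fin n → ℂ)) := by
      intro α hα
      rw [hFc, mem_fib.1 hα, hG]
      rw [Finset.sum_mul]
      refine Finset.sum_congr rfl fun v hv => ?_
      rw [← (Finset.mem_filter.1 hv).2, mev_cont, ContinuousMultilinearMap.map_smul_univ,
        smul_eq_mul, mul_comm]
    rw [Finset.sum_congr rfl e2]
    rw [Finset.sum_fiberwise_of_maps_to]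
    intro v _
    exact mem_fib.2 (deg_cont v)
  obtain ⟨ρ, hρ0, hρ⟩ := ENNReal.lt_iff_exists_nnreal_btwn.1 (hp.r_pos.trans_le hp.r_le)
  have hρ0' : (0:NNReal) < ρ := by exact_mod_cast hρ0
  obtain ⟨C, hC, hpC⟩ := p.norm_mul_pow_le_of_lt_radius hρ
  have hρp : (0:ℝ) < ρ := by exact_mod_cast hρ0'
  have hsum : ∀ k, ∑ α ∈ fib n k, ‖MvPowerSeries.coeff α F‖ ≤ (n:ℝ) ^ k * ‖p k‖ := by
    intro k
    have h1 : ∀ α ∈ fib n k, ‖MvPowerSeries.coeff α F‖ ≤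
        ∑ v ∈ (Finset.univ : Finset (Fin k → Fin n)).filter (fun v => cont v = α), ‖p k‖ := by
      intro α hα
      rw [hFc, mem_fib.1 hα]
      refine (norm_sum_le _ _).trans (Finset.sum_le_sum fun v _ => ?_)
      refine ((p k).le_opNorm _).trans (le_of_eq ?_)
      rw [Finset.prod_eq_one, mul_one]
      intro j _
      rw [Pi.norm_single, norm_one]
    refine (Finset.sum_le_sum h1).trans ?_
    rw [Finset.sum_fiberwise_of_maps_to (fun v _ => mem_fib.2 (deg_cont v))]
    simp
  set t : ℝ := ρ / (2 * (n + 1)) with ht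
  have htp : 0 < t := by positivity
  have hconv : IsConv F := by
    refine ⟨-Real.log t, 2 * C, fun S => ?_⟩
    have e1 : ∀ α ∈ S, ‖MvPowerSeries.coeff α F‖ * Real.exp (-(-Real.log t * wt (fun _ => 1) α)) =
        ‖MvPowerSeries.coeff α F‖ * t ^ deg α := by
      intro α _
      rw [wt_deg]
      congr 1
      rw [neg_mul, neg_neg, mul_comm, Real.exp_nat_mul, Real.exp_log htp]
    rw [Finset.sum_congr rfl e1]
    rw [← Finset.sum_fiberwise_of_maps_to (t := S.image deg) (g := deg)
      (fun α h => Finset.mem_image_of_mem _ h)]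
    have e2 : ∀ k ∈ S.image deg, ∑ α ∈ S.filter (fun α => deg α = k),
        ‖MvPowerSeries.coeff α F‖ * t ^ deg α ≤ C * (1 / 2) ^ k := by
      intro k _
      have e3 : ∑ α ∈ S.filter (fun α => deg α = k), ‖MvPowerSeries.coeff α F‖ * t ^ deg α ≤
          ∑ α ∈ fib n k, ‖MvPowerSeries.coeff α F‖ * t ^ k := by
        calc _ = ∑ α ∈ S.filter (fun α => deg α = k), ‖MvPowerSeries.coeff α F‖ * t ^ k :=
              Finset.sum_congr rfl fun α hα => by rw [(Finset.mem_filter.1 hα).2]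
          _ ≤ _ := Finset.sum_le_sum_of_subset_of_nonneg
              (fun α hα => mem_fib.2 (Finset.mem_filter.1 hα).2) fun _ _ _ => by positivity
      refine e3.trans ?_
      rw [← Finset.sum_mul]
      refine (mul_le_mul_of_nonneg_right (hsum k) (by positivity)).trans ?_
      have e4 : (n:ℝ) ^ k * ‖p k‖ * t ^ k = (‖p k‖ * ρ ^ k) * ((n:ℝ) / (2 * (n + 1))) ^ k := by
        rw [ht, div_pow, div_pow]; ring
      rw [e4]
      refine mul_le_mul (hpC k) ?_ (by positivity) hC.le
      refine pow_le_pow_left₀ (by positivity) ?_ k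
      rw [div_le_div_iff₀ (by positivity) (by norm_num)]
      linarith
    refine (Finset.sum_le_sum e2).trans ?_
    rw [← Finset.mul_sum, mul_comm]
    refine mul_le_mul_of_nonneg_right ?_ hC.le
    have := summable_geometric_two.sum_le_tsum (S.image deg) (fun _ _ => by positivity)
    rwa [tsum_geometric_two] at this
  refine ⟨F, hconv, ?_⟩
  filter_upwards [summable_ev hconv, Metric.eball_mem_nhds (0 : Fin n → ℂ) hp.r_pos] with x h1 h2
  have h3 := hp.hasSum h2
  rw [zero_add] at h3
  simp only [hpx] at h3
  exact (hasSum_fib h1.of_norm.hasSum).unique h3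

end QH

namespace QH

lemma isConv_monomial_c (γ : Fin n →₀ ℕ) (c : ℂ) : IsConv (MvPowerSeries.monomial γ c) := by
  have := (isConv_monomial γ).smul c
  rwa [← map_smul, smul_eq_mul, mul_one] at this

lemma evf_smul (c : ℂ) (F : MvPowerSeries (Fin n) ℂ) (x : Fin n → ℂ) :
    evf (c • F) x = c * evf F x := by
  unfold evf
  rw [← tsum_mul_left]
  refine tsum_congr fun α => ?_
  rw [MvPowerSeries.coeff_smul, mul_assoc]

lemma evf_unique {F G : MvPowerSeries (Fin n) ℂ} (hF : IsConv F) (hG : IsConv G)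
    (h : ∀ᶠ x in 𝓝 (0 : Fin n → ℂ), evf F x = evf G x) : F = G := by
  have h2 := hG.smul (-1)
  have : F + (-1 : ℂ) • G = 0 := by
    refine evf_inj (hF.add h2) ?_
    filter_upwards [h, evf_add hF h2] with x h3 h4
    rw [h4, evf_smul, h3]; ring
  rw [neg_smul, one_smul, ← sub_eq_add_neg] at this
  exact sub_eq_zero.1 this

lemma evf_analytic {F : MvPowerSeries (Fin n) ℂ} (hF : IsConv F) : AnalyticAt ℂ (evf F) 0 := by
  obtain ⟨p, hp, -⟩ := hasFPS hF
  exact hp.analyticAt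

/-- Taylor series of a germ. -/
def ser (g : On n) : MvPowerSeries (Fin n) ℂ := (evf_surj (On.rep_analyticAt g)).choose

lemma ser_conv (g : On n) : IsConv (ser g) := (evf_surj (On.rep_analyticAt g)).choose_spec.1

lemma ser_rep (g : On n) : ∀ᶠ x in 𝓝 (0 : Fin n → ℂ), evf (ser g) x = On.rep g x :=
  (evf_surj (On.rep_analyticAt g)).choose_spec.2

lemma rep_eq {f : (Fin n → ℂ) → ℂ} {g : On n}
    (h : (f : Filter.Germ (𝓝 (0 : Fin n → ℂ)) ℂ) = (g : Filter.Germ _ ℂ)) :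
    ∀ᶠ x in 𝓝 (0 : Fin n → ℂ), On.rep g x = f x := by
  have := (On.rep_spec g).trans h.symm
  exact Filter.Germ.coe_eq.1 this

lemma On_ext {f g : On n} (h : ∀ᶠ x in 𝓝 (0 : Fin n → ℂ), On.rep f x = On.rep g x) : f = g := by
  apply Subtype.ext
  rw [← On.rep_spec f, ← On.rep_spec g]
  exact Filter.Germ.coe_eq.2 h

lemma rep_mkOn (f : (Fin n → ℂ) → ℂ) (hf : AnalyticAt ℂ f 0) :
    ∀ᶠ x in 𝓝 (0 : Fin n → ℂ), On.rep (mkOn f hf) x = f x := rep_eq rfl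

lemma rep_add (f g : On n) :
    ∀ᶠ x in 𝓝 (0 : Fin n → ℂ), On.rep (f + g) x = On.rep f x + On.rep g x := by
  refine rep_eq (f := On.rep f + On.rep g) ?_
  rw [Filter.Germ.coe_add, On.rep_spec, On.rep_spec]; rfl

lemma rep_mul (f g : On n) :
    ∀ᶠ x in 𝓝 (0 : Fin n → ℂ), On.rep (f * g) x = On.rep f x * On.rep g x := by
  refine rep_eq (f := On.rep f * On.rep g) ?_
  rw [Filter.Germ.coe_mul, On.rep_spec, On.rep_spec]; rfl

lemma rep_algebraMap (c : ℂ) :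
    ∀ᶠ x in 𝓝 (0 : Fin n → ℂ), On.rep (algebraMap ℂ (On n) c) x = c :=
  rep_eq (f := fun _ => c) rfl

lemma ser_eq {F : MvPowerSeries (Fin n) ℂ} (hF : IsConv F) {g : On n}
    (h : ∀ᶠ x in 𝓝 (0 : Fin n → ℂ), evf F x = On.rep g x) : ser g = F := by
  refine evf_unique (ser_conv g) hF ?_
  filter_upwards [h, ser_rep g] with x h1 h2
  rw [h1, h2]

lemma ser_add (f g : On n) : ser (f + g) = ser f + ser g := by
  refine ser_eq ((ser_conv f).add (ser_conv g)) ?_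
  filter_upwards [ser_rep f, ser_rep g, evf_add (ser_conv f) (ser_conv g), rep_add f g]
    with x h1 h2 h3 h4
  rw [h3, h4, h1, h2]

lemma ser_mul (f g : On n) : ser (f * g) = ser f * ser g := by
  refine ser_eq ((ser_conv f).mul (ser_conv g)) ?_
  filter_upwards [ser_rep f, ser_rep g, evf_mul (ser_conv f) (ser_conv g), rep_mul f g]
    with x h1 h2 h3 h4
  rw [h3, h4, h1, h2]

lemma ser_algebraMap (c : ℂ) : ser (algebraMap ℂ (On n) c) = MvPowerSeries.monomial 0 c := by
  refine ser_eq (isConv_monomial_c 0 c) ?_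
  filter_upwards [rep_algebraMap (n := n) c] with x h1
  rw [h1, evf_monomial, mev_zero, mul_one]

/-- Taylor expansion as an algebra homomorphism. -/
def serHom (n : ℕ) : On n →ₐ[ℂ] MvPowerSeries (Fin n) ℂ where
  toFun := ser
  map_one' := by
    have := ser_algebraMap (n := n) 1
    rw [map_one] at this
    exact this
  map_zero' := by
    have := ser_algebraMap (n := n) 0
    rw [map_zero, map_zero] at this
    exact this
  map_add' := ser_add
  map_mul' := ser_mul
  commutes' c := ser_algebraMap c

/-- The standard Taylor structure on `On n`. -/
def TRO (n : ℕ) : TR n (On n) where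
  τ := serHom n
  inj f g h := by
    have h' : ser f = ser g := h
    refine On_ext ?_
    filter_upwards [ser_rep f, ser_rep g] with x h1 h2
    rw [← h1, ← h2, h']
  conv := ser_conv
  surj F hF := ⟨mkOn (evf F) (evf_analytic hF), by
    refine ser_eq hF ?_
    filter_upwards [rep_mkOn (evf F) (evf_analytic hF)] with x h1
    rw [h1]⟩
  x := coordG
  τ_x i := by
    refine ser_eq (isConv_monomial _) ?_
    filter_upwards [rep_mkOn (fun x : Fin n → ℂ => x i)
      ((ContinuousLinearMap.proj (R := ℂ) (φ := fun _ : Fin n => ℂ) i).analyticAt _)] with x h1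
    rw [coordG, h1, evf_monomial, mev_single, one_mul]

/-- Value at the origin as a ring homomorphism. -/
lemma rep_zero {f : (Fin n → ℂ) → ℂ} {g : On n}
    (h : ∀ᶠ x in 𝓝 (0 : Fin n → ℂ), On.rep g x = f x) : ev0 g = f 0 := h.self_of_nhds

lemma ev0_add (f g : On n) : ev0 (f + g) = ev0 f + ev0 g := rep_zero (rep_add f g)
lemma ev0_mul (f g : On n) : ev0 (f * g) = ev0 f * ev0 g := rep_zero (rep_mul f g)
lemma ev0_algebraMap (c : ℂ) : ev0 (algebraMap ℂ (On n) c) = c := rep_zero (rep_algebraMap c)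

lemma mem_mId {g : On n} : g ∈ mId n ↔ ev0 g = 0 := by
  rw [mId, RingHom.mem_ker]
  have e : restrictOn n (pure_le_nhds (0 : Fin n → ℂ)) g =
      ((On.rep g : (Fin n → ℂ) → ℂ) : Filter.Germ (pure (0 : Fin n → ℂ)) ℂ) := by
    change (g : Filter.Germ (𝓝 (0 : Fin n → ℂ)) ℂ).compTendsto id
      (Filter.tendsto_id'.2 (pure_le_nhds (0 : Fin n → ℂ))) = _
    rw [← On.rep_spec g]; rfl
  rw [e]
  change _ = ((0 : (Fin n → ℂ) → ℂ) : Filter.Germ (pure (0 : Fin n → ℂ)) ℂ) ↔ _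
  rw [Filter.Germ.coe_eq]
  simp [Filter.EventuallyEq, ev0]

lemma mem_IX {X : Set (Fin n → ℂ)} {g : On n} :
    g ∈ IX n X ↔ ∀ᶠ x in 𝓝[X] (0 : Fin n → ℂ), On.rep g x = 0 := by
  rw [IX, RingHom.mem_ker]
  have e : restrictOn n (nhdsWithin_le_nhds (s := X)) g =
      ((On.rep g : (Fin n → ℂ) → ℂ) : Filter.Germ (𝓝[X] (0 : Fin n → ℂ)) ℂ) := by
    change (g : Filter.Germ (𝓝 (0 : Fin n → ℂ)) ℂ).compTendsto id
      (Filter.tendsto_id'.2 (nhdsWithin_le_nhds (s := X))) = _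
    rw [← On.rep_spec g]; rfl
  rw [e]
  change _ = ((0 : (Fin n → ℂ) → ℂ) : Filter.Germ (𝓝[X] (0 : Fin n → ℂ)) ℂ) ↔ _
  rw [Filter.Germ.coe_eq]
  rfl

lemma one_notMem_IX {X : Set (Fin n → ℂ)} (h : (0 : Fin n → ℂ) ∈ X) : (1 : On n) ∉ IX n X := by
  intro h1
  have h2 := (mem_IX.1 h1).self_of_nhdsWithin h
  have h3 := ev0_algebraMap (n := n) 1
  rw [map_one] at h3
  rw [ev0, h2] at h3
  exact zero_ne_one h3

lemma co_zero_eq (g : On n) : (TRO n).co 0 g = ev0 g := by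
  have h1 := (ser_rep g).self_of_nhds
  rw [ev0, ← h1]
  change MvPowerSeries.coeff 0 (ser g) = _
  unfold evf
  rw [tsum_eq_single 0]
  · rw [mev_zero, mul_one]
  · intro β hβ
    obtain ⟨i, hi⟩ := Finsupp.ne_iff.mp hβ
    have : mev β (0 : Fin n → ℂ) = 0 := by
      unfold mev
      refine Finset.prod_eq_zero (Finset.mem_univ i) ?_
      simpa using hi
    rw [this, mul_zero]

lemma fil_one_iff (T : TR n (On n)) (g : On n) :
    Fil (fun _ => 1) 1 (T.τ g) ↔ T.co 0 g = 0 := by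
  constructor
  · intro h
    by_contra h0
    have := h 0 h0
    rw [wt_zero] at this
    linarith
  · intro h α hα
    refine TR.one_le_wt_one ?_
    rintro rfl
    exact hα h

/-! ### partial derivatives -/

lemma rep_pd (i : Fin n) {g : On n} {f : (Fin n → ℂ) → ℂ}
    (h : ∀ᶠ x in 𝓝 (0 : Fin n → ℂ), On.rep g x = f x) :
    ∀ᶠ x in 𝓝 (0 : Fin n → ℂ), On.rep (pd i g) x = fderiv ℂ f x (Pi.single i 1) := by
  have h1 := h.eventually_nhds
  filter_upwards [h1, rep_mkOn (fun x => fderiv ℂ (On.rep g) x (Pi.single i 1)) (by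
    have h := ((ContinuousLinearMap.apply ℂ ℂ (Pi.single i 1)).analyticAt
      (fderiv ℂ (On.rep g) 0)).comp (On.rep_analyticAt g).fderiv
    exact h)] with x h2 h3
  rw [pd, h3, Filter.EventuallyEq.fderiv_eq h2]

lemma rep_diff (g : On n) :
    ∀ᶠ x in 𝓝 (0 : Fin n → ℂ), DifferentiableAt ℂ (On.rep g) x :=
  (On.rep_analyticAt g).eventually_analyticAt.mono fun _ h => h.differentiableAt

lemma pd_add (i : Fin n) (f g : On n) : pd i (f + g) = pd i f + pd i g := by
  refine On_ext ?_
  filter_upwards [rep_pd i (rep_add f g), rep_add (pd i f) (pd i g), rep_diff f, rep_diff g,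
    rep_pd i (g := f) (Eventually.of_forall fun _ => rfl),
    rep_pd i (g := g) (Eventually.of_forall fun _ => rfl)] with x h1 h2 h3 h4 h5 h6
  rw [h1, h2, h5, h6, fderiv_fun_add h3 h4]
  rfl

lemma pd_mul (i : Fin n) (f g : On n) : pd i (f * g) = f * pd i g + g * pd i f := by
  refine On_ext ?_
  filter_upwards [rep_pd i (rep_mul f g), rep_add (f * pd i g) (g * pd i f), rep_diff f, rep_diff g,
    rep_pd i (g := f) (Eventually.of_forall fun _ => rfl),
    rep_pd i (g := g) (Eventually.of_forall fun _ => rfl), rep_mul f (pd i g),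
    rep_mul g (pd i f)] with x h1 h2 h3 h4 h5 h6 h7 h8
  rw [h1, h2, h7, h8, h5, h6, fderiv_fun_mul h3 h4]
  rfl

lemma pd_algebraMap (i : Fin n) (c : ℂ) : pd i (algebraMap ℂ (On n) c) = 0 := by
  refine On_ext ?_
  have h0 := rep_algebraMap (n := n) 0
  rw [map_zero] at h0
  filter_upwards [rep_pd i (rep_algebraMap c), h0] with x h1 h2
  rw [h1, h2]; simp

lemma pd_smul (i : Fin n) (c : ℂ) (f : On n) : pd i (c • f) = c • pd i f := by
  rw [Algebra.smul_def, pd_mul, pd_algebraMap, mul_zero, add_zero, ← Algebra.smul_def]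

lemma pd_coordG (i j : Fin n) : pd i (coordG j) = if i = j then 1 else 0 := by
  have e : pd i (coordG j) = algebraMap ℂ (On n) (if i = j then 1 else 0) := by
    refine On_ext ?_
    filter_upwards [rep_algebraMap (n := n) (if i = j then 1 else 0), rep_pd i (rep_mkOn (fun x : Fin n → ℂ => x j)
        ((ContinuousLinearMap.proj (R := ℂ) (φ := fun _ : Fin n => ℂ) j).analyticAt _))] with x h1 h2
    rw [h1, coordG, h2]
    have : (fun x : Fin n → ℂ => x j) =
      (ContinuousLinearMap.proj (R := ℂ) (φ := fun _ : Fin n => ℂ) j) := rfl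
    rw [this, ContinuousLinearMap.fderiv]
    simp [Pi.single_apply, eq_comm]
  rw [e]; split <;> simp

/-- A vector field as a derivation. -/
def vf (δ : Fin n → On n) : Derivation ℂ (On n) (On n) where
  toFun := applyVF δ
  map_add' f g := by
    simp only [applyVF, pd_add, mul_add, Finset.sum_add_distrib]
  map_smul' c f := by
    simp only [applyVF, pd_smul, RingHom.id_apply, Finset.smul_sum, mul_smul_comm]
  map_one_eq_zero' := by
    have : ∀ i : Fin n, pd i (1 : On n) = 0 := fun i => by
      have := pd_algebraMap (n := n) i 1
      rwa [map_one] at this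
    change applyVF δ 1 = 0
    simp [applyVF, this]
  leibniz' f g := by
    change applyVF δ (f * g) = f * applyVF δ g + g * applyVF δ f
    simp only [applyVF, pd_mul, Finset.mul_sum, ← Finset.sum_add_distrib]
    refine Finset.sum_congr rfl fun i _ => ?_
    ring

lemma vf_apply (δ : Fin n → On n) (g : On n) : vf δ g = applyVF δ g := rfl

lemma vf_coordG (δ : Fin n → On n) (i : Fin n) : vf δ (coordG i) = δ i := by
  rw [vf_apply, applyVF]
  simp only [pd_coordG, mul_ite, mul_one, mul_zero]
  rw [Finset.sum_ite_eq' Finset.univ i]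
  simp

/-- Derivations agreeing on coordinates agree. -/
lemma der_ext (T : TR n (On n)) (D₁ D₂ : Derivation ℂ (On n) (On n))
    (h1 : ∀ i, Fil (fun _ => 1) 1 (T.τ (D₁ (T.x i))))
    (h : ∀ i, D₁ (T.x i) = D₂ (T.x i)) (f : On n) : D₁ f = D₂ f := by
  have hm : ∀ α, D₁ (T.mon α) = D₂ (T.mon α) := by
    intro α
    refine T.mon_induct (fun a _ => D₁ a = D₂ a) ?_ ?_ h α
    · simp
    · intro a b _ _ ha hb
      rw [Derivation.leibniz, Derivation.leibniz, ha, hb]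
  refine T.ext_co fun β => ?_
  have hone : ∀ i : Fin n, (0:ℝ) < (fun _ => 1 : Fin n → ℝ) i := fun _ => one_pos
  rw [T.co_D D₁ h1 f β (low hone (wt (fun _ => 1) β)) fun α hα => (mem_low _ _ _).2 hα,
    T.co_D D₂ (fun i => h i ▸ h1 i) f β (low hone (wt (fun _ => 1) β))
      fun α hα => (mem_low _ _ _).2 hα]
  simp only [hm]

lemma x_mem (i : Fin n) : ev0 (coordG i : On n) = 0 := by
  have := rep_zero (rep_mkOn (fun x : Fin n → ℂ => x i)
    ((ContinuousLinearMap.proj (R := ℂ) (φ := fun _ : Fin n => ℂ) i).analyticAt _))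
  exact this

lemma ev0_zero : ev0 (0 : On n) = 0 := by
  have := ev0_algebraMap (n := n) 0; rwa [map_zero] at this
lemma ev0_one : ev0 (1 : On n) = 1 := by
  have := ev0_algebraMap (n := n) 1; rwa [map_one] at this
lemma ev0_smul (c : ℂ) (f : On n) : ev0 (c • f) = c * ev0 f := by
  rw [Algebra.smul_def, ev0_mul, ev0_algebraMap]
lemma ev0_sum {ι : Type*} (S : Finset ι) (f : ι → On n) :
    ev0 (∑ i ∈ S, f i) = ∑ i ∈ S, ev0 (f i) := by
  classical
  induction S using Finset.induction_on with
  | empty => simp [ev0_zero]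
  | insert a S ha ih => rw [Finset.sum_insert ha, Finset.sum_insert ha, ev0_add, ih]

lemma ev0_sub (f g : On n) : ev0 (f - g) = ev0 f - ev0 g := by
  have := ev0_add (f - g) g
  rw [sub_add_cancel] at this
  rw [this]; ring

/-- The linear coefficient. -/
def lc (i : Fin n) (f : On n) : ℂ := ev0 (pd i f)

lemma lc_add (i : Fin n) (f g : On n) : lc i (f + g) = lc i f + lc i g := by
  rw [lc, pd_add, ev0_add]; rfl
lemma lc_smul (i : Fin n) (c : ℂ) (f : On n) : lc i (c • f) = c * lc i f := by
  rw [lc, pd_smul, ev0_smul]; rfl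
lemma lc_mul (i : Fin n) (f g : On n) : lc i (f * g) = ev0 f * lc i g + ev0 g * lc i f := by
  rw [lc, pd_mul, ev0_add, ev0_mul, ev0_mul]; rfl
lemma lc_coordG (i j : Fin n) : lc i (coordG j : On n) = if i = j then 1 else 0 := by
  rw [lc, pd_coordG]; split <;> simp [ev0_zero, ev0_one]
lemma lc_zero (i : Fin n) : lc i (0 : On n) = 0 := by
  have := lc_smul i 0 (0 : On n)
  simpa using this
lemma lc_sum (j : Fin n) {ι : Type*} (S : Finset ι) (f : ι → On n) :
    lc j (∑ i ∈ S, f i) = ∑ i ∈ S, lc j (f i) := by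
  classical
  induction S using Finset.induction_on with
  | empty => simp [lc_zero]
  | insert a S ha ih => rw [Finset.sum_insert ha, Finset.sum_insert ha, lc_add, ih]
lemma lc_sub (i : Fin n) (f g : On n) : lc i (f - g) = lc i f - lc i g := by
  have := lc_add i (f - g) g
  rw [sub_add_cancel] at this
  rw [this]; ring

/-- Hadamard: every germ vanishing at zero is a combination of coordinates. -/
lemma exists_had (f : On n) (h : ev0 f = 0) : ∃ b : Fin n → On n, f = ∑ i, coordG i * b i := by
  obtain ⟨b, -, hb⟩ := (TRO n).hadamard f 0 (by
    have := (fil_one_iff (TRO n) f).2 (by rw [co_zero_eq, h])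
    simpa using this)
  exact ⟨b, hb⟩

lemma lc_had (j : Fin n) (b : Fin n → On n) : lc j (∑ i, coordG i * b i) = ev0 (b j) := by
  rw [lc_sum]
  simp only [lc_mul, x_mem, lc_coordG, zero_mul, zero_add, mul_ite, mul_one, mul_zero]
  rw [Finset.sum_ite_eq Finset.univ j]
  simp

/-- Germs vanishing to second order. -/
lemma fil_two {f : On n} (h0 : ev0 f = 0) (h1 : ∀ i, lc i f = 0) :
    Fil (fun _ => 1) 2 ((TRO n).τ f) := by
  obtain ⟨b, rfl⟩ := exists_had f h0
  simp only [lc_had] at h1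
  rw [map_sum]
  refine Fil.sum _ fun i _ => ?_
  rw [map_mul]
  have := ((TRO n).fil_x (fun _ => 1) i).mul
    ((fil_one_iff (TRO n) (b i)).2 (by rw [co_zero_eq, h1 i]))
  norm_num at this
  exact this

end QH

namespace QH

/-- Inverse change of coordinates. -/
def CCsymm (φ : CoordChange n) : CoordChange n where
  toFun := φ.invFun
  invFun := φ.toFun
  analyticAt := φ.inv_analyticAt
  inv_analyticAt := φ.analyticAt
  map_zero := φ.inv_map_zero
  inv_map_zero := φ.map_zero
  left_inv := φ.right_inv
  right_inv := φ.left_inv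

lemma rep_pullback (φ : CoordChange n) {g : On n} {f : (Fin n → ℂ) → ℂ}
    (h : ∀ᶠ x in 𝓝 (0 : Fin n → ℂ), On.rep g x = f x) :
    ∀ᶠ x in 𝓝 (0 : Fin n → ℂ), On.rep (pullback φ g) x = f (φ.toFun x) := by
  have h1 : ∀ᶠ x in 𝓝 (0 : Fin n → ℂ), On.rep (pullback φ g) x = (On.rep g ∘ φ.toFun) x := by
    refine rep_eq ?_
    change _ = (g : Filter.Germ (𝓝 (0 : Fin n → ℂ)) ℂ).compTendsto φ.toFun φ.tendsto
    rw [← On.rep_spec g]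
    exact (Filter.Germ.coe_compTendsto _ φ.tendsto).symm
  filter_upwards [h1, φ.tendsto.eventually h] with x h2 h3
  rw [h2, Function.comp_apply, h3]

lemma rep_pullback' (φ : CoordChange n) (g : On n) :
    ∀ᶠ x in 𝓝 (0 : Fin n → ℂ), On.rep (pullback φ g) x = On.rep g (φ.toFun x) :=
  rep_pullback φ (Eventually.of_forall fun _ => rfl)

/-- Pullback as an algebra homomorphism. -/
def pbHom (φ : CoordChange n) : On n →ₐ[ℂ] On n where
  toFun := pullback φ
  map_one' := by
    refine On_ext ?_
    have h0 := rep_algebraMap (n := n) 1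
    rw [map_one] at h0
    filter_upwards [rep_pullback φ h0, h0] with x h1 h2
    rw [h1, h2]
  map_zero' := by
    refine On_ext ?_
    have h0 := rep_algebraMap (n := n) 0
    rw [map_zero] at h0
    filter_upwards [rep_pullback φ h0, h0] with x h1 h2
    rw [h1, h2]
  map_add' f g := by
    refine On_ext ?_
    filter_upwards [rep_pullback φ (rep_add f g), rep_add (pullback φ f) (pullback φ g),
      rep_pullback' φ f, rep_pullback' φ g] with x h1 h2 h3 h4
    rw [h1, h2, h3, h4]
  map_mul' f g := by
    refine On_ext ?_
    filter_upwards [rep_pullback φ (rep_mul f g), rep_mul (pullback φ f) (pullback φ g),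
      rep_pullback' φ f, rep_pullback' φ g] with x h1 h2 h3 h4
    rw [h1, h2, h3, h4]
  commutes' c := by
    refine On_ext ?_
    filter_upwards [rep_pullback φ (rep_algebraMap c), rep_algebraMap (n := n) c] with x h1 h2
    rw [h1, h2]

lemma pb_pb (φ : CoordChange n) (g : On n) : pbHom (CCsymm φ) (pbHom φ g) = g := by
  refine On_ext ?_
  change ∀ᶠ x in 𝓝 (0 : Fin n → ℂ), On.rep (pullback (CCsymm φ) (pullback φ g)) x = _
  filter_upwards [rep_pullback (CCsymm φ) (rep_pullback' φ g), φ.right_inv] with x h1 h2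
  rw [h1]
  change On.rep g (φ.toFun (φ.invFun x)) = _
  rw [h2]

lemma pb_pb' (φ : CoordChange n) (g : On n) : pbHom φ (pbHom (CCsymm φ) g) = g :=
  pb_pb (CCsymm φ) g

lemma ev0_pb (φ : CoordChange n) (g : On n) : ev0 (pbHom φ g) = ev0 g := by
  have := rep_zero (rep_pullback' φ g)
  rw [φ.map_zero] at this
  exact this

lemma lc_const (i : Fin n) (c : ℂ) : lc i (algebraMap ℂ (On n) c) = 0 := by
  rw [lc, pd_algebraMap, ev0_zero]

/-- Chain rule at the origin. -/
lemma lc_pb (φ : CoordChange n) (i : Fin n) (f : On n) :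
    lc i (pbHom φ f) = ∑ k, lc k f * lc i (pbHom φ (coordG k)) := by
  obtain ⟨b, hb⟩ := exists_had (f - algebraMap ℂ (On n) (ev0 f)) (by
    rw [ev0_sub, ev0_algebraMap, sub_self])
  have h1 : ∀ k, lc k f = ev0 (b k) := by
    intro k
    have := lc_had k b
    rw [← hb, lc_sub, lc_const, sub_zero] at this
    exact this
  have h2 : pbHom φ f = algebraMap ℂ (On n) (ev0 f) + ∑ k, pbHom φ (coordG k) * pbHom φ (b k) := by
    have := congrArg (pbHom φ) hb
    rw [map_sub, map_sum, AlgHom.commutes] at this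
    simp only [map_mul] at this
    rw [← this]; ring
  rw [h2, lc_add, lc_const, zero_add, lc_sum]
  refine Finset.sum_congr rfl fun k _ => ?_
  rw [lc_mul, ev0_pb, ev0_pb, x_mem, zero_mul, zero_add, h1]

lemma lc_co (i : Fin n) (f : On n) : (TRO n).co (Finsupp.single i 1) f = lc i f := by
  classical
  set g : On n := f - (algebraMap ℂ (On n) (ev0 f) + ∑ k, lc k f • coordG k) with hg
  have h0 : ev0 g = 0 := by
    rw [hg, ev0_sub, ev0_add, ev0_algebraMap, ev0_sum]
    simp [ev0_smul, x_mem]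
  have h1 : ∀ k, lc k g = 0 := by
    intro k
    rw [hg, lc_sub, lc_add, lc_const, lc_sum]
    simp [lc_smul, lc_coordG]
  have h2 : (TRO n).co (Finsupp.single i 1) g = 0 := by
    by_contra hne
    have := fil_two h0 h1 _ hne
    rw [wt_single] at this
    norm_num at this
  have h3 : ∀ k, (coordG k : On n) = (TRO n).mon (Finsupp.single k 1) :=
    fun k => ((TRO n).mon_single k).symm
  rw [hg, Algebra.algebraMap_eq_smul_one, ← (TRO n).mon_zero, TR.co_sub, TR.co_add, TR.co_smul,
    TR.co_mon, TR.co_sum] at h2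
  simp only [h3, TR.co_smul, TR.co_mon] at h2
  have h4 : (Finsupp.single i 1 : Fin n →₀ ℕ) ≠ 0 := by simp
  have h5 : ∀ k, ((Finsupp.single i 1 : Fin n →₀ ℕ) = Finsupp.single k 1) ↔ i = k := by
    intro k
    exact Finsupp.single_left_inj one_ne_zero
  simp only [h5, if_neg h4] at h2
  simp at h2
  exact sub_eq_zero.1 h2

/-- Taylor structure in new coordinates. -/
def TRpull (φ : CoordChange n) (y : Fin n → On n) (hy : ∀ i, pullback φ (y i) = coordG i) :
    TR n (On n) where
  τ := (serHom n).comp (pbHom φ)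
  inj := by
    intro f g h
    have h1 : pbHom φ f = pbHom φ g := (TRO n).inj h
    rw [← pb_pb φ f, h1, pb_pb]
  conv f := ser_conv _
  surj F hF := by
    obtain ⟨a, ha⟩ := (TRO n).surj F hF
    refine ⟨pbHom (CCsymm φ) a, ?_⟩
    rw [AlgHom.comp_apply, pb_pb']
    exact ha
  x := y
  τ_x i := by
    rw [AlgHom.comp_apply]
    change serHom n (pullback φ (y i)) = _
    rw [hy]
    exact (TRO n).τ_x i

lemma exists_coord (y : Fin n → On n) (h0 : ∀ i, ev0 (y i) = 0)
    (hdet : (Matrix.of fun i j => lc i (y j)).det ≠ 0) :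
    ∃ φ : CoordChange n, ∀ i, pullback φ (y i) = coordG i := by
  set Y : (Fin n → ℂ) → (Fin n → ℂ) := fun x i => On.rep (y i) x with hY
  have hYa : AnalyticAt ℂ Y 0 := analyticAt_pi_iff.2 fun i => On.rep_analyticAt (y i)
  have hY0 : Y 0 = 0 := funext fun i => h0 i
  have hL : ∀ i j, fderiv ℂ Y 0 (Pi.single i 1) j = lc i (y j) := by
    intro i j
    have e1 := rep_zero (rep_pd i (g := y j) (Eventually.of_forall fun _ => rfl))
    rw [lc, e1]
    have e2 : HasFDerivAt Y (fderiv ℂ Y 0) 0 := hYa.differentiableAt.hasFDerivAt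
    have e3 := (hasFDerivAt_pi'.1 e2) j
    have e4 := e3.fderiv
    change fderiv ℂ (On.rep (y j)) 0 = _ at e4
    rw [e4]; rfl
  have hd : (fderiv ℂ Y 0).det ≠ 0 := by
    have e : LinearMap.toMatrix' (fderiv ℂ Y 0 : (Fin n → ℂ) →ₗ[ℂ] (Fin n → ℂ)) =
        (Matrix.of fun i j => lc i (y j)).transpose := by
      ext i j
      rw [LinearMap.toMatrix'_apply, Matrix.transpose_apply, Matrix.of_apply, ← hL]
      congr 2
    have e2 : (fderiv ℂ Y 0).det = (Matrix.of fun i j => lc i (y j)).det := by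
      rw [← Matrix.det_transpose, ← e, LinearMap.det_toMatrix']
    rwa [e2]
  set f' := (fderiv ℂ Y 0).toContinuousLinearEquivOfDetNeZero hd with hf'
  have hff : (f' : (Fin n → ℂ) →L[ℂ] (Fin n → ℂ)) = fderiv ℂ Y 0 :=
    ContinuousLinearMap.coe_toContinuousLinearEquivOfDetNeZero _ hd
  have hs : HasStrictFDerivAt Y (f' : (Fin n → ℂ) →L[ℂ] (Fin n → ℂ)) 0 := by
    rw [hff]; exact hYa.hasStrictFDerivAt
  have hsrc := hs.mem_toOpenPartialHomeomorph_source
  have hia : AnalyticAt ℂ (hs.localInverse Y f' 0) 0 := by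
    have := (hs.toOpenPartialHomeomorph Y).analyticAt_symm' (i := f') hsrc hYa hff.symm
    rw [HasStrictFDerivAt.toOpenPartialHomeomorph_coe, hY0] at this
    exact this
  have hinv0 : hs.localInverse Y f' 0 0 = 0 := by
    have := hs.localInverse_apply_image
    rwa [hY0] at this
  have hr : ∀ᶠ x in 𝓝 (0 : Fin n → ℂ), Y (hs.localInverse Y f' 0 x) = x := by
    have := hs.eventually_right_inverse
    rwa [hY0] at this
  refine ⟨⟨hs.localInverse Y f' 0, Y, hia, hYa, hinv0, hY0, hr, hs.eventually_left_inverse⟩,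
    fun i => On_ext ?_⟩
  filter_upwards [rep_pullback' (⟨hs.localInverse Y f' 0, Y, hia, hYa, hinv0, hY0, hr,
    hs.eventually_left_inverse⟩ : CoordChange n) (y i), hr, rep_mkOn (fun x : Fin n → ℂ => x i)
    ((ContinuousLinearMap.proj (R := ℂ) (φ := fun _ : Fin n => ℂ) i).analyticAt _)] with x h1 h2 h3
  rw [h1, coordG, h3]
  exact congrFun h2 i

/-! ### triangularization -/

lemma triang : ∀ (n : ℕ) (V : Type) [AddCommGroup V] [Module ℂ V] [FiniteDimensional ℂ V]
    (f : Module.End ℂ V), Module.finrank ℂ V = n →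
    ∃ (b : Module.Basis (Fin n) ℂ V) (B : Matrix (Fin n) (Fin n) ℂ),
      (∀ j, f (b j) = ∑ i, B i j • b i) ∧ ∀ i j, B i j ≠ 0 → j ≤ i := by
  intro n
  induction n with
  | zero =>
    intro V _ _ _ f h
    exact ⟨Module.finBasisOfFinrankEq ℂ V h, 0, fun j => j.elim0, fun i => i.elim0⟩
  | succ n ih =>
    intro V _ _ _ f h
    have hnt : Nontrivial V := Module.nontrivial_of_finrank_pos (R := ℂ) (by omega)
    obtain ⟨μ, hμ⟩ := Module.End.exists_eigenvalue (K := ℂ) (V := Module.Dual ℂ V) f.dualMap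
    obtain ⟨l, hl⟩ := hμ.exists_hasEigenvector
    have hl0 : l ≠ 0 := hl.2
    have hlf : ∀ v, l (f v) = μ * l v := by
      intro v
      have := congrArg (fun m : Module.Dual ℂ V => m v) hl.apply_eq_smul
      simpa using this
    have hH : ∀ v ∈ LinearMap.ker l, f v ∈ LinearMap.ker l := by
      intro v hv
      rw [LinearMap.mem_ker] at hv ⊢
      rw [hlf, hv, mul_zero]
    have hfin : Module.finrank ℂ (LinearMap.ker l) = n := by
      have h1 := LinearMap.finrank_range_add_finrank_ker l
      have h2 : Module.finrank ℂ (LinearMap.range l) = 1 := by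
        rw [LinearMap.range_eq_top.2 (LinearMap.surjective hl0), finrank_top, Module.finrank_self]
      omega
    obtain ⟨b', B', hb', hB'⟩ := ih (LinearMap.ker l) (f.restrict hH) hfin
    obtain ⟨y, hy⟩ : ∃ y, l y = 1 := LinearMap.surjective hl0 1
    set b := Module.Basis.mkFinCons y b' (by
      intro c x hx hc
      have := congrArg l hc
      rw [LinearMap.mem_ker] at hx
      simpa [hx, hy] using this) (by
      intro z
      refine ⟨-l z, ?_⟩
      rw [LinearMap.mem_ker]
      simp [hy]) with hb
    have hbc : (b : Fin (n + 1) → V) = Fin.cons y ((↑) ∘ b') := Module.Basis.coe_mkFinCons _ _ _ _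
    refine ⟨b, Matrix.of fun i j => Fin.cases (b.repr (f y) i)
      (fun j' => Fin.cases 0 (fun i' => B' i' j') i) j, ?_, ?_⟩
    · intro j
      refine Fin.cases ?_ (fun j => ?_) j
      · simp only [Matrix.of_apply, Fin.cases_zero]
        rw [b.sum_repr, hbc, Fin.cons_zero]
      · simp only [Matrix.of_apply, Fin.cases_succ]
        rw [Fin.sum_univ_succ]
        simp only [Fin.cases_succ, Fin.cases_zero, zero_smul, zero_add, hbc, Fin.cons_succ,
          Function.comp_apply]
        have := congrArg (Subtype.val) (hb' j)
        rw [LinearMap.coe_restrict_apply] at this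
        rw [this]
        simp
    · intro i j
      refine Fin.cases (fun _ => Fin.zero_le _) (fun j => ?_) j
      simp only [Matrix.of_apply, Fin.cases_succ]
      refine Fin.cases (fun h => absurd rfl h) (fun i h => ?_) i
      rw [Fin.cases_succ] at h
      exact Fin.succ_le_succ_iff.2 (hB' i j h)

lemma triang_matrix (A : Matrix (Fin n) (Fin n) ℂ) :
    ∃ P Q B : Matrix (Fin n) (Fin n) ℂ, P * Q = 1 ∧ A * P = P * B ∧ ∀ i j, B i j ≠ 0 → j ≤ i := by
  obtain ⟨b, B, hb, hB⟩ := triang n (Fin n → ℂ) (Matrix.toLin' A) (by simp)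
  refine ⟨(Pi.basisFun ℂ (Fin n)).toMatrix b, b.toMatrix (Pi.basisFun ℂ (Fin n)), B,
    Module.Basis.toMatrix_mul_toMatrix_flip _ _, ?_, hB⟩
  ext i j
  have := congrFun (hb j) i
  rw [Matrix.toLin'_apply, Matrix.mulVec, dotProduct, Finset.sum_apply] at this
  rw [Matrix.mul_apply, Matrix.mul_apply]
  simp only [Module.Basis.toMatrix_apply, Pi.basisFun_repr]
  rw [this]
  refine Finset.sum_congr rfl fun k _ => ?_
  rw [Pi.smul_apply, smul_eq_mul, mul_comm]

lemma charpoly_conj {A P Q B : Matrix (Fin n) (Fin n) ℂ} (h1 : P * Q = 1) (h2 : A * P = P * B) :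
    A.charpoly = B.charpoly := by
  have e : A = P * B * Q := by rw [← h2, mul_assoc, h1, mul_one]
  have h3 : Q * P = 1 := mul_eq_one_comm.1 h1
  rw [e, Matrix.charpoly_mul_comm, ← mul_assoc, h3, one_mul]

/-- linear part of `D f` -/
lemma lc_vf (δ : Fin n → On n) (hδ : ∀ i, ev0 (δ i) = 0) (i : Fin n) (f : On n) :
    lc i (vf δ f) = ∑ k, linPart δ i k * lc k f := by
  rw [vf_apply, applyVF, lc_sum]
  refine Finset.sum_congr rfl fun k _ => ?_
  rw [lc_mul, hδ, zero_mul, zero_add, mul_comm]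
  rfl

lemma ev0_vf (δ : Fin n → On n) (hδ : ∀ i, ev0 (δ i) = 0) (f : On n) : ev0 (vf δ f) = 0 := by
  rw [vf_apply, applyVF, ev0_sum]
  exact Finset.sum_eq_zero fun k _ => by rw [ev0_mul, hδ, zero_mul]

/-- Euler field -/
def eul (w : Fin n → ℚ) : Derivation ℂ (On n) (On n) := vf fun i => (w i : ℂ) • coordG i

lemma eul_apply (w : Fin n → ℚ) (g : On n) :
    eul w g = ∑ i, (w i : ℂ) • (coordG i * pd i g) := by
  rw [eul, vf_apply, applyVF]
  refine Finset.sum_congr rfl fun i _ => ?_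
  rw [smul_mul_assoc]

lemma eul_coordG (w : Fin n → ℚ) (i : Fin n) : eul w (coordG i) = (w i : ℂ) • coordG i :=
  vf_coordG _ i

lemma isQH_of (w : Fin n → ℚ) (d : ℚ) (g : On n)
    (h : ∀ β, (TRO n).co β g ≠ 0 → wt (fun i => ((w i : ℚ) : ℝ)) β = d) : IsQH n w d g := by
  classical
  rw [IsQH, ← eul_apply]
  have hm : ∀ α, eul w ((TRO n).mon α) =
      ((wt (fun i => ((w i : ℚ) : ℝ)) α : ℝ) : ℂ) • (TRO n).mon α := by
    intro α
    refine (TRO n).mon_induct (fun a α => eul w a =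
      ((wt (fun i => ((w i : ℚ) : ℝ)) α : ℝ) : ℂ) • a) ?_ ?_ ?_ α
    · simp [wt_zero]
    · intro a b α β ha hb
      rw [Derivation.leibniz, ha, hb, wt_add]
      push_cast
      rw [add_smul, smul_eq_mul, smul_eq_mul, mul_smul_comm, mul_smul_comm, mul_comm b a, add_comm]
    · intro i
      change eul w (coordG i) = _ • coordG i
      rw [eul_coordG, wt_single]
      push_cast
      rw [one_mul]
  refine (TRO n).ext_co fun β => ?_
  have hone : ∀ i : Fin n, (0:ℝ) < (fun _ => 1 : Fin n → ℝ) i := fun _ => one_pos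
  rw [(TRO n).co_D (eul w) (fun i => by
    rw [fil_one_iff, co_zero_eq]
    change ev0 (eul w (coordG i)) = 0
    rw [eul_coordG, ev0_smul, x_mem, mul_zero]) g β (low hone (wt (fun _ => 1) β))
    fun α hα => (mem_low _ _ _).2 hα]
  simp only [hm, TR.co_smul, TR.co_mon]
  rw [Finset.sum_eq_single β]
  · rw [if_pos rfl, mul_one]
    by_cases h0 : (TRO n).co β g = 0
    · rw [h0]; ring
    · rw [h β h0, mul_comm]
      norm_cast
  · intro α _ hα
    rw [if_neg (Ne.symm hα)]; ring
  · intro hn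
    exact absurd ((mem_low _ _ _).2 le_rfl) hn

end QH

namespace QH

/-- Conjugated derivation. -/
def conjD (φ : CoordChange n) (D : Derivation ℂ (On n) (On n)) : Derivation ℂ (On n) (On n) where
  toFun f := pbHom (CCsymm φ) (D (pbHom φ f))
  map_add' f g := by simp only [map_add]
  map_smul' c f := by
    rw [map_smul, Derivation.map_smul, map_smul]; rfl
  map_one_eq_zero' := by
    change pbHom (CCsymm φ) (D (pbHom φ 1)) = 0
    simp only [map_one, Derivation.map_one_eq_zero, map_zero]
  leibniz' f g := by
    change pbHom (CCsymm φ) (D (pbHom φ (f * g))) = f * pbHom (CCsymm φ) (D (pbHom φ g)) +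
      g * pbHom (CCsymm φ) (D (pbHom φ f))
    rw [map_mul, Derivation.leibniz, map_add, smul_eq_mul, smul_eq_mul, map_mul, map_mul, pb_pb,
      pb_pb]

lemma conjD_apply (φ : CoordChange n) (D : Derivation ℂ (On n) (On n)) (f : On n) :
    conjD φ D f = pbHom (CCsymm φ) (D (pbHom φ f)) := rfl

lemma forward (X : Set (Fin n → ℂ)) (w : Fin n → ℚ) (h : VarQH n X w) :
    ∃ δ : Fin n → On n, δ ∈ ThetaX n X ∧ (∀ i, δ i ∈ mId n) ∧ EigsEq δ w := by
  obtain ⟨φ, m, h, d, hspan, -, hq⟩ := h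
  set D := conjD φ (eul w) with hDdef
  have hD0 : ∀ f, ev0 (D f) = 0 := by
    intro f
    rw [hDdef, conjD_apply, ev0_pb]
    exact ev0_vf _ (fun i => by rw [ev0_smul, x_mem, mul_zero]) _
  set δ : Fin n → On n := fun i => D (coordG i) with hδ
  have hvf : ∀ f, vf δ f = D f := by
    refine der_ext (TRO n) (vf δ) D ?_ ?_
    · intro i
      rw [fil_one_iff, co_zero_eq]
      exact ev0_vf _ (fun i => hD0 _) _
    · intro i
      exact vf_coordG δ i
  have hDh : ∀ j, D (h j) = (d j : ℂ) • h j := by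
    intro j
    have h1 : eul w (pbHom φ (h j)) = (d j : ℂ) • pbHom φ (h j) := by
      rw [eul_apply]; exact hq j
    rw [hDdef, conjD_apply, h1, map_smul, pb_pb]
  refine ⟨δ, ?_, fun i => mem_mId.2 (hD0 _), ?_⟩
  · change ∀ g ∈ IX n X, applyVF δ g ∈ IX n X
    intro g hg
    rw [← vf_apply, hvf]
    rw [← hspan] at hg ⊢
    refine Submodule.span_induction (p := fun g _ => D g ∈ Ideal.span (Set.range h))
      ?_ ?_ ?_ ?_ hg
    · rintro _ ⟨j, rfl⟩
      rw [hDh, Algebra.smul_def]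
      exact Ideal.mul_mem_left _ _ (Ideal.subset_span ⟨j, rfl⟩)
    · rw [map_zero]; exact Ideal.zero_mem _
    · intro a b _ _ ha hb
      rw [map_add]; exact Ideal.add_mem _ ha hb
    · intro a b hb hDb
      rw [smul_eq_mul, Derivation.leibniz]
      exact Ideal.add_mem _ (Ideal.mul_mem_left _ _ hDb) (Ideal.mul_mem_right _ _ hb)
  · set y : Fin n → On n := fun i => pbHom (CCsymm φ) (coordG i) with hy
    have hDy : ∀ i, D (y i) = (w i : ℂ) • y i := by
      intro i
      rw [hDdef, conjD_apply, hy]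
      simp only []
      rw [pb_pb', eul_coordG, map_smul]
    set P : Matrix (Fin n) (Fin n) ℂ := Matrix.of fun i j => lc i (y j) with hP
    set Q : Matrix (Fin n) (Fin n) ℂ := Matrix.of fun i j => lc i (pbHom φ (coordG j)) with hQ
    have hPQ : P * Q = 1 := by
      ext i j
      have := lc_pb (CCsymm φ) i (pbHom φ (coordG j))
      rw [pb_pb, lc_coordG] at this
      rw [Matrix.mul_apply, Matrix.one_apply, this]
      refine Finset.sum_congr rfl fun k _ => ?_
      rw [mul_comm]; rfl
    have hAP : linPart δ * P = P * Matrix.diagonal fun i => (w i : ℂ) := by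
      ext i j
      have := lc_vf δ (fun i => hD0 _) i (y j)
      rw [hvf, hDy, lc_smul] at this
      rw [Matrix.mul_diagonal, Matrix.mul_apply, mul_comm]
      exact this.symm
    rw [EigsEq, charpoly_conj hPQ hAP, Matrix.charpoly_diagonal]

lemma fil_pull (φ : CoordChange n) (y : Fin n → On n) (hy : ∀ i, pullback φ (y i) = coordG i)
    (f : On n) (u : Fin n → ℝ) (c : ℝ) :
    Fil u c ((TRpull φ y hy).τ f) ↔ Fil u c ((TRO n).τ (pbHom φ f)) := Iff.rfl

lemma backward (X : Set (Fin n → ℂ)) (hX : (0 : Fin n → ℂ) ∈ X) (δ : Fin n → On n)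
    (hδX : δ ∈ ThetaX n X) (hδm : ∀ i, δ i ∈ mId n) (w : Fin n → ℚ) (hw : ∀ i, 0 < w i)
    (hE : EigsEq δ w) : ∃ w : Fin n → ℚ, (∀ i, 0 < w i) ∧ VarQH n X w := by
  classical
  have hδ0 : ∀ i, ev0 (δ i) = 0 := fun i => mem_mId.1 (hδm i)
  obtain ⟨P, Q, B, hPQ, hAP, hB⟩ := triang_matrix (linPart δ)
  -- the diagonal entries are among the given weights
  have hlam : ∀ i, ∃ k, B i i = (w k : ℂ) := by
    intro i
    have h1 : B.charpoly = ∏ i, (Polynomial.X - C (B i i)) := by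
      rw [← Matrix.charpoly_transpose, Matrix.charpoly_of_isUpperTriangular]
      · rfl
      · intro i j hij
        by_contra hne
        exact absurd (hB j i hne) (not_le.2 hij)
    have h2 : (∏ k, (Polynomial.X - C ((w k : ℂ)))).eval (B i i) = 0 := by
      rw [← hE, charpoly_conj hPQ hAP, h1, Polynomial.eval_prod]
      exact Finset.prod_eq_zero (Finset.mem_univ i) (by simp)
    rw [Polynomial.eval_prod, Finset.prod_eq_zero_iff] at h2
    obtain ⟨k, -, hk⟩ := h2
    refine ⟨k, ?_⟩
    simpa [sub_eq_zero] using hk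
  choose κ hκ using hlam
  set lam : Fin n → ℚ := fun i => w (κ i) with hlamdef
  have hlampos : ∀ i, 0 < lam i := fun i => hw _
  set lr : Fin n → ℝ := fun i => ((lam i : ℚ) : ℝ) with hlr
  have hlrpos : ∀ i, 0 < lr i := fun i => by
    change (0 : ℝ) < ((lam i : ℚ) : ℝ)
    exact_mod_cast hlampos i
  have hBl : ∀ i, B i i = (lr i : ℂ) := by
    intro i
    rw [hκ, hlr]; norm_cast
  -- linear coordinates
  set z : Fin n → On n := fun j => ∑ k, P k j • coordG k with hz
  have hz0 : ∀ j, ev0 (z j) = 0 := by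
    intro j
    rw [hz]
    simp only [ev0_sum, ev0_smul, x_mem, mul_zero, Finset.sum_const_zero]
  have hzl : ∀ i j, lc i (z j) = P i j := by
    intro i j
    rw [hz]
    simp only [lc_sum, lc_smul, lc_coordG, mul_ite, mul_one, mul_zero]
    rw [Finset.sum_ite_eq Finset.univ i]; simp
  have hPdet : P.det ≠ 0 := by
    intro h0
    have := congrArg Matrix.det hPQ
    rw [Matrix.det_mul, h0, zero_mul, Matrix.det_one] at this
    exact zero_ne_one this
  have hzm : (Matrix.of fun i j => lc i (z j)) = P := by
    ext i j; exact hzl i j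
  obtain ⟨φ₁, hφ₁⟩ := exists_coord z hz0 (by rw [hzm]; exact hPdet)
  set T₁ := TRpull φ₁ z hφ₁ with hT₁
  set D := vf δ with hD
  set u : Fin n → ℕ := fun i => n + 1 + i with hu
  have hupos : ∀ i, 0 < u i := fun i => by rw [hu]; simp only []; omega
  have hfil : ∀ j, Fil (fun i => (u i : ℝ)) (u j + 1) (T₁.τ (D (T₁.x j) - (lr j : ℂ) • T₁.x j)) := by
    intro j
    change Fil (fun i => (u i : ℝ)) (u j + 1) (T₁.τ (D (z j) - (lr j : ℂ) • z j))
    set e : On n := D (z j) - ∑ m, B m j • z m with he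
    have he0 : ev0 e = 0 := by
      rw [he, ev0_sub, hD, ev0_vf δ hδ0, ev0_sum]
      simp [ev0_smul, hz0]
    have hel : ∀ i, lc i e = 0 := by
      intro i
      rw [he, lc_sub, hD, lc_vf δ hδ0, lc_sum]
      simp only [lc_smul, hzl]
      have := congrFun (congrFun hAP i) j
      rw [Matrix.mul_apply, Matrix.mul_apply] at this
      rw [this, sub_eq_zero]
      exact Finset.sum_congr rfl fun m _ => mul_comm _ _
    have hep : Fil (fun _ => 1) 2 (T₁.τ e) := by
      rw [hT₁, fil_pull]
      refine fil_two (by rw [ev0_pb, he0]) fun i => ?_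
      rw [lc_pb]
      exact Finset.sum_eq_zero fun k _ => by rw [hel, zero_mul]
    have heu : Fil (fun i => (u i : ℝ)) (u j + 1) (T₁.τ e) := by
      intro α hα
      have h1 := hep α hα
      have h2 : ((n:ℝ) + 1) * wt (fun _ => 1) α ≤ wt (fun i => (u i : ℝ)) α := by
        unfold wt
        rw [Finset.mul_sum]
        refine Finset.sum_le_sum fun i _ => ?_
        rw [mul_one, mul_comm]
        refine mul_le_mul_of_nonneg_left ?_ (Nat.cast_nonneg _)
        rw [hu]; push_cast
        have : (0:ℝ) ≤ (i : ℕ) := Nat.cast_nonneg _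
        linarith
      have h3 : (u j : ℝ) + 1 ≤ ((n:ℝ) + 1) * 2 := by
        have : u j + 1 ≤ (n + 1) * 2 := by
          rw [hu]; simp only []
          have := j.2
          omega
        exact_mod_cast this
      have h4 : ((n:ℝ) + 1) * 2 ≤ ((n:ℝ) + 1) * wt (fun _ => 1) α :=
        mul_le_mul_of_nonneg_left h1 (by positivity)
      linarith
    have hsplit : D (z j) - (lr j : ℂ) • z j =
        e + ∑ m, (if m = j then 0 else B m j) • z m := by
      have e1 : ∑ m, B m j • z m = (lr j : ℂ) • z j + ∑ m, (if m = j then 0 else B m j) • z m := by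
        rw [← Finset.add_sum_erase Finset.univ _ (Finset.mem_univ j), hBl,
          ← Finset.add_sum_erase Finset.univ (fun m => (if m = j then 0 else B m j) • z m)
            (Finset.mem_univ j)]
        rw [if_pos rfl, zero_smul, zero_add]
        congr 1
        refine Finset.sum_congr rfl fun m hm => ?_
        rw [if_neg (Finset.ne_of_mem_erase hm)]
      rw [he, e1]; abel
    rw [hsplit, map_add, map_sum]
    refine heu.add (Fil.sum _ fun m _ => ?_)
    by_cases hmj : m = j
    · rw [if_pos hmj, zero_smul, map_zero]; exact Fil_zero _ _
    · rw [if_neg hmj, map_smul]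
      by_cases hB0 : B m j = 0
      · rw [hB0, zero_smul]; exact Fil_zero _ _
      · refine Fil.smul ?_ _
        have h1 := T₁.fil_x (fun i => (u i : ℝ)) m
        refine h1.mono ?_
        have h2 : j < m := lt_of_le_of_ne (hB m j hB0) (Ne.symm hmj)
        have h3 : u j + 1 ≤ u m := by
          rw [hu]; simp only []
          have : (j : ℕ) < m := h2
          omega
        exact_mod_cast h3
  choose N y hyN hyf using fun i => T₁.exists_eigen hupos D hlrpos hfil i
  -- the new coordinates
  set g : Fin n → On n := fun j => pbHom φ₁ (y j) with hg
  have hgf : ∀ j, Fil (fun i => (u i : ℝ)) (u j + 1) ((TRO n).τ (g j - coordG j)) := by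
    intro j
    have h1 := hyf j
    have h2 : pbHom φ₁ (y j - T₁.x j) = g j - coordG j := by
      rw [map_sub]
      congr 1
      exact hφ₁ j
    rw [hT₁, fil_pull] at h1
    rw [← h2]; exact h1
  have hg0 : ∀ j, ev0 (g j) = 0 := by
    intro j
    have h1 : ev0 (g j - coordG j) = 0 := by
      rw [← co_zero_eq]
      by_contra hne
      have := hgf j 0 hne
      rw [wt_zero] at this
      have h2 : (0:ℝ) ≤ u j := Nat.cast_nonneg _
      linarith
    rw [ev0_sub, x_mem, sub_zero] at h1
    exact h1
  have hgl : ∀ i j, i ≤ j → lc i (g j) = if i = j then 1 else 0 := by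
    intro i j hij
    have h1 : lc i (g j - coordG j) = 0 := by
      rw [← lc_co]
      by_contra hne
      have := hgf j _ hne
      rw [wt_single] at this
      have h2 : u j + 1 ≤ u i := by
        have : (u j : ℝ) + 1 ≤ u i := by simpa using this
        exact_mod_cast this
      rw [hu] at h2
      simp only [] at h2
      have : (i : ℕ) ≤ j := hij
      omega
    rw [lc_sub, lc_coordG, sub_eq_zero] at h1
    exact h1
  set M : Matrix (Fin n) (Fin n) ℂ := Matrix.of fun i j => lc i (g j) with hM
  have hMdet : M.det = 1 := by
    rw [Matrix.det_of_isLowerTriangular]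
    · exact Finset.prod_eq_one fun i _ => by rw [hM, Matrix.of_apply, hgl i i le_rfl, if_pos rfl]
    · intro i j hij
      have hij' : i < j := hij
      rw [hM, Matrix.of_apply, hgl i j hij'.le, if_neg hij'.ne]
  have hyg : ∀ j, y j = pbHom (CCsymm φ₁) (g j) := fun j => (pb_pb φ₁ (y j)).symm
  have hzx : ∀ k, pbHom (CCsymm φ₁) (coordG k) = z k := by
    intro k
    have : (coordG k : On n) = pbHom φ₁ (z k) := (hφ₁ k).symm
    rw [this, pb_pb]
  have hyl : (Matrix.of fun i j => lc i (y j)) = P * M := by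
    ext i j
    rw [Matrix.of_apply, hyg, lc_pb, Matrix.mul_apply]
    refine Finset.sum_congr rfl fun k _ => ?_
    rw [hzx, hzl, mul_comm]; rfl
  have hy0 : ∀ j, ev0 (y j) = 0 := fun j => by rw [hyg, ev0_pb, hg0]
  obtain ⟨φ, hφ⟩ := exists_coord y hy0 (by
    rw [hyl, Matrix.det_mul, hMdet, mul_one]; exact hPdet)
  set T := TRpull φ y hφ with hT
  obtain ⟨m, h, al, hspan, hal⟩ := T.hom_gens D hlrpos (by
      intro i
      rw [hT, fil_pull, fil_one_iff, co_zero_eq, ev0_pb, hD, ev0_vf δ hδ0])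
    (fun i => ⟨N i, hyN i⟩) (IX n X) (fun f hf => hδX f hf) (one_notMem_IX hX)
  have hd : ∀ α, wt lr α = ((∑ i, (α i : ℚ) * lam i : ℚ) : ℝ) := by
    intro α
    rw [wt, hlr]; push_cast; rfl
  refine ⟨lam, hlampos, φ, m, h, fun j => ∑ i, (al j i : ℚ) * lam i, hspan, ?_, ?_⟩
  · intro j
    have h1 := wt_pos hlrpos (hal j).1
    rw [hd] at h1
    exact_mod_cast h1
  · intro j
    refine isQH_of _ _ _ fun β hβ => ?_
    rw [← hd]
    exact (hal j).2 β hβ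

end QH


/-- Theorem 3.1 applied to varieties: `X` is quasihomogeneous in an appropriate coordinate
system iff there exists a logarithmic vector field `δ ∈ Θ_X` with `δ(0) = 0` whose
eigenvalues are all positive rational numbers. -/
theorem varQH_iff_exists_logarithmic (n : ℕ) (X : Set (Fin n → ℂ))
    (hX : IsAnalyticGermAt0 n X) :
    (∃ w : Fin n → ℚ, (∀ i, 0 < w i) ∧ VarQH n X w) ↔
      ∃ δ : Fin n → On n, δ ∈ ThetaX n X ∧ (∀ i, δ i ∈ mId n) ∧
        ∃ w : Fin n → ℚ, (∀ i, 0 < w i) ∧ EigsEq δ w := by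
  constructor
  · rintro ⟨w, hw, h⟩
    obtain ⟨δ, h1, h2, h3⟩ := QH.forward X w h
    exact ⟨δ, h1, h2, w, hw, h3⟩
  · rintro ⟨δ, h1, h2, w, hw, h3⟩
    exact QH.backward X hX.1 δ h1 h2 w hw h3

end
end

section
/- Let w = (w_1,...,w_n) ∈ ℂ^n, let δ_S = Σ_{i=1}^n w_i x_i ∂_{x_i} on Ô_n = ℂ[[x_1,...,x_n]], let δ_N be a formal vector field with δ_N(0) = 0, nilpotent linear part, and [δ_S, δ_N] = 0, and set δ = δ_S + δ_N. Then for any ideal I ⊆ Ô_n, δ(I) ⊆ I if and only if δ_S(I) ⊆ I and δ_N(I) ⊆ I. -/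
set_option maxHeartbeats 1000000
set_option synthInstance.maxHeartbeats 1000000

noncomputable section

/-- The ring `Ô_n = ℂ[[x₁, …, xₙ]]` of formal power series. -/
abbrev FPS (n : ℕ) : Type := MvPowerSeries (Fin n) ℂ

/-- The `i`-th partial derivative of a formal power series. -/
def fpd {n : ℕ} (i : Fin n) (f : FPS n) : FPS n :=
  fun m => ((m i : ℂ) + 1) * MvPowerSeries.coeff (R := ℂ) (m + Finsupp.single i 1) f

/-- The action `δ(f) = Σ aᵢ ∂f/∂xᵢ` of a formal vector field `δ = Σ aᵢ ∂ᵢ`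
(given by its coefficients `aᵢ ∈ Ô_n`) on a formal power series `f`. -/
def applyPS {n : ℕ} (δ : Fin n → FPS n) (f : FPS n) : FPS n := ∑ i, δ i * fpd i f

/-- The linear part `j¹δ` of a formal vector field, as the matrix `(∂δⱼ/∂xᵢ)(0)`. -/
def linPartPS {n : ℕ} (δ : Fin n → FPS n) : Matrix (Fin n) (Fin n) ℂ :=
  Matrix.of fun i j => MvPowerSeries.coeff (R := ℂ) (Finsupp.single i 1) (δ j)

/-- The semisimple (Euler) vector field `δ_S = Σ wᵢ xᵢ ∂ᵢ` attached to weights `w`. -/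
def eulerPS {n : ℕ} (w : Fin n → ℂ) : Fin n → FPS n :=
  fun j => MvPowerSeries.C (σ := Fin n) (R := ℂ) (w j) * MvPowerSeries.X j

/-- `δ(0) = 0`: all coefficients of the vector field lie in the maximal ideal. -/
def VanishAt0 {n : ℕ} (δ : Fin n → FPS n) : Prop :=
  ∀ j, MvPowerSeries.constantCoeff (σ := Fin n) (R := ℂ) (δ j) = 0

/-- Vanishing of the Lie bracket `[δ, η] = 0` of two formal vector fields,
componentwise: `δ(ηⱼ) - η(δⱼ) = 0` for all `j`. -/
def CommutePS {n : ℕ} (δ η : Fin n → FPS n) : Prop :=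
  ∀ j, applyPS δ (η j) = applyPS η (δ j)

namespace InvAux

open MvPowerSeries

/-- Power series all of whose coefficients of degree `< k` vanish. -/
def K (n k : ℕ) : Submodule ℂ (FPS n) where
  carrier := {f | ∀ d : Fin n →₀ ℕ, d.degree < k → coeff d f = 0}
  zero_mem' := by intro d _; simp
  add_mem' := by
    intro a b ha hb d hd
    rw [map_add, ha d hd, hb d hd, add_zero]
  smul_mem' := by
    intro c a ha d hd
    rw [map_smul, ha d hd, smul_zero]

theorem mem_K {n k : ℕ} {f : FPS n} :
    f ∈ K n k ↔ ∀ d : Fin n →₀ ℕ, d.degree < k → coeff d f = 0 := Iff.rfl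

theorem mem_K_zero {n : ℕ} (f : FPS n) : f ∈ K n 0 := fun d hd => absurd hd (by simp)

theorem mul_mem_K {n j k : ℕ} {f g : FPS n} (hf : f ∈ K n j) (hg : g ∈ K n k) :
    f * g ∈ K n (j + k) := by
  intro d hd
  rw [coeff_mul]
  refine Finset.sum_eq_zero fun p hp => ?_
  rw [Finset.HasAntidiagonal.mem_antidiagonal] at hp
  have h : p.1.degree + p.2.degree = d.degree := by rw [← hp, map_add]
  rcases lt_or_ge p.1.degree j with h1 | h1
  · rw [hf _ h1, zero_mul]
  · rw [hg _ (by omega), mul_zero]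

theorem mul_mem_K' {n k : ℕ} {f g : FPS n} (hg : g ∈ K n k) : f * g ∈ K n k := by
  simpa using mul_mem_K (mem_K_zero f) hg

theorem mem_K_one {n : ℕ} {f : FPS n} (hf : constantCoeff f = 0) : f ∈ K n 1 := by
  intro d hd
  have : d = 0 := by
    rw [← Finsupp.degree_eq_zero_iff]; omega
  subst this
  simpa using hf

theorem X_mem_K {n : ℕ} (i : Fin n) : (X i : FPS n) ∈ K n 1 := mem_K_one (by simp)

open Classical in
/-- The monomials of `f` whose first variable is `X i`, divided by `X i`. -/
def part {n : ℕ} (f : FPS n) (i : Fin n) : FPS n :=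
  fun d => if ∀ j, j < i → d j = 0 then coeff (d + Finsupp.single i 1) f else 0

theorem K_succ_decomp {n k : ℕ} {f : FPS n} (hf : f ∈ K n (k + 1)) :
    ∃ g : Fin n → FPS n, (∀ i, g i ∈ K n k) ∧ f = ∑ i, X i * g i := by
  classical
  refine ⟨part f, ?_, ?_⟩
  · intro i d hd
    change (if _ then _ else _) = (0 : ℂ)
    split_ifs
    · exact hf _ (by simp; omega)
    · rfl
  · ext d
    rw [map_sum]
    have key : ∀ i : Fin n, coeff d (X i * part f i) =
        if (d i ≠ 0 ∧ ∀ j, j < i → d j = 0) then coeff d f else 0 := by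
      intro i
      rw [X_def, coeff_monomial_mul, one_mul]
      by_cases h : d i = 0
      · rw [if_neg, if_neg]
        · simp [h]
        · intro h2
          have := h2 i
          simp [h] at this
      · have hle : Finsupp.single i 1 ≤ d := by
          rw [Finsupp.single_le_iff]; omega
        rw [if_pos hle]
        change (if _ then _ else _) = _
        rw [tsub_add_cancel_of_le hle]
        congr 1
        simp only [h, ne_eq, not_false_eq_true, true_and, eq_iff_iff]
        refine forall_congr' fun j => forall_congr' fun hj => ?_
        simp [Finsupp.single_apply, hj.ne']
    rw [Finset.sum_congr rfl fun i _ => key i]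
    by_cases hd : d = 0
    · subst hd
      simpa using hf 0 (by simp)
    · have hex : ∃ i, d i ≠ 0 := by
        by_contra h
        push Not at h
        exact hd (Finsupp.ext h)
      obtain ⟨i, hi, hmin⟩ := WellFounded.has_min (wellFounded_lt (α := Fin n))
        {i | d i ≠ 0} hex
      have hmin' : ∀ j, j < i → d j = 0 := fun j hj => by
        by_contra h
        exact hmin j h hj
      rw [Finset.sum_eq_single i]
      · rw [if_pos ⟨hi, hmin'⟩]
      · intro b _ hb
        rw [if_neg]
        rintro ⟨h1, h2⟩
        rcases lt_or_gt_of_ne hb with h | h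
        · exact h1 (hmin' b h)
        · exact hi (h2 i h)
      · simp

/-- The derivation attached to a vector field. -/
def der {n : ℕ} (δ : Fin n → FPS n) : Derivation ℂ (FPS n) (FPS n) :=
  ∑ i, δ i • pderiv ℂ i

theorem fpd_eq {n : ℕ} (i : Fin n) (f : FPS n) : fpd i f = pderiv ℂ i f := by
  ext d
  rw [coeff_pderiv, mul_comm]
  rfl

theorem der_apply {n : ℕ} (δ : Fin n → FPS n) (f : FPS n) : der δ f = ∑ i, δ i * pderiv ℂ i f := by
  have : (der δ) f = ∑ i, (δ i • pderiv ℂ i : Derivation ℂ (FPS n) (FPS n)) f := by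
    rw [der, ← Derivation.coeFnAddMonoidHom_apply, map_sum, Finset.sum_apply]
    rfl
  rw [this]
  rfl

theorem applyPS_eq {n : ℕ} (δ : Fin n → FPS n) (f : FPS n) : applyPS δ f = der δ f := by
  simp [der_apply, applyPS, fpd_eq]

theorem der_X {n : ℕ} (δ : Fin n → FPS n) (j : Fin n) : der δ (X j) = δ j := by
  classical
  rw [der_apply, Finset.sum_eq_single j]
  · simp
  · intro i _ h
    rw [pderiv_X_of_ne h.symm, mul_zero]
  · simp

theorem pderiv_mem_K {n k : ℕ} (i : Fin n) {f : FPS n} (hf : f ∈ K n (k + 1)) :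
    pderiv ℂ i f ∈ K n k := by
  intro d hd
  rw [coeff_pderiv, hf _ (by simp; omega), zero_mul]

theorem der_mem_K {n : ℕ} {δ : Fin n → FPS n} (h : VanishAt0 δ) {k : ℕ} {f : FPS n}
    (hf : f ∈ K n k) : der δ f ∈ K n k := by
  cases k with
  | zero => exact mem_K_zero _
  | succ k =>
    rw [der_apply]
    refine Submodule.sum_mem _ fun i _ => ?_
    rw [add_comm]
    exact mul_mem_K (mem_K_one (h i)) (pderiv_mem_K i hf)

theorem der_mem_K_one {n : ℕ} {δ : Fin n → FPS n} (h : VanishAt0 δ) (f : FPS n) :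
    der δ f ∈ K n 1 := by
  rw [der_apply]
  refine Submodule.sum_mem _ fun i _ => ?_
  exact mul_mem_K (k := 0) (mem_K_one (h i)) (mem_K_zero _)

theorem iter_mem_K {n : ℕ} {δ : Fin n → FPS n} (h : VanishAt0 δ) {k : ℕ} {f : FPS n}
    (hf : f ∈ K n k) (s : ℕ) : (der δ)^[s] f ∈ K n k := by
  induction s generalizing f with
  | zero => exact hf
  | succ s ih => exact ih (der_mem_K h hf)

theorem iter_add {n : ℕ} (D : Derivation ℂ (FPS n) (FPS n)) (f g : FPS n) (s : ℕ) :
    D^[s] (f + g) = D^[s] f + D^[s] g := by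
  induction s generalizing f g with
  | zero => rfl
  | succ s ih => simp only [Function.iterate_succ_apply, map_add, ih]

theorem iter_sum {n : ℕ} (D : Derivation ℂ (FPS n) (FPS n)) (f : Fin n → FPS n) (s : ℕ) :
    D^[s] (∑ i, f i) = ∑ i, D^[s] (f i) := by
  induction s generalizing f with
  | zero => rfl
  | succ s ih => simp only [Function.iterate_succ_apply, map_sum, ih]

theorem iter_mul_mem {n : ℕ} {δ : Fin n → FPS n} (h : VanishAt0 δ) {k : ℕ} (s : ℕ) :
    ∀ (p q : ℕ) (a b : FPS n), p + q ≤ s → a ∈ K n 1 → b ∈ K n k →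
      (der δ)^[p] a ∈ K n 2 → (der δ)^[q] b ∈ K n (k + 1) → (der δ)^[s] (a * b) ∈ K n (k + 2) := by
  induction s with
  | zero =>
    intro p q a b hpq ha hb hpa hqb
    obtain rfl : p = 0 := by omega
    have := mul_mem_K hpa hb
    rwa [add_comm] at this
  | succ s ih =>
    intro p q a b hpq ha hb hpa hqb
    rcases p with _ | p
    · have := mul_mem_K hpa hb
      rw [add_comm] at this
      exact iter_mem_K h this _
    rcases q with _ | q
    · have := mul_mem_K ha hqb
      rw [add_comm] at this
      exact iter_mem_K h this _
    rw [Function.iterate_succ_apply, Derivation.leibniz, iter_add]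
    refine Submodule.add_mem _ ?_ ?_
    · exact ih (p + 1) q a _ (by omega) ha (der_mem_K h hb) hpa hqb
    · rw [smul_eq_mul, mul_comm]
      exact ih p (q + 1) _ b (by omega) (der_mem_K h ha) hb hpa hqb

/-- The linear coefficients. -/
def lin {n : ℕ} (f : FPS n) : Fin n → ℂ := fun i => coeff (Finsupp.single i 1) f

theorem lin_mul {n : ℕ} {a : FPS n} (ha : constantCoeff a = 0) (g : FPS n) (i : Fin n) :
    coeff (Finsupp.single i 1) (a * g) = coeff (Finsupp.single i 1) a * constantCoeff g := by
  classical
  rw [coeff_mul, Finset.sum_eq_single (Finsupp.single i 1, 0)]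
  · simp
  · rintro ⟨p, q⟩ hp hne
    rw [Finset.HasAntidiagonal.mem_antidiagonal] at hp
    simp only at hp
    have hdeg : p.degree + q.degree = 1 := by rw [← map_add, hp]; simp
    by_cases h : p = 0
    · subst h; simp [ha]
    · exfalso
      have h1 : p.degree ≠ 0 := by rwa [Ne, Finsupp.degree_eq_zero_iff]
      have h2 : q = 0 := by rw [← Finsupp.degree_eq_zero_iff]; omega
      subst h2
      apply hne
      simp at hp
      rw [hp]
  · intro h
    simp at h

theorem lin_der {n : ℕ} {δ : Fin n → FPS n} (h : VanishAt0 δ) (f : FPS n) :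
    lin (der δ f) = (linPartPS δ).mulVec (lin f) := by
  funext i
  rw [lin, der_apply, map_sum, Matrix.mulVec, dotProduct]
  refine Finset.sum_congr rfl fun j _ => ?_
  rw [lin_mul (h j), ← coeff_zero_eq_constantCoeff_apply, coeff_pderiv]
  simp [linPartPS, lin]

theorem lin_iter {n : ℕ} {δ : Fin n → FPS n} (h : VanishAt0 δ) (f : FPS n) (s : ℕ) :
    lin ((der δ)^[s] f) = (linPartPS δ ^ s).mulVec (lin f) := by
  induction s generalizing f with
  | zero => simp
  | succ s ih => rw [Function.iterate_succ_apply, ih, lin_der h, Matrix.mulVec_mulVec, pow_succ]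

theorem mem_K_two {n : ℕ} {f : FPS n} (hf : f ∈ K n 1) (hl : lin f = 0) : f ∈ K n 2 := by
  intro d hd
  rcases Nat.lt_or_ge d.degree 1 with h | h
  · exact hf d h
  · have hd0 : d ≠ 0 := by
      rintro rfl
      simp at h
    obtain ⟨i, hi⟩ : ∃ i, d i ≠ 0 := by
      by_contra h
      push Not at h
      exact hd0 (Finsupp.ext h)
    have hle : Finsupp.single i 1 ≤ d := by
      rw [Finsupp.single_le_iff]; omega
    have h2 : (d - Finsupp.single i 1) + Finsupp.single i 1 = d := tsub_add_cancel_of_le hle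
    have h3 : (d - Finsupp.single i 1).degree + 1 = d.degree := by
      conv_rhs => rw [← h2, map_add, Finsupp.degree_single]
    have h4 : d - Finsupp.single i 1 = 0 := by
      rw [← Finsupp.degree_eq_zero_iff]; omega
    rw [h4, zero_add] at h2
    rw [← h2]
    exact congrFun hl i

theorem step {n : ℕ} {δ : Fin n → FPS n} (h : VanishAt0 δ) (hnil : IsNilpotent (linPartPS δ))
    (k : ℕ) : ∃ r : ℕ, ∀ f ∈ K n k, (der δ)^[r] f ∈ K n (k + 1) := by
  have h1 : ∃ r : ℕ, ∀ f ∈ K n 1, (der δ)^[r] f ∈ K n 2 := by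
    obtain ⟨r, hr⟩ := hnil
    refine ⟨r, fun f hf => mem_K_two (iter_mem_K h hf r) ?_⟩
    rw [lin_iter h, hr, Matrix.zero_mulVec]
  induction k with
  | zero => exact ⟨1, fun f _ => der_mem_K_one h f⟩
  | succ k ih =>
    obtain ⟨r, hr⟩ := ih
    obtain ⟨r1, hr1⟩ := h1
    refine ⟨r1 + r, fun f hf => ?_⟩
    obtain ⟨g, hg, rfl⟩ := K_succ_decomp hf
    rw [iter_sum]
    refine Submodule.sum_mem _ fun i _ => ?_
    exact iter_mul_mem h _ r1 r _ _ le_rfl (X_mem_K i) (hg i) (hr1 _ (X_mem_K i)) (hr _ (hg i))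

theorem nilp {n : ℕ} {δ : Fin n → FPS n} (h : VanishAt0 δ) (hnil : IsNilpotent (linPartPS δ))
    (k : ℕ) : ∃ r : ℕ, ∀ f, (der δ)^[r] f ∈ K n k := by
  induction k with
  | zero => exact ⟨0, fun f => mem_K_zero _⟩
  | succ k ih =>
    obtain ⟨r, hr⟩ := ih
    obtain ⟨r1, hr1⟩ := step h hnil k
    refine ⟨r1 + r, fun f => ?_⟩
    rw [Function.iterate_add_apply]
    exact hr1 _ (hr f)

theorem der_eq_zero {n : ℕ} (E : Derivation ℂ (FPS n) (FPS n)) (hE : ∀ i, E (X i) = 0)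
    (f : FPS n) : E f = 0 := by
  have key : ∀ k f, E f ∈ K n k := by
    intro k
    induction k with
    | zero => exact fun f => mem_K_zero _
    | succ k ih =>
      intro f
      have h1 : f - C (constantCoeff f) ∈ K n (0 + 1) := mem_K_one (by simp)
      obtain ⟨g, -, hg⟩ := K_succ_decomp h1
      have hf : f = algebraMap ℂ (FPS n) (constantCoeff f) + ∑ i, X i * g i := by
        rw [← hg, MvPowerSeries.algebraMap_apply]; simp
      rw [hf, map_add, Derivation.map_algebraMap, zero_add, map_sum]
      refine Submodule.sum_mem _ fun i _ => ?_
      rw [Derivation.leibniz, hE, smul_zero, add_zero, smul_eq_mul, add_comm k 1]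
      exact mul_mem_K (X_mem_K i) (ih _)
  ext d
  exact key (d.degree + 1) f d (by omega)

theorem der_comm {n : ℕ} {δ η : Fin n → FPS n} (h : CommutePS δ η) (f : FPS n) :
    der δ (der η f) = der η (der δ f) := by
  have := der_eq_zero ⁅der δ, der η⁆ (fun i => by
    rw [Derivation.commutator_apply, der_X, der_X, ← applyPS_eq, ← applyPS_eq, h i, sub_self]) f
  rwa [Derivation.commutator_apply, sub_eq_zero] at this

theorem coeff_euler {n : ℕ} (w : Fin n → ℂ) (f : FPS n) (d : Fin n →₀ ℕ) :
    coeff d (der (eulerPS w) f) = (∑ i, w i * d i) * coeff d f := by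
  classical
  rw [der_apply, map_sum, Finset.sum_mul]
  refine Finset.sum_congr rfl fun i _ => ?_
  rw [eulerPS, mul_assoc, coeff_C_mul, X_def, coeff_monomial_mul, one_mul]
  split_ifs with h
  · have h1 : 1 ≤ d i := by simpa [Finsupp.single_le_iff] using h
    rw [coeff_pderiv, tsub_add_cancel_of_le h]
    have : (((d - Finsupp.single i 1 : Fin n →₀ ℕ) i : ℕ) : ℂ) + 1 = d i := by
      have : (d - Finsupp.single i 1 : Fin n →₀ ℕ) i + 1 = d i := by simp; omega
      exact_mod_cast this
    rw [this]; ring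
  · have h1 : d i = 0 := by
      rw [Finsupp.single_le_iff] at h; omega
    simp [h1]

theorem intertwine {M M' : Type*} [AddCommGroup M] [Module ℂ M] [AddCommGroup M'] [Module ℂ M']
    (π : M →ₗ[ℂ] M') (f : Module.End ℂ M) (g : Module.End ℂ M') (h : ∀ x, π (f x) = g (π x))
    (P : Polynomial ℂ) (x : M) : π (Polynomial.aeval f P x) = Polynomial.aeval g P (π x) := by
  induction P using Polynomial.induction_on generalizing x with
  | C a => simp
  | add p q hp hq => simp [hp, hq]
  | monomial m a ih =>
    have := ih (f x)
    rw [pow_succ, ← mul_assoc, map_mul _ _ Polynomial.X, map_mul _ _ Polynomial.X, Polynomial.aeval_X,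
      Polynomial.aeval_X, Module.End.mul_apply, Module.End.mul_apply, this, h]

theorem aeval_mem {M : Type*} [AddCommGroup M] [Module ℂ M] (J : Submodule ℂ M)
    (f : Module.End ℂ M) (h : ∀ x ∈ J, f x ∈ J) {g : Module.End ℂ M}
    (hg : g ∈ Algebra.adjoin ℂ {f}) : ∀ x ∈ J, g x ∈ J := by
  induction hg using Algebra.adjoin_induction with
  | mem x hx => rw [Set.mem_singleton_iff.1 hx]; exact h
  | algebraMap r => intro x hx; exact J.smul_mem r hx
  | add a b _ _ ha hb => intro x hx; exact J.add_mem (ha x hx) (hb x hx)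
  | mul a b _ _ ha hb => intro x hx; exact ha _ (hb x hx)

/-- Coefficients of degree `< k`. -/
def trunc (n k : ℕ) : FPS n →ₗ[ℂ] ({d : Fin n →₀ ℕ // d.degree < k} → ℂ) :=
  LinearMap.pi fun d => coeff d.1

theorem ker_trunc (n k : ℕ) : LinearMap.ker (trunc n k) = K n k := by
  ext f
  rw [LinearMap.mem_ker, mem_K]
  constructor
  · intro h d hd
    exact congrFun h ⟨d, hd⟩
  · intro h
    funext d
    exact h d.1 d.2

theorem finite_deg (n k : ℕ) : Finite {d : Fin n →₀ ℕ // d.degree < k} :=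
  ((Finsupp.finite_of_degree_le (σ := Fin n) k).subset
    (t := {d : Fin n →₀ ℕ | d.degree < k}) fun d (hd : d.degree < k) => le_of_lt hd).to_subtype

theorem finDim (n k : ℕ) : FiniteDimensional ℂ (FPS n ⧸ K n k) := by
  rw [← ker_trunc]
  have := finite_deg n k
  exact Module.Finite.equiv (trunc n k).quotKerEquivRange.symm

theorem vanish_euler {n : ℕ} (w : Fin n → ℂ) : VanishAt0 (eulerPS w) := by
  intro j; simp [eulerPS]

/-- The induced endomorphism on the quotient. -/
def bar {n : ℕ} {δ : Fin n → FPS n} (h : VanishAt0 δ) (k : ℕ) : Module.End ℂ (FPS n ⧸ K n k) :=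
  (K n k).mapQ (K n k) (der δ : FPS n →ₗ[ℂ] FPS n) (fun _ hf => der_mem_K h hf)

theorem bar_mk {n : ℕ} {δ : Fin n → FPS n} (h : VanishAt0 δ) (k : ℕ) (f : FPS n) :
    bar h k ((K n k).mkQ f) = (K n k).mkQ (der δ f) := rfl

theorem bar_nilp {n : ℕ} {δ : Fin n → FPS n} (h : VanishAt0 δ)
    (hnil : IsNilpotent (linPartPS δ)) (k : ℕ) : IsNilpotent (bar h k) := by
  obtain ⟨r, hr⟩ := nilp h hnil k
  refine ⟨r, LinearMap.ext fun x => ?_⟩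
  obtain ⟨f, rfl⟩ := (K n k).mkQ_surjective x
  have : ∀ s, (bar h k ^ s) ((K n k).mkQ f) = (K n k).mkQ ((der δ)^[s] f) := by
    intro s
    induction s with
    | zero => rfl
    | succ s ih =>
      rw [pow_succ', Module.End.mul_apply, ih, bar_mk, Function.iterate_succ_apply']
  rw [this, LinearMap.zero_apply, Submodule.mkQ_apply, Submodule.Quotient.mk_eq_zero]
  exact hr f

theorem bar_ss {n : ℕ} (w : Fin n → ℂ) (k : ℕ) :
    (bar (vanish_euler w) k).IsSemisimple := by
  classical
  have := finite_deg n k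
  have := Fintype.ofFinite {d : Fin n →₀ ℕ // d.degree < k}
  let wt : (Fin n →₀ ℕ) → ℂ := fun d => ∑ i, w i * d i
  let T : Finset ℂ := Finset.univ.image fun d : {d : Fin n →₀ ℕ // d.degree < k} => wt d.1
  let P : Polynomial ℂ := ∏ a ∈ T, (Polynomial.X - Polynomial.C a)
  have hP : P.Separable := Polynomial.separable_prod_X_sub_C_iff'.2 (fun _ _ _ _ h => h)
  refine Module.End.isSemisimple_of_squarefree_aeval_eq_zero (p := P) hP.squarefree ?_
  refine LinearMap.ext fun x => ?_
  obtain ⟨f, rfl⟩ := (K n k).mkQ_surjective x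
  rw [← intertwine (K n k).mkQ (der (eulerPS w) : FPS n →ₗ[ℂ] FPS n) _
    (fun x => (bar_mk (vanish_euler w) k x).symm), LinearMap.zero_apply, Submodule.mkQ_apply,
    Submodule.Quotient.mk_eq_zero]
  intro d hd
  rw [intertwine (coeff d) (der (eulerPS w) : FPS n →ₗ[ℂ] FPS n)
    (algebraMap ℂ (Module.End ℂ ℂ) (wt d)) (fun x => coeff_euler w x d),
    Polynomial.aeval_algebraMap_apply]
  have : Polynomial.aeval (wt d) P = 0 := by
    rw [Polynomial.coe_aeval_eq_eval, Polynomial.eval_prod]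
    refine Finset.prod_eq_zero (i := wt d) ?_ (by simp)
    exact Finset.mem_image.2 ⟨⟨d, hd⟩, Finset.mem_univ _, rfl⟩
  rw [this]; simp

theorem K_le {n k : ℕ} {f : FPS n} (hf : f ∈ K n k) :
    f ∈ (IsLocalRing.maximalIdeal (FPS n)) ^ k := by
  induction k generalizing f with
  | zero => simp
  | succ k ih =>
    obtain ⟨g, hg, rfl⟩ := K_succ_decomp hf
    refine Ideal.sum_mem _ fun i _ => ?_
    rw [pow_succ']
    refine Ideal.mul_mem_mul ?_ (ih (hg i))
    rw [IsLocalRing.mem_maximalIdeal, mem_nonunits_iff, MvPowerSeries.isUnit_iff_constantCoeff]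
    simp

theorem closed {n : ℕ} (I : Ideal (FPS n)) (f : FPS n)
    (h : ∀ k, ∃ g ∈ I, f - g ∈ K n k) : f ∈ I := by
  have hK := Ideal.iInf_pow_smul_eq_bot_of_isLocalRing (M := FPS n ⧸ I)
    (IsLocalRing.maximalIdeal (FPS n)) (IsLocalRing.maximalIdeal.isMaximal _).ne_top
  have : (Ideal.Quotient.mk I f : FPS n ⧸ I) ∈ (⊥ : Submodule (FPS n) (FPS n ⧸ I)) := by
    rw [← hK, Submodule.mem_iInf]
    intro k
    obtain ⟨g, hg, hfg⟩ := h k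
    have h1 : Ideal.Quotient.mk I f = (f - g) • (1 : FPS n ⧸ I) := by
      change _ = Ideal.Quotient.mk I ((f - g) * 1)
      rw [mul_one, Ideal.Quotient.eq]
      simpa using hg
    rw [h1]
    exact Submodule.smul_mem_smul (K_le hfg) trivial
  rwa [Submodule.mem_bot, Ideal.Quotient.eq_zero_iff_mem] at this

theorem der_add {n : ℕ} (δ η : Fin n → FPS n) (f : FPS n) :
    der (δ + η) f = der δ f + der η f := by
  simp [der_apply, add_mul, Finset.sum_add_distrib]

theorem main {n : ℕ} (w : Fin n → ℂ) (δN : Fin n → FPS n)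
    (h0 : VanishAt0 δN) (hnil : IsNilpotent (linPartPS δN))
    (hcomm : CommutePS (eulerPS w) δN) (I : Ideal (FPS n))
    (hI : ∀ g ∈ I, der (eulerPS w + δN) g ∈ I) (g : FPS n) (hg : g ∈ I) :
    der (eulerPS w) g ∈ I := by
  refine closed I _ fun k => ?_
  have := finDim n k
  set S := bar (vanish_euler w) k with hS
  set N := bar h0 k with hN
  have hc : Commute N S := by
    refine LinearMap.ext fun x => ?_
    obtain ⟨f, rfl⟩ := (K n k).mkQ_surjective x
    rw [Module.End.mul_apply, Module.End.mul_apply, hS, hN, bar_mk, bar_mk, bar_mk, bar_mk,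
      der_comm hcomm]
  obtain ⟨n₀, hn₀, s₀, hs₀, hn₀_nil, hs₀_ss, h₀⟩ := (N + S).exists_isNilpotent_isSemisimple
  have hc₀ : Commute n₀ s₀ :=
    Algebra.commute_of_mem_adjoin_singleton_of_commute hs₀
      (Algebra.commute_of_mem_adjoin_self hn₀).symm
  have hs : S = s₀ := (Module.End.isNilpotent_isSemisimple_unique (bar_nilp h0 hnil k)
    (bar_ss w k) hn₀_nil hs₀_ss hc hc₀ h₀).2
  have hmem := aeval_mem ((I.restrictScalars ℂ).map (K n k).mkQ) (N + S) (by
    rintro _ ⟨f, hf, rfl⟩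
    refine ⟨_, hI f hf, ?_⟩
    rw [LinearMap.add_apply, hS, hN, bar_mk, bar_mk, der_add, map_add, add_comm]) hs₀
    _ ⟨g, hg, rfl⟩
  rw [← hs, hS, bar_mk] at hmem
  obtain ⟨f, hf, he⟩ := hmem
  refine ⟨f, hf, ?_⟩
  rw [← Submodule.Quotient.mk_eq_zero, ← Submodule.mkQ_apply, map_sub, he, sub_self]

end InvAux

/-- Theorem 3.1 (c): for `δ = δ_S + δ_N` in Poincaré–Dulac normal form, an ideal
`I ⊆ Ô_n` is `δ`-invariant iff it is both `δ_S`-invariant and `δ_N`-invariant. -/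
theorem invariant_ideal_iff_semisimple (n : ℕ) (w : Fin n → ℂ) (δN : Fin n → FPS n)
    (hδN0 : VanishAt0 δN) (hnil : IsNilpotent (linPartPS δN))
    (hcomm : CommutePS (eulerPS w) δN) (I : Ideal (FPS n)) :
    (∀ g ∈ I, applyPS (eulerPS w + δN) g ∈ I) ↔
      ((∀ g ∈ I, applyPS (eulerPS w) g ∈ I) ∧ (∀ g ∈ I, applyPS δN g ∈ I)) := by
  simp only [InvAux.applyPS_eq]
  constructor
  · intro h
    have hS := InvAux.main w δN hδN0 hnil hcomm I h
    refine ⟨hS, fun g hg => ?_⟩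
    have := I.sub_mem (h g hg) (hS g hg)
    rwa [InvAux.der_add, add_sub_cancel_left] at this
  · rintro ⟨h1, h2⟩ g hg
    rw [InvAux.der_add]
    exact I.add_mem (h1 g hg) (h2 g hg)

end
end

section
/- Let h_1,...,h_m ∈ Ô_n = ℂ[[x_1,...,x_n]] and suppose there exist w = (w_1,...,w_n) ∈ ℂ^n and d = (d_1,...,d_m) ∈ ℂ^m such that δ_{S,w}(h_i) = d_i h_i for all i, where δ_{S,w} = Σ_{j=1}^n w_j x_j ∂_{x_j}. Then there exist rational weights w' = (w'_1,...,w'_n) ∈ ℚ^n and rational degrees d' = (d'_1,...,d'_m) ∈ ℚ^m such that δ_{S,w'}(h_i) = d'_i h_i for all i = 1,...,m. -/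
set_option maxHeartbeats 1000000
set_option synthInstance.maxHeartbeats 1000000

noncomputable section

/-- The Euler field acts on the coefficient of `x^k` by multiplication by `⟨w, k⟩`. -/
theorem coeff_applyPS_eulerPS {n : ℕ} (w : Fin n → ℂ) (f : FPS n) (k : Fin n →₀ ℕ) :
    MvPowerSeries.coeff k (applyPS (eulerPS w) f) =
      (∑ j, (k j : ℂ) * w j) * MvPowerSeries.coeff k f := by
  unfold applyPS eulerPS
  rw [map_sum, Finset.sum_mul]
  refine Finset.sum_congr rfl fun j _ => ?_
  rw [mul_assoc, MvPowerSeries.coeff_C_mul, MvPowerSeries.X, MvPowerSeries.coeff_monomial_mul]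
  split_ifs with hk
  · have h1 : 1 ≤ k j := by simpa using hk j
    have h2 : MvPowerSeries.coeff (k - Finsupp.single j 1) (fpd j f) =
        ((((k - Finsupp.single j 1 : Fin n →₀ ℕ) j : ℕ) : ℂ) + 1) *
          MvPowerSeries.coeff (k - Finsupp.single j 1 + Finsupp.single j 1) f := rfl
    rw [h2, tsub_add_cancel_of_le hk]
    simp only [Finsupp.tsub_apply, Finsupp.single_eq_same]
    push_cast [h1]
    ring
  · have h1 : k j = 0 := by
      by_contra h0
      exact hk (by simpa using Nat.one_le_iff_ne_zero.mpr h0)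
    simp [h1]

/-- Weighted homogeneity, read off on the support. -/
theorem euler_eq_iff {n : ℕ} (w : Fin n → ℂ) (d : ℂ) (f : FPS n) :
    applyPS (eulerPS w) f = MvPowerSeries.C (σ := Fin n) (R := ℂ) d * f ↔
      ∀ k : Fin n →₀ ℕ, MvPowerSeries.coeff k f ≠ 0 → ∑ j, (k j : ℂ) * w j = d := by
  rw [MvPowerSeries.ext_iff]
  refine forall_congr' fun k => ?_
  rw [coeff_applyPS_eulerPS, MvPowerSeries.coeff_C_mul]
  constructor
  · intro h h0
    exact mul_right_cancel₀ h0 h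
  · intro h
    by_cases h0 : MvPowerSeries.coeff k f = 0
    · simp [h0]
    · rw [h h0]

/-- Any `ℚ`-linear functional `φ : ℂ → ℚ` turns complex weights and degrees into rational
weights and degrees. -/
theorem euler_map {n : ℕ} (φ : ℂ →ₗ[ℚ] ℚ) (w : Fin n → ℂ) (d : ℂ) (f : FPS n)
    (hf : applyPS (eulerPS w) f = MvPowerSeries.C (σ := Fin n) (R := ℂ) d * f) :
    applyPS (eulerPS fun j => ((φ (w j) : ℚ) : ℂ)) f =
      MvPowerSeries.C (σ := Fin n) (R := ℂ) ((φ d : ℚ) : ℂ) * f := by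
  rw [euler_eq_iff] at hf ⊢
  intro k hk
  rw [← hf k hk, map_sum]
  push_cast
  refine Finset.sum_congr rfl fun j _ => ?_
  rw [← nsmul_eq_mul (k j) (w j), map_nsmul, nsmul_eq_mul]
  push_cast
  rfl

/-- Stronger form: the rational weights can be taken nonzero if the complex ones are. -/
theorem weighted_homogeneous_rational_weights_strong (n m : ℕ) (h : Fin m → FPS n)
    (w : Fin n → ℂ) (d : Fin m → ℂ)
    (hqh : ∀ i, applyPS (eulerPS w) (h i) = MvPowerSeries.C (σ := Fin n) (R := ℂ) (d i) * h i) :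
    ∃ (w' : Fin n → ℚ) (d' : Fin m → ℚ), (w ≠ 0 → w' ≠ 0) ∧
      ∀ i, applyPS (eulerPS fun j => ((w' j : ℚ) : ℂ)) (h i) =
        MvPowerSeries.C (σ := Fin n) (R := ℂ) ((d' i : ℚ) : ℂ) * h i := by
  have key : ∃ φ : ℂ →ₗ[ℚ] ℚ, w ≠ 0 → (fun j => φ (w j)) ≠ 0 := by
    by_cases hw : w = 0
    · exact ⟨0, fun h => absurd hw h⟩
    · obtain ⟨j, hj⟩ := Function.ne_iff.mp hw
      have hex : ∃ φ : ℂ →ₗ[ℚ] ℚ, φ (w j) ≠ 0 := by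
        by_contra! hc
        exact hj ((Module.forall_dual_apply_eq_zero_iff ℚ (w j)).mp hc)
      obtain ⟨φ, hφ⟩ := hex
      exact ⟨φ, fun _ h0 => hφ (congrFun h0 j)⟩
  obtain ⟨φ, hφ⟩ := key
  exact ⟨fun j => φ (w j), fun i => φ (d i), hφ, fun i => euler_map φ w (d i) (h i) (hqh i)⟩

/-- Theorem 3.1 (e): a finite family of formal power series which is weighted homogeneous
with respect to complex weights `w` and complex degrees `d` is also weighted homogeneous
with respect to some rational weights `w'` and rational degrees `d'`. -/
theorem weighted_homogeneous_rational_weights (n m : ℕ) (h : Fin m → FPS n)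
    (w : Fin n → ℂ) (d : Fin m → ℂ)
    (hqh : ∀ i, applyPS (eulerPS w) (h i) = MvPowerSeries.C (σ := Fin n) (R := ℂ) (d i) * h i) :
    ∃ (w' : Fin n → ℚ) (d' : Fin m → ℚ),
      ∀ i, applyPS (eulerPS fun j => ((w' j : ℚ) : ℂ)) (h i) =
        MvPowerSeries.C (σ := Fin n) (R := ℂ) ((d' i : ℚ) : ℂ) * h i := by
  obtain ⟨w', d', _, hh⟩ := weighted_homogeneous_rational_weights_strong n m h w d hqh
  exact ⟨w', d', hh⟩

end
end
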